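/- arXiv:math/9909142 — 2 statements merged into one kernel-verified Lean document; each statement's English description precedes it below -/
import Mathlib

section
/- Effectivity of descent data for rigid families (Corollary A.14): Let k be a field of characteristic zero and K an algebraically closed field extension of k of infinite transcendence degree over k. Let (X_α)_{α∈A} be a family of quasi-projective schemes over K and (f_β)_{β∈B} a family of K-morphisms between members of the family, with f_β : X_{s(β)} → X_{t(β)} for indices s(β), t(β) ∈ A. Assume that (i) for each α ∈ A the group of automorphisms of X_α as a scheme over K is finite, and (ii) the only family (ψ_α)_{α∈A}, where each ψ_α is a K-automorphism of X_α, satisfying ψ_{t(β)} ∘ f_β = f_β ∘ ψ_{s(β)} for all β ∈ B, is the family of identity morphisms. Then every collection of descent data with respect to K/k on the schemes X_α under which every morphism f_β is Aut(K/k)-equivariant is effective: for each α ∈ A there exist a scheme X over k and an isomorphism X_α ≅ X ×_{Spec k} Spec K over K carrying the action of each σ ∈ Aut(K/k) on X_α to the automorphism id_X × Spec(σ⁻¹). -/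
open AlgebraicGeometry CategoryTheory CategoryTheory.Limits

noncomputable section

namespace Paper

attribute [local instance] MvPolynomial.gradedAlgebra

/-- Projective `n`-space over a ring `K`, as `Proj` of the polynomial ring in `n + 1`
variables with its grading by total degree. -/
def ProjSpace (K : Type) [CommRing K] (n : ℕ) : Scheme :=
  Proj (MvPolynomial.homogeneousSubmodule (Fin (n + 1)) K)

/-- The structure morphism `ℙⁿ_K ⟶ Spec K`. -/
def ProjSpace.structMap (K : Type) [CommRing K] (n : ℕ) :
    ProjSpace K n ⟶ Spec (CommRingCat.of K) :=
  Proj.toSpecZero _ ≫ Spec.map (CommRingCat.ofHom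
    (algebraMap K (MvPolynomial.homogeneousSubmodule (Fin (n + 1)) K 0)))

/-- A scheme `Y` with structure morphism `p : Y ⟶ Spec K` is quasi-projective over `K` if
for some `n` there is an immersion (locally closed immersion) `Y ⟶ ℙⁿ_K` over `K`. -/
def QuasiProjectiveOver (K : Type) [CommRing K] {Y : Scheme}
    (p : Y ⟶ Spec (CommRingCat.of K)) : Prop :=
  ∃ (n : ℕ) (f : Y ⟶ ProjSpace K n), IsImmersion f ∧ f ≫ ProjSpace.structMap K n = p

/-- A scheme `Y` with structure morphism `p : Y ⟶ Spec K` is quasi-affine over `K` if it is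
of finite type over `K` and admits an open immersion over `K` into an affine `K`-scheme. -/
def QuasiAffineOver (K : Type) [CommRing K] {Y : Scheme}
    (p : Y ⟶ Spec (CommRingCat.of K)) : Prop :=
  LocallyOfFiniteType p ∧ QuasiCompact p ∧
    ∃ (Z : Scheme) (q : Z ⟶ Spec (CommRingCat.of K)) (j : Y ⟶ Z),
      IsAffine Z ∧ IsOpenImmersion j ∧ j ≫ q = p

variable (k K : Type) [Field k] [Field K] [Algebra k K]

/-- The automorphism `Spec (σ⁻¹)` of `Spec K` attached to `σ ∈ Aut(K/k)`. -/
def specAut (σ : K ≃ₐ[k] K) : Spec (CommRingCat.of K) ⟶ Spec (CommRingCat.of K) :=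
  Spec.map (CommRingCat.ofHom ((σ⁻¹ : K ≃ₐ[k] K) : K →+* K))

/-- A descent datum on the `K`-scheme `(Y, p)` with respect to `K/k`: an action of
`Aut(K/k)` on `Y` by scheme isomorphisms lifting the natural action on `Spec K`. -/
structure DescentDatum (Y : Scheme) (p : Y ⟶ Spec (CommRingCat.of K)) where
  act : (K ≃ₐ[k] K) →* Aut Y
  compat : ∀ σ : K ≃ₐ[k] K, (act σ).hom ≫ p = p ≫ specAut k K σ

lemma specAut_comp (σ : K ≃ₐ[k] K) :
    specAut k K σ ≫ Spec.map (CommRingCat.ofHom (algebraMap k K)) =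
      Spec.map (CommRingCat.ofHom (algebraMap k K)) := by
  rw [specAut, ← Spec.map_comp]
  congr 1
  ext x
  exact (σ⁻¹ : K ≃ₐ[k] K).commutes x

/-- The base change to `K` of a scheme `X` over `k`. -/
def baseChange {X : Scheme} (q : X ⟶ Spec (CommRingCat.of k)) : Scheme :=
  pullback q (Spec.map (CommRingCat.ofHom (algebraMap k K)))

/-- The automorphism `id_X × Spec (σ⁻¹)` of the base change `X ×_{Spec k} Spec K`. -/
def baseChangeAut {X : Scheme} (q : X ⟶ Spec (CommRingCat.of k)) (σ : K ≃ₐ[k] K) :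
    baseChange k K q ⟶ baseChange k K q :=
  pullback.map _ _ _ _ (𝟙 X) (specAut k K σ) (𝟙 (Spec (CommRingCat.of k)))
    (by simp) (by rw [Category.comp_id, specAut_comp])

/-- A scheme isomorphism fixes the generic point of an irreducible scheme. -/
lemma aut_base_genericPoint {Y : Scheme} [IrreducibleSpace Y] (e : Y ≅ Y) :
    e.hom.base (genericPoint Y) = genericPoint Y := by
  let h : Y ≃ₜ Y := TopCat.homeoOfIso (Scheme.forgetToTop.mapIso e)
  have hg : IsGenericPoint (h (genericPoint Y)) (⊤ : Set Y) := by
    rw [IsGenericPoint, ← Set.image_singleton, ← h.image_closure,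
      (genericPoint_spec Y).def, Set.top_eq_univ, Set.image_univ, h.surjective.range_eq]
  exact hg.eq (genericPoint_spec Y)

variable {k K}

/-- The action of `σ ∈ Aut(K/k)` on the function field of `Y`, given by pullback of rational
functions along the action of `σ⁻¹` on `Y`. -/
def DescentDatum.ffAction {Y : Scheme} [IrreducibleSpace Y] {p : Y ⟶ Spec (CommRingCat.of K)}
    (D : DescentDatum k K Y p) (σ : K ≃ₐ[k] K) :
    Y.functionField ⟶ Y.functionField :=
  eqToHom (congrArg Y.presheaf.stalk (aut_base_genericPoint ((D.act σ⁻¹ : Aut Y) : Y ≅ Y)).symm) ≫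
    (D.act σ⁻¹ : Aut Y).hom.stalkMap (genericPoint Y)

/-- Continuity of a descent datum on an irreducible scheme: every rational function
(i.e. element of the function field) is defined over a subfield of `K` that is finitely
generated over `k`. -/
def DescentDatum.IsContinuous {Y : Scheme} [IrreducibleSpace Y]
    {p : Y ⟶ Spec (CommRingCat.of K)} (D : DescentDatum k K Y p) : Prop :=
  ∀ f : Y.functionField, ∃ L : IntermediateField k K, L.FG ∧
    ∀ σ : K ≃ₐ[k] K, (∀ x ∈ L, σ x = x) → D.ffAction σ f = f

/-!
Since the automorphism groups are finite, a compactness argument shows that finitely many of the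
given schemes and morphisms already force `ψ a = 1` at a chosen index `a`. This finite diagram is
the base change of a model `M` over a finitely generated subalgebra `S ⊆ K`, and the descent datum
makes it isomorphic to its conjugate by every `σ`, in particular by one moving a transcendence basis
of `S` to elements algebraically independent over `S`. The isomorphism is defined over some finitely
generated `T` containing `S` and `σ S`. Specializing `T` so that `S` stays fixed while `σ S` becomes
algebraic over `k` shows that the diagram is defined over a finite normal extension `k'` of `k`. By
rigidity, on `Aut(K/k')` the datum at `a` agrees with the one coming from `k'`.

Quasi-projectivity puts every finite set of points into an affine open, which yields stable affine
opens. Their sections are, by Galois descent, spanned over `K` by the `Aut(K/k)`-invariants, and the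
spectra of the rings of invariants glue to the scheme over `k`.
-/

/-! ### Spreading out from finitely generated subalgebras -/

section SpreadingOut

open Filter

/-- The morphism of affine schemes induced by a homomorphism of unbundled rings. -/
abbrev specMap {R S : Type} [CommRing R] [CommRing S] (φ : R →+* S) :
    Spec (CommRingCat.of S) ⟶ Spec (CommRingCat.of R) :=
  Spec.map (CommRingCat.ofHom φ)

lemma specMap_comp_specMap {R S T : Type} [CommRing R] [CommRing S] [CommRing T] (φ : R →+* S)
    (ψ : S →+* T) : specMap ψ ≫ specMap φ = specMap (ψ.comp φ) := by
  rw [← Spec.map_comp, ← CommRingCat.ofHom_comp]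

/-- The finitely generated subalgebras of `S`, a directed system with union `S`. -/
abbrev FGSubalgebra (R S : Type) [CommRing R] [CommRing S] [Algebra R S] : Type :=
  {T : Subalgebra R S // T.FG}

variable {R S : Type} [CommRing R] [CommRing S] [Algebra R S]

namespace FGSubalgebra

instance : Nonempty (FGSubalgebra R S) := ⟨⟨⊥, Subalgebra.fg_bot⟩⟩

instance : IsDirectedOrder (FGSubalgebra R S) :=
  ⟨fun T T' => ⟨⟨T.1 ⊔ T'.1, T.2.sup T'.2⟩, le_sup_left (a := T.1), le_sup_right (a := T.1)⟩⟩

lemma exists_mem (x : S) : ∃ T : FGSubalgebra R S, x ∈ T.1 :=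
  ⟨⟨Algebra.adjoin R {x}, {x}, by simp⟩, Algebra.subset_adjoin rfl⟩

lemma eventually_mem (x : S) : ∀ᶠ T : FGSubalgebra R S in atTop, x ∈ T.1 :=
  let ⟨T, hT⟩ := exists_mem (R := R) x
  (eventually_ge_atTop T).mono fun _ h => h hT

variable (R S) in
/-- The system `T ↦ T` of finitely generated subalgebras in the category of rings. -/
def ringDiagram : FGSubalgebra R S ⥤ CommRingCat.{0} where
  obj T := CommRingCat.of T.1
  map h := CommRingCat.ofHom (Subalgebra.inclusion (leOfHom h)).toRingHom

variable (R S) in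
/-- The cocone expressing that `S` contains all its finitely generated subalgebras. -/
def ringCocone : Cocone (ringDiagram R S) where
  pt := CommRingCat.of S
  ι := { app := fun T => CommRingCat.ofHom T.1.val.toRingHom }

variable (R S) in
/-- A ring is the colimit of its finitely generated subalgebras. -/
def isColimitRingCocone : IsColimit (ringCocone R S) :=
  have := reflectsColimitsOfShape_of_reflectsIsomorphisms (J := FGSubalgebra R S)
    (G := forget CommRingCat.{0})
  isColimitOfReflects (forget CommRingCat) <|
    Types.FilteredColimit.isColimitOf _ _
      (fun x => (exists_mem (R := R) (S := S) x).imp fun T hT => ⟨⟨x, hT⟩, rfl⟩)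
      (fun T T' x x' h => by
        obtain ⟨T'', hT, hT'⟩ := exists_ge_ge T T'
        exact ⟨T'', homOfLE hT, homOfLE hT', Subtype.ext h⟩)

end FGSubalgebra

lemma specMap_val_comp_specMap_algebraMap (T : Subalgebra R S) :
    specMap (T.val : T →+* S) ≫ specMap (algebraMap R T) = specMap (algebraMap R S) :=
  specMap_comp_specMap _ _

instance {X Y Z : Scheme} (f : X ⟶ Z) (g : Y ⟶ Z) [IsAffineHom g] :
    IsAffineHom (pullback.fst f g) :=
  MorphismProperty.of_isPullback (IsPullback.of_hasPullback f g).flip ‹_›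

instance {X Y Z : Scheme} (f : X ⟶ Z) (g : Y ⟶ Z) [IsAffineHom f] :
    IsAffineHom (pullback.snd f g) :=
  MorphismProperty.of_isPullback (IsPullback.of_hasPullback f g) ‹_›

variable {X Z : Scheme} {p : X ⟶ Spec (CommRingCat.of S)} {z : Z ⟶ Spec (CommRingCat.of R)}
  {q : X ⟶ Z}

/-- The base change `Z_T` of the `R`-scheme `Z` to a subalgebra `T` of an `R`-algebra. -/
abbrev modelAt (z : Z ⟶ Spec (CommRingCat.of R)) (T : Subalgebra R S) : Scheme :=
  pullback z (specMap (algebraMap R T))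

/-- The transition morphism `Z_{T'} ⟶ Z_T` for `T ≤ T'`. -/
def modelTransition (z : Z ⟶ Spec (CommRingCat.of R)) {T T' : Subalgebra R S} (h : T ≤ T') :
    modelAt z T' ⟶ modelAt z T :=
  pullback.lift (pullback.fst _ _)
    (pullback.snd _ _ ≫ specMap (Subalgebra.inclusion h).toRingHom)
    (by rw [pullback.condition, Category.assoc, specMap_comp_specMap]; rfl)

lemma modelTransition_fst {T T' : Subalgebra R S} (h : T ≤ T') :
    modelTransition z h ≫ pullback.fst z (specMap (algebraMap R T)) = pullback.fst _ _ :=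
  pullback.lift_fst _ _ _

lemma modelTransition_snd {T T' : Subalgebra R S} (h : T ≤ T') :
    modelTransition z h ≫ pullback.snd z (specMap (algebraMap R T)) =
      pullback.snd _ _ ≫ specMap (Subalgebra.inclusion h).toRingHom :=
  pullback.lift_snd _ _ _

lemma modelTransition_comp {T T' T'' : Subalgebra R S} (h : T ≤ T') (h' : T' ≤ T'') :
    modelTransition z h' ≫ modelTransition z h = modelTransition z (h.trans h') := by
  apply pullback.hom_ext
  · simp only [Category.assoc, modelTransition_fst]
  · simp only [Category.assoc, modelTransition_snd, reassoc_of% modelTransition_snd h',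
      specMap_comp_specMap]
    rfl

variable (S) in
/-- The diagram `T ↦ Z_T`. -/
def modelDiagram (z : Z ⟶ Spec (CommRingCat.of R)) : (FGSubalgebra R S)ᵒᵖ ⥤ Scheme.{0} where
  obj T := modelAt z T.unop.1
  map h := modelTransition z (leOfHom h.unop)
  map_id T := by
    apply pullback.hom_ext
    · exact (modelTransition_fst _).trans (Category.id_comp _).symm
    · refine (modelTransition_snd _).trans (Eq.trans ?_ (Category.id_comp _).symm)
      exact (congrArg (pullback.snd _ _ ≫ ·) (Spec.map_id _)).trans (Category.comp_id _)
  map_comp _ _ := (modelTransition_comp _ _).symm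

instance {T T' : (FGSubalgebra R S)ᵒᵖ} (h : T ⟶ T') :
    IsAffineHom ((modelDiagram S z).map h) := by
  have hfst : modelTransition z (leOfHom h.unop) ≫ pullback.fst _ _ = pullback.fst _ _ :=
    modelTransition_fst _
  have : IsAffineHom (modelTransition z (leOfHom h.unop) ≫ pullback.fst _ _) := by
    rw [hfst]; infer_instance
  exact IsAffineHom.of_comp (modelTransition z (leOfHom h.unop)) (pullback.fst _ _)

instance [CompactSpace Z] (T : (FGSubalgebra R S)ᵒᵖ) : CompactSpace ((modelDiagram S z).obj T) :=
  have := QuasiCompact.compactSpace_of_compactSpace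
    (pullback.fst z (specMap (algebraMap R T.unop.1)))
  this

instance [QuasiSeparatedSpace Z] (T : (FGSubalgebra R S)ᵒᵖ) :
    QuasiSeparatedSpace ((modelDiagram S z).obj T) :=
  have := quasiSeparatedSpace_of_quasiSeparated
    (pullback.fst z (specMap (algebraMap R T.unop.1)))
  this

variable (S) in
/-- The structure morphisms `Z_T ⟶ Spec R` of the models. -/
def modelToBase (z : Z ⟶ Spec (CommRingCat.of R)) :
    modelDiagram S z ⟶ (Functor.const _).obj (Spec (CommRingCat.of R)) where
  app _ := pullback.fst _ _ ≫ z
  naturality _ _ h := by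
    refine (Category.assoc _ _ _).symm.trans ?_
    exact (congrArg (· ≫ z) (modelTransition_fst (leOfHom h.unop))).trans (Category.comp_id _).symm

section toModel

variable (hq : IsPullback q p z (specMap (algebraMap R S)))

/-- The projection `Z_S ⟶ Z_T`, for any base change `X` of `Z` to the whole of `S`. -/
def toModel (T : Subalgebra R S) : X ⟶ modelAt z T :=
  pullback.lift q (p ≫ specMap (T.val : T →+* S))
    (by rw [Category.assoc, specMap_val_comp_specMap_algebraMap, hq.w])

lemma toModel_fst (T : Subalgebra R S) : toModel hq T ≫ pullback.fst _ _ = q :=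
  pullback.lift_fst _ _ _

lemma toModel_snd (T : Subalgebra R S) :
    toModel hq T ≫ pullback.snd _ _ = p ≫ specMap (T.val : T →+* S) :=
  pullback.lift_snd _ _ _

lemma toModel_comp_modelTransition {T T' : Subalgebra R S} (h : T ≤ T') :
    toModel hq T' ≫ modelTransition z h = toModel hq T := by
  apply pullback.hom_ext
  · rw [Category.assoc, modelTransition_fst, toModel_fst, toModel_fst]
  · rw [Category.assoc, modelTransition_snd, reassoc_of% toModel_snd hq T', toModel_snd,
      specMap_comp_specMap]
    rfl

lemma isPullback_toModel (T : Subalgebra R S) :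
    IsPullback (toModel hq T) p (pullback.snd z (specMap (algebraMap R T)))
      (specMap (T.val : T →+* S)) := by
  refine IsPullback.of_right ?_ (toModel_snd hq T) (IsPullback.of_hasPullback _ _)
  rwa [toModel_fst, specMap_val_comp_specMap_algebraMap]

/-- The cone over `T ↦ Z_T` with vertex `Z_S`. -/
def modelCone : Cone (modelDiagram S z) where
  pt := X
  π := { app := fun T => toModel hq T.unop.1
         naturality := fun _ _ h => (Category.id_comp _).trans
          (toModel_comp_modelTransition hq (leOfHom h.unop)).symm }

attribute [local instance] IsCofiltered.isConnected in
/-- `Z_S` is the limit of the `Z_T`, being the pullback of `Spec S = lim Spec T` to `Z_T`. -/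
def isLimitModelCone : IsLimit (modelCone hq) :=
  let toSpec : modelDiagram S z ⟶ (FGSubalgebra.ringDiagram R S).op ⋙ Scheme.Spec :=
    { app := fun _ => pullback.snd _ _
      naturality := fun _ _ h => modelTransition_snd (leOfHom h.unop) }
  isLimitOfIsPullbackOfIsConnected toSpec (modelCone hq)
    (Scheme.Spec.mapCone (FGSubalgebra.ringCocone R S).op)
    { hom := p, w := fun T => (toModel_snd hq T.unop.1).symm }
    (fun T => isPullback_toModel hq T.unop.1)
    (isLimitOfPreserves Scheme.Spec (FGSubalgebra.isColimitRingCocone R S).op)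

lemma eventually_exists_toModel_comp_eq [CompactSpace Z] [QuasiSeparatedSpace Z] {Y : Scheme}
    (y : Y ⟶ Spec (CommRingCat.of R)) [LocallyOfFinitePresentation y] (h : X ⟶ Y)
    (hy : h ≫ y = q ≫ z) :
    ∀ᶠ T : FGSubalgebra R S in atTop, ∃ g : modelAt z T.1 ⟶ Y,
      toModel hq T.1 ≫ g = h ∧ g ≫ y = pullback.fst _ _ ≫ z := by
  obtain ⟨T₀, g, hg, hgy⟩ := Scheme.exists_π_app_comp_eq_of_locallyOfFinitePresentation
    (modelDiagram S z) (modelToBase S z) y (modelCone hq) (isLimitModelCone hq) h (by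
      ext T
      exact ((reassoc_of% toModel_fst hq T.unop.1) z).trans hy.symm)
  refine (eventually_ge_atTop T₀.unop).mono fun T hT => ⟨modelTransition z hT ≫ g, ?_, ?_⟩
  · exact ((reassoc_of% toModel_comp_modelTransition hq hT) g).trans hg
  · exact (congrArg (modelTransition z hT ≫ ·) hgy).trans ((reassoc_of% modelTransition_fst hT) z)

lemma eventually_modelTransition_comp_eq [CompactSpace Z] {Y : Scheme}
    (y : Y ⟶ Spec (CommRingCat.of R)) [LocallyOfFiniteType y] {T : FGSubalgebra R S}
    {a b : modelAt z T.1 ⟶ Y} (ha : a ≫ y = pullback.fst _ _ ≫ z)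
    (hb : b ≫ y = pullback.fst _ _ ≫ z) (hab : toModel hq T.1 ≫ a = toModel hq T.1 ≫ b) :
    ∀ᶠ T' : FGSubalgebra R S in atTop, ∀ h : T ≤ T',
      modelTransition z h ≫ a = modelTransition z h ≫ b := by
  obtain ⟨T₁, g, hg⟩ := Scheme.exists_hom_comp_eq_comp_of_locallyOfFiniteType
    (modelDiagram S z) (modelToBase S z) y (modelCone hq) (isLimitModelCone hq) (i := .op T)
    a b ha.symm hb.symm hab
  refine (eventually_ge_atTop T₁.unop).mono fun T' hT' h => ?_
  simp only [← modelTransition_comp (z := z) (leOfHom g.unop) hT', Category.assoc]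
  exact congrArg (modelTransition z hT' ≫ ·) hg

end toModel

end SpreadingOut

section SpreadingOutSections

open Filter

lemma mem_closure_range_union_range_of_isPushout {A B C D : CommRingCat.{0}} {f : A ⟶ B}
    {g : A ⟶ C} {i : B ⟶ D} {j : C ⟶ D} (h : IsPushout f g i j) (x : D) :
    x ∈ Subring.closure (Set.range i.hom ∪ Set.range j.hom) := by
  let E := Subring.closure (Set.range i.hom ∪ Set.range j.hom)
  let i' : B ⟶ CommRingCat.of E := CommRingCat.ofHom <|
    i.hom.codRestrict E fun b => Subring.subset_closure (Or.inl ⟨b, rfl⟩)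
  let j' : C ⟶ CommRingCat.of E := CommRingCat.ofHom <|
    j.hom.codRestrict E fun c => Subring.subset_closure (Or.inr ⟨c, rfl⟩)
  let d : D ⟶ CommRingCat.of E := h.desc i' j' (by ext a; exact congr($(h.w) a))
  have hd : d ≫ CommRingCat.ofHom E.subtype = 𝟙 D := by
    apply h.hom_ext
    · rw [h.inl_desc_assoc, Category.comp_id]; rfl
    · rw [h.inr_desc_assoc, Category.comp_id]; rfl
  have hx : (d x).1 = x := congr($hd x)
  exact hx ▸ (d x).2

variable {R S : Type} [CommRing R] [CommRing S] [Algebra R S] {X Z : Scheme}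
  {p : X ⟶ Spec (CommRingCat.of S)} {z : Z ⟶ Spec (CommRingCat.of R)} {q : X ⟶ Z}
  (hq : IsPullback q p z (specMap (algebraMap R S)))

lemma toModel_preimage (T : Subalgebra R S) (V : Z.Opens) :
    toModel hq T ⁻¹ᵁ (pullback.fst z (specMap (algebraMap R T)) ⁻¹ᵁ V) = q ⁻¹ᵁ V := by
  rw [← Scheme.Hom.comp_preimage, toModel_fst]

/-- The sections of `X = Z_S` over `q⁻¹ V` that are defined on the model `Z_T`. -/
def modelSections (T : Subalgebra R S) (V : Z.Opens) : Subring Γ(X, q ⁻¹ᵁ V) :=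
  ((toModel hq T).appLE (pullback.fst z (specMap (algebraMap R T)) ⁻¹ᵁ V) (q ⁻¹ᵁ V)
    (toModel_preimage hq T V).ge).hom.range

lemma appLE_mem_modelSections (T : Subalgebra R S) (V : Z.Opens) (a : Γ(Z, V)) :
    q.appLE V (q ⁻¹ᵁ V) le_rfl a ∈ modelSections hq T V := by
  refine ⟨(pullback.fst z (specMap (algebraMap R T))).appLE V _ le_rfl a, ?_⟩
  refine (congr($(Scheme.Hom.appLE_comp_appLE (toModel hq T) (pullback.fst z _) V _ _ le_rfl
    (toModel_preimage hq T V).ge) a)).trans ?_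
  simp only [toModel_fst]

lemma appLE_ΓSpecIso_inv_mem_modelSections {T : Subalgebra R S} (V : Z.Opens) {c : S}
    (hc : c ∈ T) : p.appLE ⊤ (q ⁻¹ᵁ V) le_top ((Scheme.ΓSpecIso (CommRingCat.of S)).inv c) ∈
      modelSections hq T V := by
  let c' := (Scheme.ΓSpecIso (CommRingCat.of T)).inv ⟨c, hc⟩
  have hcc' : (specMap (T.val : T →+* S)).appLE ⊤ ⊤ le_rfl c' =
      (Scheme.ΓSpecIso (CommRingCat.of S)).inv c :=
    congr($(Scheme.ΓSpecIso_inv_naturality (CommRingCat.ofHom (T.val : T →+* S))) ⟨c, hc⟩).symm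
  refine ⟨(pullback.snd z (specMap (algebraMap R T))).appLE ⊤ _ le_top c', ?_⟩
  refine (congr($(Scheme.Hom.appLE_comp_appLE (toModel hq T) (pullback.snd z _) ⊤ _ _ le_top
    (toModel_preimage hq T V).ge) c')).trans ?_
  simp only [toModel_snd]
  rw [← hcc']
  exact congr($(Scheme.Hom.appLE_comp_appLE p (specMap (T.val : T →+* S)) ⊤ ⊤ _ le_rfl le_top)
    c').symm

lemma eventually_mem_modelSections {V : Z.Opens} (hV : IsAffineOpen V) (s : Γ(X, q ⁻¹ᵁ V)) :
    ∀ᶠ T : FGSubalgebra R S in atTop, s ∈ modelSections hq T.1 V := by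
  have hpush := (isIso_pushoutSection_iff hq (US := ⊤) (UT := ⊤) (UX := V) (UY := q ⁻¹ᵁ V)
    le_top le_top (by simp)).1 (isIso_pushoutSection_of_isAffineOpen hq le_top le_top (by simp)
      (isAffineOpen_top _) (isAffineOpen_top _) hV)
  induction mem_closure_range_union_range_of_isPushout hpush s using
    Subring.closure_induction with
  | zero => exact .of_forall fun _ => zero_mem _
  | one => exact .of_forall fun _ => one_mem _
  | add _ _ _ _ hx hy => exact (hx.and hy).mono fun _ h => add_mem h.1 h.2
  | mul _ _ _ _ hx hy => exact (hx.and hy).mono fun _ h => mul_mem h.1 h.2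
  | neg _ _ hx => exact hx.mono fun _ h => neg_mem h
  | mem _ hx =>
    obtain ⟨a, rfl⟩ | ⟨c, rfl⟩ := hx
    · exact .of_forall fun T => appLE_mem_modelSections hq T.1 V a
    · obtain ⟨c, rfl⟩ : ∃ c' : S, (Scheme.ΓSpecIso (CommRingCat.of S)).inv c' = c :=
        ⟨(Scheme.ΓSpecIso (CommRingCat.of S)).hom c, by simp⟩
      exact (FGSubalgebra.eventually_mem c).mono fun _ =>
        appLE_ΓSpecIso_inv_mem_modelSections hq V

lemma isAffineHom_of_isPullback_specMap (hq : IsPullback q p z (specMap (algebraMap R S))) :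
    IsAffineHom q :=
  MorphismProperty.of_isPullback (P := @IsAffineHom) hq.flip inferInstance

-- `W` stands for `q⁻¹ V`; it is a variable because `q⁻¹ V` and the preimage of the open subset
-- `V_T` of `Z_T` are only propositionally equal.
lemma eventually_ideal_le_map_comap [IsLocallyNoetherian X] (I : X.IdealSheafData) {V : Z.Opens}
    (hV : IsAffineOpen V) :
    ∀ᶠ T : FGSubalgebra R S in atTop, ∀ (W : X.Opens) (hW : IsAffineOpen W) (_ : W = q ⁻¹ᵁ V)
      (hle : W ≤ toModel hq T.1 ⁻¹ᵁ (pullback.fst z (specMap (algebraMap R T.1)) ⁻¹ᵁ V)),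
      I.ideal ⟨W, hW⟩ ≤ ((I.ideal ⟨W, hW⟩).comap ((toModel hq T.1).appLE _ W hle).hom).map
        ((toModel hq T.1).appLE _ W hle).hom := by
  have := isAffineHom_of_isPullback_specMap hq
  have hqV : IsAffineOpen (q ⁻¹ᵁ V) := hV.preimage q
  have : IsNoetherianRing Γ(X, q ⁻¹ᵁ V) := IsLocallyNoetherian.component_noetherian ⟨_, hqV⟩
  obtain ⟨G, hG⟩ := (isNoetherianRing_iff_ideal_fg _).1 this (I.ideal ⟨_, hqV⟩)
  refine ((eventually_all_finset G).2 fun g _ => eventually_mem_modelSections hq hV g).mono ?_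
  rintro T hT _ _ rfl hle
  rw [← hG, Ideal.span_le]
  intro g hg
  obtain ⟨t, rfl⟩ := hT g hg
  exact Ideal.mem_map_of_mem _ (Ideal.mem_comap.2 (Ideal.subset_span hg))

lemma ideal_le_ideal_comap_map {X Y : Scheme} (π : X ⟶ Y) [IsAffineHom π]
    (I : X.IdealSheafData) {V : Y.Opens} (hV : IsAffineOpen V)
    (hI : I.ideal ⟨π ⁻¹ᵁ V, hV.preimage π⟩ ≤
      ((I.ideal ⟨π ⁻¹ᵁ V, hV.preimage π⟩).comap (π.appLE V _ le_rfl).hom).map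
        (π.appLE V _ le_rfl).hom) :
    I.ideal ⟨π ⁻¹ᵁ V, hV.preimage π⟩ ≤ ((I.map π).comap π).ideal ⟨π ⁻¹ᵁ V, hV.preimage π⟩ := by
  refine hI.trans (Ideal.map_le_iff_le_comap.2 ?_)
  have h := Scheme.IdealSheafData.le_map_comap (I.map π) π ⟨V, hV⟩
  rwa [Scheme.IdealSheafData.ideal_map_of_isAffineHom,
    Scheme.IdealSheafData.ideal_map_of_isAffineHom, Scheme.Hom.app_eq_appLE] at h

lemma exists_finset_affineOpens_iSup_eq_top (Z : Scheme) [CompactSpace Z] :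
    ∃ F : Finset Z.affineOpens, ⨆ V : F, V.1.1 = ⊤ := by
  have hZ : IsCompact ((⊤ : Z.Opens) : Set Z) := isCompact_univ
  obtain ⟨F, hF, h⟩ := isCompact_iff_finite_and_eq_biUnion_affineOpens.1 hZ
  exact ⟨hF.toFinset, by simpa only [iSup_subtype, hF.mem_toFinset] using h.symm⟩

lemma exists_comap_map_toModel_eq [CompactSpace Z] [IsLocallyNoetherian X]
    (I : X.IdealSheafData) :
    ∃ T : FGSubalgebra R S, (I.map (toModel hq T.1)).comap (toModel hq T.1) = I := by
  obtain ⟨F, hF⟩ := exists_finset_affineOpens_iSup_eq_top Z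
  obtain ⟨T, hT⟩ := ((eventually_all_finset F).2 fun V _ =>
    eventually_ideal_le_map_comap hq I V.2).exists
  have : IsAffineHom (toModel hq T.1) := by
    have : IsAffineHom (toModel hq T.1 ≫ pullback.fst z _) := by
      rw [toModel_fst]; exact isAffineHom_of_isPullback_specMap hq
    exact IsAffineHom.of_comp _ (pullback.fst z _)
  have hVT (V : F) : IsAffineOpen (pullback.fst z (specMap (algebraMap R T.1)) ⁻¹ᵁ V.1.1) :=
    V.1.2.preimage _
  refine ⟨T, (Scheme.IdealSheafData.comap_map_le _ _).antisymm ?_⟩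
  refine Scheme.IdealSheafData.le_of_iSup_eq_top
    (fun V : F => ⟨_, (hVT V).preimage (toModel hq T.1)⟩) ?_ fun V => ?_
  · simp only [toModel_preimage, ← Scheme.Hom.preimage_iSup, hF, Scheme.Hom.preimage_top]
  · exact ideal_le_ideal_comap_map (toModel hq T.1) I (hVT V)
      (hT V.1 V.2 _ _ (toModel_preimage _ _ _) le_rfl)

lemma exists_isPullback_toModel_of_isClosedImmersion [CompactSpace Z] [IsLocallyNoetherian X]
    {C : Scheme} (i : C ⟶ X) [IsClosedImmersion i] :
    ∃ (T : FGSubalgebra R S) (Z' : Scheme) (j : Z' ⟶ modelAt z T.1) (c : C ⟶ Z'),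
      IsClosedImmersion j ∧ IsPullback i c (toModel hq T.1) j := by
  obtain ⟨T, hT⟩ := exists_comap_map_toModel_eq hq i.ker
  let J := i.ker.map (toModel hq T.1)
  let c : C ⟶ J.subscheme := IsClosedImmersion.lift J.subschemeι (i ≫ toModel hq T.1) (by
    rw [Scheme.IdealSheafData.ker_subschemeι, ← Scheme.IdealSheafData.map_ker])
  refine ⟨T, J.subscheme, J.subschemeι, c, inferInstance, ?_⟩
  refine isPullback_of_isClosedImmersion _ _ _ _ (IsClosedImmersion.lift_fac _ _ _).symm ?_
  rw [Scheme.IdealSheafData.ker_subschemeι, hT]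

end SpreadingOutSections

/-! ### Base change of projective space -/

lemma isPullback_of_isOpenImmersion_cover {W X Y Z : Scheme} {a : W ⟶ X} {b : W ⟶ Y}
    {x : X ⟶ Z} {y : Y ⟶ Z} {ι : Type} (U V : ι → Scheme) (u : ∀ i, U i ⟶ X)
    [∀ i, IsOpenImmersion (u i)] (hu : ∀ t : X, ∃ i s, u i s = t) (v : ∀ i, V i ⟶ W)
    (g : ∀ i, V i ⟶ U i) (hleft : ∀ i, IsPullback (v i) (g i) a (u i))
    (hpaste : ∀ i, IsPullback (g i) (v i ≫ b) (u i ≫ x) y) : IsPullback a b x y := by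
  let 𝒰 : X.OpenCover := Scheme.Cover.mkOfCovers ι U u hu inferInstance
  refine Scheme.isPullback_of_openCover a b x y 𝒰 fun i => ?_
  refine IsPullback.of_iso (hpaste i) (hleft i).isoPullback (Iso.refl _) (Iso.refl _)
    (Iso.refl _) ?_ ?_ ?_ ?_
  · exact (Category.comp_id _).trans (hleft i).isoPullback_hom_snd.symm
  · refine (Category.comp_id _).trans (Eq.trans ?_ (Category.assoc _ _ _))
    exact congrArg (· ≫ b) (hleft i).isoPullback_hom_fst.symm
  · exact (Category.comp_id _).trans (Category.id_comp _).symm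
  · exact (Category.comp_id _).trans (Category.id_comp _).symm

section ProjectiveSpace

open HomogeneousLocalization

variable (R S : Type) [CommRing R] [CommRing S] [Algebra R S] (n : ℕ)

/-- The grading of `R[x₀, …, xₙ]` by total degree, whose `Proj` is `ℙⁿ_R`. -/
abbrev polyGrading : ℕ → Submodule R (MvPolynomial (Fin (n + 1)) R) :=
  MvPolynomial.homogeneousSubmodule (Fin (n + 1)) R

/-- The base change `R[x₀, …, xₙ] → S[x₀, …, xₙ]` as a graded ring homomorphism. -/
def polyBaseChange : polyGrading R n →+*ᵍ polyGrading S n where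
  toRingHom := MvPolynomial.map (algebraMap R S)
  map_mem hx := MvPolynomial.IsHomogeneous.map hx (algebraMap R S)

lemma X_mem_polyGrading (i : Fin (n + 1)) :
    (MvPolynomial.X i : MvPolynomial (Fin (n + 1)) R) ∈ polyGrading R n 1 :=
  MvPolynomial.isHomogeneous_X R i

lemma irrelevant_le_span_X : (HomogeneousIdeal.irrelevant (polyGrading R n)).toIdeal ≤
    Ideal.span (Set.range (MvPolynomial.X : Fin (n + 1) → MvPolynomial (Fin (n + 1)) R)) := by
  rw [HomogeneousIdeal.toIdeal_irrelevant_le]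
  intro d hd x hx
  rw [← Set.image_univ]
  refine MvPolynomial.mem_ideal_span_X_image.2 fun m hm => ?_
  by_contra! hm0
  obtain rfl : m = 0 := Finsupp.ext fun j => hm0 j (Set.mem_univ _)
  have h0 := (show x.IsHomogeneous d from hx) (MvPolynomial.mem_support_iff.1 hm)
  rw [map_zero] at h0
  exact hd.ne h0

lemma irrelevant_le_map_polyBaseChange : HomogeneousIdeal.irrelevant (polyGrading S n) ≤
    (HomogeneousIdeal.irrelevant (polyGrading R n)).map (polyBaseChange R S n) := by
  refine (irrelevant_le_span_X S n).trans (Ideal.span_le.2 ?_)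
  rintro _ ⟨i, rfl⟩
  rw [← MvPolynomial.map_X (algebraMap R S) i]
  exact Ideal.mem_map_of_mem (polyBaseChange R S n)
    (HomogeneousIdeal.mem_irrelevant_of_mem _ one_pos (X_mem_polyGrading R n i))

/-- `ProjSpace.structMap`, with its source spelled as a `Proj` so that the API of `Proj`
applies. -/
def projStructMap : Proj (polyGrading R n) ⟶ Spec (CommRingCat.of R) :=
  ProjSpace.structMap R n

/-- The projection `ℙⁿ_S ⟶ ℙⁿ_R`. -/
def projMap : Proj (polyGrading S n) ⟶ Proj (polyGrading R n) :=
  Proj.map (polyBaseChange R S n) (irrelevant_le_map_polyBaseChange R S n)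

/-- The inclusion of the constants in the coordinate ring of `D₊(s)`. -/
def awayConst (s : MvPolynomial (Fin (n + 1)) R) : R →+* Away (polyGrading R n) s :=
  (fromZeroRingHom (polyGrading R n) _).comp (algebraMap R (polyGrading R n 0))

variable {n} {s : MvPolynomial (Fin (n + 1)) R}

/-- The coordinate `x_j / s` on `D₊(s)`, for a linear form `s`. -/
def awayCoord (hs : s ∈ polyGrading R n 1) (j : Fin (n + 1)) : Away (polyGrading R n) s :=
  Away.mk (polyGrading R n) hs 1 (MvPolynomial.X j) (by simpa using X_mem_polyGrading R n j)

lemma eval₂_smul_of_isHomogeneous {A : Type} [CommRing A] {σ : Type} [Finite σ] (φ : R →+* A)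
    (t : A) (v : σ → A) {d : ℕ} {a : MvPolynomial σ R} (ha : a.IsHomogeneous d) :
    MvPolynomial.eval₂ φ (t • v) a = t ^ d * MvPolynomial.eval₂ φ v a := by
  cases nonempty_fintype σ
  rw [MvPolynomial.eval₂_eq', MvPolynomial.eval₂_eq', Finset.mul_sum]
  refine Finset.sum_congr rfl fun m hm => ?_
  have hmd : ∑ j, m j = d := by
    rw [← ha (MvPolynomial.mem_support_iff.1 hm), Finsupp.weight_apply,
      Finsupp.sum_fintype _ _ (by simp)]
    simp
  simp only [Pi.smul_apply, smul_eq_mul, mul_pow, Finset.prod_mul_distrib,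
    Finset.prod_pow_eq_pow_sum, hmd]
  ring

lemma awayConst_eq_mk (hs : s ∈ polyGrading R n 1) (r : R) :
    awayConst R n s r = Away.mk (polyGrading R n) hs 0 (MvPolynomial.C r)
      (by simp) := by
  apply HomogeneousLocalization.val_injective
  rw [Away.val_mk]
  refine Localization.mk_eq_mk_iff.2 (Localization.r_of_eq ?_)
  simp [MvPolynomial.algebraMap_eq]

-- After multiplication by `s ^ d` both sides become `a` in the localization at `s`.
lemma away_mk_eq_eval₂ (hs : s ∈ polyGrading R n 1) (d : ℕ) (a : MvPolynomial (Fin (n + 1)) R)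
    (ha : a ∈ polyGrading R n (d • 1)) :
    Away.mk (polyGrading R n) hs d a ha =
      MvPolynomial.eval₂ (awayConst R n s) (awayCoord R hs) a := by
  let L := Localization.Away s
  let ι : MvPolynomial (Fin (n + 1)) R →+* L := algebraMap _ L
  let ν : Away (polyGrading R n) s →+* L := algebraMap _ L
  have hunit : IsUnit (ι s ^ d) := (IsLocalization.Away.algebraMap_isUnit s).pow d
  have hcoord : ι s • (ν ∘ awayCoord R hs) = ι ∘ MvPolynomial.X := by
    funext j
    change ι s * Localization.mk _ _ = ι _
    exact Localization.mk_eq_mk_iff.2 (Localization.r_of_eq (by simp))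
  have hν : ν.comp (awayConst R n s) = ι.comp MvPolynomial.C := by
    ext r
    rfl
  apply HomogeneousLocalization.val_injective
  change _ = ν _
  rw [← hunit.mul_right_inj, MvPolynomial.hom_eval₂]
  have ha' : a.IsHomogeneous d := by simpa using ha
  erw [← eval₂_smul_of_isHomogeneous R _ (ι s) (ν ∘ awayCoord R hs) ha', hcoord, hν]
  rw [Function.comp_def, ← MvPolynomial.hom_eval₂, MvPolynomial.eval₂_eta, Away.val_mk]
  rw [← map_pow]
  exact Localization.mk_eq_mk_iff.2 (Localization.r_of_eq (by simp))

lemma away_ringHom_ext (hs : s ∈ polyGrading R n 1) {A : Type} [CommRing A]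
    {f g : Away (polyGrading R n) s →+* A}
    (hconst : f.comp (awayConst R n s) = g.comp (awayConst R n s))
    (hcoord : ∀ j, f (awayCoord R hs j) = g (awayCoord R hs j)) : f = g := by
  ext x
  obtain ⟨d, a, ha, rfl⟩ := Away.mk_surjective _ hs x
  rw [away_mk_eq_eval₂, MvPolynomial.hom_eval₂, MvPolynomial.hom_eval₂, hconst]
  congr 1
  exact funext hcoord

/-- The homomorphism out of the coordinate ring of `D₊(s)` given by `φ` on constants and by
`x_j / s ↦ v j` on coordinates. -/
def awayLift {A : Type} [CommRing A] (φ : R →+* A) (v : Fin (n + 1) → A)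
    (hv : MvPolynomial.eval₂ φ v s = 1) : Away (polyGrading R n) s →+* A :=
  (Localization.awayLift (MvPolynomial.eval₂Hom φ v) s
    (isUnit_iff_exists_inv.2 ⟨1, by rw [mul_one]; exact hv⟩)).comp (algebraMap _ _)

lemma awayLift_mk (hs : s ∈ polyGrading R n 1) {A : Type} [CommRing A] (φ : R →+* A)
    (v : Fin (n + 1) → A) (hv : MvPolynomial.eval₂ φ v s = 1) (d : ℕ)
    (a : MvPolynomial (Fin (n + 1)) R) (ha : a ∈ polyGrading R n (d • 1)) :
    awayLift R φ v hv (Away.mk (polyGrading R n) hs d a ha) = MvPolynomial.eval₂ φ v a :=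
  (Localization.awayLift_mk (MvPolynomial.eval₂Hom φ v) s a 1
    (by rw [mul_one]; exact hv) d).trans (by rw [one_pow, mul_one]; rfl)

lemma awayLift_awayConst (hs : s ∈ polyGrading R n 1) {A : Type} [CommRing A] (φ : R →+* A)
    (v : Fin (n + 1) → A) (hv : MvPolynomial.eval₂ φ v s = 1) (r : R) :
    awayLift R φ v hv (awayConst R n s r) = φ r := by
  rw [awayConst_eq_mk R hs, awayLift_mk, MvPolynomial.eval₂_C]

lemma awayLift_awayCoord (hs : s ∈ polyGrading R n 1) {A : Type} [CommRing A] (φ : R →+* A)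
    (v : Fin (n + 1) → A) (hv : MvPolynomial.eval₂ φ v s = 1) (j : Fin (n + 1)) :
    awayLift R φ v hv (awayCoord R hs j) = v j := by
  rw [awayCoord, awayLift_mk, MvPolynomial.eval₂_X]

lemma away_map_awayConst (hs : s ∈ polyGrading R n 1) :
    (Away.map (polyBaseChange R S n) s).comp (awayConst R n s) =
      (awayConst S n (polyBaseChange R S n s)).comp (algebraMap R S) := by
  refine RingHom.ext fun r => ?_
  rw [RingHom.comp_apply, RingHom.comp_apply, awayConst_eq_mk R hs]
  refine (Away.map_mk (polyBaseChange R S n) s hs 0 (MvPolynomial.C r) _).trans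
    (Eq.trans ?_ (awayConst_eq_mk S (Graded.map_mem (polyBaseChange R S n) hs) _).symm)
  congr 1
  exact MvPolynomial.map_C _ _

lemma away_map_awayCoord (hs : s ∈ polyGrading R n 1) (j : Fin (n + 1)) :
    Away.map (polyBaseChange R S n) s (awayCoord R hs j) =
      awayCoord S (Graded.map_mem (polyBaseChange R S n) hs) j := by
  rw [awayCoord, Away.map_mk]
  congr 1
  exact MvPolynomial.map_X _ _

lemma isPushout_away_map (hs : s ∈ polyGrading R n 1) :
    IsPushout (CommRingCat.ofHom (awayConst R n s)) (CommRingCat.ofHom (algebraMap R S))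
      (CommRingCat.ofHom (Away.map (polyBaseChange R S n) s))
      (CommRingCat.ofHom (awayConst S n (polyBaseChange R S n s))) := by
  have hs' := Graded.map_mem (polyBaseChange R S n) hs
  have hlift (c : PushoutCocone (CommRingCat.ofHom (awayConst R n s))
      (CommRingCat.ofHom (algebraMap R S))) :
      MvPolynomial.eval₂ c.inr.hom (fun j => c.inl.hom (awayCoord R hs j))
        (polyBaseChange R S n s) = 1 := by
    refine (MvPolynomial.eval₂_map _ _ _ _).trans ?_
    have hc : c.inr.hom.comp (algebraMap R S) = c.inl.hom.comp (awayConst R n s) :=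
      congr(($(c.condition)).hom).symm
    rw [hc, ← MvPolynomial.hom_eval₂, ← away_mk_eq_eval₂ R hs 1 s (by simpa using hs)]
    refine (congrArg _ (HomogeneousLocalization.val_injective _ ?_)).trans (map_one _)
    rw [Away.val_mk, HomogeneousLocalization.val_one, ← Localization.mk_one]
    exact Localization.mk_eq_mk_iff.2 (Localization.r_of_eq (by simp))
  refine ⟨⟨by rw [← CommRingCat.ofHom_comp, away_map_awayConst R S hs]; rfl⟩,
    ⟨PushoutCocone.IsColimit.mk _ (fun c => CommRingCat.ofHom (awayLift S _ _ (hlift c)))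
      (fun c => ?_) (fun c => ?_) fun c f hf hf' => ?_⟩⟩
  · ext1
    refine away_ringHom_ext R hs (RingHom.ext fun r => ?_) fun j => ?_
    · have hr : Away.map (polyBaseChange R S n) s (awayConst R n s r) =
        awayConst S n _ (algebraMap R S r) := congr($(away_map_awayConst R S hs) r)
      refine (congrArg (awayLift S _ _ (hlift c)) hr).trans ?_
      exact (awayLift_awayConst S hs' _ _ (hlift c) _).trans congr($(c.condition) r).symm
    · refine (congrArg (awayLift S _ _ (hlift c)) (away_map_awayCoord R S hs j)).trans ?_
      exact awayLift_awayCoord S hs' _ _ (hlift c) j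
  · ext r
    exact awayLift_awayConst S hs' _ _ (hlift c) r
  · ext1
    refine away_ringHom_ext S hs' (RingHom.ext fun r => ?_) fun j => ?_
    · exact congr($hf' r).trans (awayLift_awayConst S hs' _ _ (hlift c) r).symm
    · refine Eq.trans ?_ (awayLift_awayCoord S hs' _ _ (hlift c) j).symm
      rw [← away_map_awayCoord, ← hf]
      rfl

lemma awayι_comp_projStructMap (hs : s ∈ polyGrading R n 1) :
    Proj.awayι (polyGrading R n) s hs one_pos ≫ projStructMap R n =
      specMap (awayConst R n s) := by
  refine (Category.assoc _ _ _).symm.trans ?_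
  rw [Proj.awayι_toSpecZero, ← Spec.map_comp]
  rfl

lemma exists_awayι_X_eq (t : Proj (polyGrading R n)) : ∃ i x,
    Proj.awayι (polyGrading R n) _ (X_mem_polyGrading R n i) one_pos x = t := by
  have ht : t ∈ (⊤ : (Proj (polyGrading R n)).Opens) := trivial
  rw [← Proj.iSup_basicOpen_eq_top _ _ (irrelevant_le_span_X R n),
    TopologicalSpace.Opens.mem_iSup] at ht
  obtain ⟨i, hi⟩ := ht
  rw [← Proj.opensRange_awayι _ _ (X_mem_polyGrading R n i) one_pos] at hi
  exact ⟨i, hi⟩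

variable (n) in
lemma isPullback_projMap : IsPullback (projMap R S n) (projStructMap S n)
    (projStructMap R n) (specMap (algebraMap R S)) := by
  have hmem (i : Fin (n + 1)) := X_mem_polyGrading R n i
  have hmem' (i : Fin (n + 1)) := Graded.map_mem (polyBaseChange R S n) (hmem i)
  refine isPullback_of_isOpenImmersion_cover
    (fun i => Spec (.of (Away (polyGrading R n) (MvPolynomial.X i))))
    (fun i => Spec (.of (Away (polyGrading S n) (polyBaseChange R S n (MvPolynomial.X i)))))
    (fun i => Proj.awayι _ _ (hmem i) one_pos) (exists_awayι_X_eq R)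
    (fun i => Proj.awayι _ _ (hmem' i) one_pos)
    (fun i => specMap (Away.map (polyBaseChange R S n) (MvPolynomial.X i)))
    (fun i => ?_) fun i => ?_
  · refine (IsOpenImmersion.isPullback _ _ _ _ ?_ ?_).flip
    · exact Proj.awayι_comp_map _ _ one_pos _ (hmem i)
    · rw [Proj.opensRange_awayι, Proj.opensRange_awayι]
      rfl
  · rw [awayι_comp_projStructMap R (hmem i), awayι_comp_projStructMap S (hmem' i)]
    exact ((isPushout_away_map R S (hmem i)).op.map Scheme.Spec).flip

end ProjectiveSpace

/-! ### Quasi-projective schemes and their models -/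

section QuasiProjective

open Filter

section

variable (R : Type) [CommRing R] (n : ℕ)

lemma bijective_algebraMap_polyGrading_zero :
    Function.Bijective (algebraMap R (polyGrading R n 0)) := by
  refine ⟨fun a b h => MvPolynomial.C_injective _ _ (congrArg Subtype.val h), fun ⟨x, hx⟩ => ?_⟩
  have hx' : x ∈ MvPolynomial.homogeneousSubmodule (Fin (n + 1)) R 0 := hx
  rw [MvPolynomial.homogeneousSubmodule_zero, Submodule.mem_one] at hx'
  exact hx'.imp fun c hc => Subtype.ext hc

instance : IsIso (specMap (algebraMap R (polyGrading R n 0))) :=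
  have : IsIso (CommRingCat.ofHom (algebraMap R (polyGrading R n 0))) :=
    (ConcreteCategory.isIso_iff_bijective _).2 (bijective_algebraMap_polyGrading_zero R n)
  inferInstance

instance : Algebra.FiniteType (polyGrading R n 0) (MvPolynomial (Fin (n + 1)) R) :=
  have : IsScalarTower R (polyGrading R n 0) (MvPolynomial (Fin (n + 1)) R) :=
    .of_algebraMap_eq (R := R) (S := polyGrading R n 0) fun _ => rfl
  Algebra.FiniteType.of_restrictScalars_finiteType R _ _

instance : LocallyOfFiniteType (projStructMap R n) :=
  inferInstanceAs (LocallyOfFiniteType (Proj.toSpecZero (polyGrading R n) ≫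
    specMap (algebraMap R (polyGrading R n 0))))

instance : QuasiCompact (projStructMap R n) :=
  inferInstanceAs (QuasiCompact (Proj.toSpecZero (polyGrading R n) ≫
    specMap (algebraMap R (polyGrading R n 0))))

instance : IsSeparated (projStructMap R n) :=
  inferInstanceAs (IsSeparated (Proj.toSpecZero (polyGrading R n) ≫
    specMap (algebraMap R (polyGrading R n 0))))

instance : CompactSpace (Proj (polyGrading R n)) :=
  (quasiCompact_iff_compactSpace (projStructMap R n)).1 inferInstance

instance : QuasiSeparatedSpace (Proj (polyGrading R n)) :=
  quasiSeparatedSpace_of_quasiSeparated (projStructMap R n)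

instance [IsNoetherianRing R] : IsNoetherian (Proj (polyGrading R n)) where
  toIsLocallyNoetherian := LocallyOfFiniteType.isLocallyNoetherian (projStructMap R n)

end

namespace QuasiProjectiveOver

variable {R : Type} [CommRing R] {Y Y' : Scheme} {y : Y ⟶ Spec (CommRingCat.of R)}

lemma iff_exists_proj : QuasiProjectiveOver R y ↔ ∃ (n : ℕ) (f : Y ⟶ Proj (polyGrading R n)),
    IsImmersion f ∧ f ≫ projStructMap R n = y :=
  Iff.rfl

lemma isImmersion_comp (h : QuasiProjectiveOver R y) (j : Y' ⟶ Y) [IsImmersion j] :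
    QuasiProjectiveOver R (j ≫ y) := by
  obtain ⟨n, f, _, rfl⟩ := iff_exists_proj.1 h
  exact iff_exists_proj.2 ⟨n, j ≫ f, inferInstance, Category.assoc _ _ _⟩

lemma of_isPullback (h : QuasiProjectiveOver R y) {S : Type} [CommRing S] {φ : R →+* S}
    {q : Y' ⟶ Y} {y' : Y' ⟶ Spec (CommRingCat.of S)} (hq : IsPullback q y' y (specMap φ)) :
    QuasiProjectiveOver S y' := by
  obtain ⟨n, f, hf, rfl⟩ := iff_exists_proj.1 h
  algebraize [φ]
  have hP := isPullback_projMap R S n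
  let f' := hP.lift (q ≫ f) y' (by rw [Category.assoc]; exact hq.w)
  have hf'P : f' ≫ projStructMap S n = y' := hP.lift_snd _ _ _
  have hf' : IsPullback q f' f (projMap R S n) := by
    refine IsPullback.of_bot ?_ (hP.lift_fst _ _ _).symm hP
    rw [hf'P]
    exact hq
  exact iff_exists_proj.2 ⟨n, f', MorphismProperty.of_isPullback hf' hf, hf'P⟩

lemma isSeparated (h : QuasiProjectiveOver R y) : Y.IsSeparated := by
  obtain ⟨n, f, _, rfl⟩ := iff_exists_proj.1 h
  rw [Scheme.isSeparated_iff, ← terminal.comp_from (f ≫ projStructMap R n)]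
  infer_instance

lemma locallyOfFiniteType (h : QuasiProjectiveOver R y) : LocallyOfFiniteType y := by
  obtain ⟨n, f, _, rfl⟩ := iff_exists_proj.1 h
  infer_instance

lemma isNoetherian [IsNoetherianRing R] (h : QuasiProjectiveOver R y) : IsNoetherian Y := by
  have := h.locallyOfFiniteType
  have := LocallyOfFiniteType.isLocallyNoetherian y
  obtain ⟨n, f, _, rfl⟩ := iff_exists_proj.1 h
  have := f.isEmbedding.isInducing.noetherianSpace
  exact {}

lemma locallyOfFinitePresentation [IsNoetherianRing R] (h : QuasiProjectiveOver R y) :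
    LocallyOfFinitePresentation y := by
  have := h.locallyOfFiniteType
  infer_instance

end QuasiProjectiveOver

lemma quasiProjectiveOver_projStructMap (R : Type) [CommRing R] (n : ℕ) :
    QuasiProjectiveOver R (projStructMap R n) :=
  QuasiProjectiveOver.iff_exists_proj.2 ⟨n, 𝟙 _, inferInstance, Category.id_comp _⟩

/-- A finitely generated subalgebra over a finitely generated subalgebra, over the ground ring. -/
def FGSubalgebra.restrictScalars {R S : Type} [CommRing R] [CommRing S] [Algebra R S]
    (T₀ : FGSubalgebra R S) (T : FGSubalgebra T₀.1 S) : FGSubalgebra R S :=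
  ⟨T.1.restrictScalars R,
    have : Algebra.FiniteType R T₀.1 := T₀.1.fg_iff_finiteType.1 T₀.2
    have : Algebra.FiniteType T₀.1 T.1 := T.1.fg_iff_finiteType.1 T.2
    have : Algebra.FiniteType R T.1 := .trans (S := T₀.1) ‹_› ‹_›
    (T.1.restrictScalars R).fg_iff_finiteType.2 this⟩

section

variable {R S : Type} [CommRing R] [CommRing S] [Algebra R S] {X Z : Scheme} {q : X ⟶ Z}
  {p : X ⟶ Spec (CommRingCat.of S)} {z : Z ⟶ Spec (CommRingCat.of R)}

lemma exists_isPullback_toModel_opens [CompactSpace Z] [QuasiSeparatedSpace Z]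
    (hq : IsPullback q p z (specMap (algebraMap R S))) (U : X.Opens)
    (hU : IsCompact (U : Set X)) :
    ∃ (T : FGSubalgebra R S) (V : (modelAt z T.1).Opens) (r : U.toScheme ⟶ V),
      CompactSpace V ∧ IsPullback r U.ι V.ι (toModel hq T.1) := by
  obtain ⟨⟨T⟩, (V : (modelAt z T.1).Opens), hV, (hVU : toModel hq T.1 ⁻¹ᵁ V = U)⟩ :=
    exists_preimage_eq (modelDiagram S z) (modelCone hq) (isLimitModelCone hq) U hU
  refine ⟨T, V, (toModel hq T.1).resLE V U hVU.ge, isCompact_iff_compactSpace.1 hV,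
    IsOpenImmersion.isPullback _ _ _ _ (Scheme.Hom.resLE_comp_ι _ _).symm ?_⟩
  rw [Scheme.Opens.opensRange_ι, Scheme.Opens.opensRange_ι, hVU]

lemma QuasiProjectiveOver.exists_model [IsNoetherianRing S] {y : X ⟶ Spec (CommRingCat.of S)}
    (h : QuasiProjectiveOver S y) (R : Type) [CommRing R] [Algebra R S] :
    ∃ (T : FGSubalgebra R S) (Z : Scheme) (z : Z ⟶ Spec (CommRingCat.of T.1)) (q : X ⟶ Z),
      QuasiProjectiveOver T.1 z ∧ IsPullback q y z (specMap T.1.val.toRingHom) := by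
  obtain ⟨n, f, _, rfl⟩ := iff_exists_proj.1 h
  have hP := isPullback_projMap R S n
  obtain ⟨T₀, V, r, _, hr⟩ := exists_isPullback_toModel_opens hP f.coborderRange
    (TopologicalSpace.NoetherianSpace.isCompact _)
  have hrV := hr.paste_vert (isPullback_toModel hP T₀.1)
  obtain ⟨T, Z, j, c, _, hc⟩ := exists_isPullback_toModel_of_isClosedImmersion hrV f.liftCoborder
  have hqp := (((quasiProjectiveOver_projStructMap R n).of_isPullback
    (.of_hasPullback _ (specMap (algebraMap R T₀.1)))).isImmersion_comp V.ι).of_isPullback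
    (.of_hasPullback _ (specMap (algebraMap T₀.1 T.1)))
  have hcZ := hc.flip.paste_vert (isPullback_toModel hrV T.1)
  rw [reassoc_of% f.liftCoborder_ι] at hcZ
  exact ⟨T₀.restrictScalars T, Z, _, c, hqp.isImmersion_comp j, hcZ⟩

end

end QuasiProjective

/-! ### Models of diagrams -/

section HomsOfModels

open Filter

variable {R S : Type} [CommRing R] [CommRing S] [Algebra R S] {X X' Z Z' Y : Scheme}
  {p : X ⟶ Spec (CommRingCat.of S)} {p' : X' ⟶ Spec (CommRingCat.of S)}
  {z : Z ⟶ Spec (CommRingCat.of R)} {z' : Z' ⟶ Spec (CommRingCat.of R)} {q : X ⟶ Z} {q' : X' ⟶ Z'}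

section

variable {T T' : Subalgebra R S} (h : T ≤ T')

lemma modelTransition_snd_hom_ext {a b : Y ⟶ modelAt z T'}
    (h₁ : a ≫ modelTransition z h = b ≫ modelTransition z h)
    (h₂ : a ≫ pullback.snd _ _ = b ≫ pullback.snd _ _) : a = b := by
  refine pullback.hom_ext ?_ h₂
  simp only [← modelTransition_fst h, reassoc_of% h₁]

variable (u : modelAt z T ⟶ modelAt z' T) (hu : u ≫ pullback.snd _ _ = pullback.snd _ _)

/-- The base change to a larger subalgebra `T'` of a `T`-morphism `u` of models. -/
def modelHomRestrict : modelAt z T' ⟶ modelAt z' T' :=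
  pullback.lift (modelTransition z h ≫ u ≫ pullback.fst _ _) (pullback.snd _ _) (by
    simp only [Category.assoc, pullback.condition, reassoc_of% hu,
      reassoc_of% modelTransition_snd h, specMap_comp_specMap]
    rfl)

lemma modelHomRestrict_snd :
    modelHomRestrict h u hu ≫ pullback.snd _ _ = pullback.snd _ _ :=
  pullback.lift_snd _ _ _

lemma modelHomRestrict_comp_modelTransition :
    modelHomRestrict h u hu ≫ modelTransition z' h = modelTransition z h ≫ u := by
  apply pullback.hom_ext
  · rw [Category.assoc, modelTransition_fst, modelHomRestrict, pullback.lift_fst, Category.assoc]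
  · rw [Category.assoc, modelTransition_snd, reassoc_of% modelHomRestrict_snd, Category.assoc, hu,
      modelTransition_snd]

end

lemma modelHomRestrict_id {T T' : Subalgebra R S} (h : T ≤ T') :
    modelHomRestrict h (𝟙 (modelAt z T)) (Category.id_comp _) = 𝟙 _ := by
  apply modelTransition_snd_hom_ext h
  · rw [modelHomRestrict_comp_modelTransition, Category.id_comp, Category.comp_id]
  · rw [modelHomRestrict_snd, Category.id_comp]

lemma modelHomRestrict_comp {Z'' : Scheme} {z'' : Z'' ⟶ Spec (CommRingCat.of R)}
    {T T' : Subalgebra R S} (h : T ≤ T')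
    {u : modelAt z T ⟶ modelAt z' T} (hu : u ≫ pullback.snd _ _ = pullback.snd _ _)
    {v : modelAt z' T ⟶ modelAt z'' T} (hv : v ≫ pullback.snd _ _ = pullback.snd _ _) :
    modelHomRestrict h u hu ≫ modelHomRestrict h v hv =
      modelHomRestrict h (u ≫ v) (by rw [Category.assoc, hv, hu]) := by
  apply modelTransition_snd_hom_ext h
  · simp only [Category.assoc, modelHomRestrict_comp_modelTransition,
      reassoc_of% modelHomRestrict_comp_modelTransition h u hu]
  · simp only [Category.assoc, modelHomRestrict_snd]

lemma eventually_exists_modelHom [CompactSpace Z] [QuasiSeparatedSpace Z]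
    [LocallyOfFinitePresentation z'] (hq : IsPullback q p z (specMap (algebraMap R S)))
    (hq' : IsPullback q' p' z' (specMap (algebraMap R S))) (e : X ⟶ X') (he : e ≫ p' = p) :
    ∀ᶠ T : FGSubalgebra R S in atTop, ∃ u : modelAt z T.1 ⟶ modelAt z' T.1,
      u ≫ pullback.snd _ _ = pullback.snd _ _ ∧ toModel hq T.1 ≫ u = e ≫ toModel hq' T.1 := by
  refine (eventually_exists_toModel_comp_eq hq z' (e ≫ q') ?_).mono fun T ⟨g, hg, hgz⟩ =>
    ⟨pullback.lift g (pullback.snd _ _) (hgz.trans pullback.condition), pullback.lift_snd _ _ _, ?_⟩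
  · rw [Category.assoc, hq'.w, reassoc_of% he, hq.w]
  · apply pullback.hom_ext
    · rw [Category.assoc, pullback.lift_fst, hg, Category.assoc, toModel_fst]
    · rw [Category.assoc, pullback.lift_snd, toModel_snd, Category.assoc, toModel_snd,
        reassoc_of% he]

lemma eventually_modelHomRestrict_eq [CompactSpace Z] [LocallyOfFiniteType z']
    (hq : IsPullback q p z (specMap (algebraMap R S))) {T : FGSubalgebra R S}
    {u v : modelAt z T.1 ⟶ modelAt z' T.1} (hu : u ≫ pullback.snd _ _ = pullback.snd _ _)
    (hv : v ≫ pullback.snd _ _ = pullback.snd _ _)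
    (huv : toModel hq T.1 ≫ u = toModel hq T.1 ≫ v) :
    ∀ᶠ T' : FGSubalgebra R S in atTop, ∀ h : T.1 ≤ T'.1,
      modelHomRestrict h u hu = modelHomRestrict h v hv := by
  have over_base (w : modelAt z T.1 ⟶ modelAt z' T.1)
      (hw : w ≫ pullback.snd _ _ = pullback.snd _ _) :
      (w ≫ pullback.fst _ _) ≫ z' = pullback.fst _ _ ≫ z := by
    rw [Category.assoc, pullback.condition, reassoc_of% hw, pullback.condition]
  refine (eventually_modelTransition_comp_eq hq z' (over_base u hu) (over_base v hv)
    (by rw [reassoc_of% huv])).mono fun T' hT' h => pullback.hom_ext ?_ ?_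
  · exact (pullback.lift_fst _ _ _).trans ((hT' h).trans (pullback.lift_fst _ _ _).symm)
  · rw [modelHomRestrict_snd, modelHomRestrict_snd]

lemma eventually_modelHomRestrict_comp_eq_id [CompactSpace Z] [LocallyOfFiniteType z]
    (hq : IsPullback q p z (specMap (algebraMap R S)))
    {r : X ⟶ Z'} (hr : IsPullback r p z' (specMap (algebraMap R S))) {T : FGSubalgebra R S}
    {u : modelAt z T.1 ⟶ modelAt z' T.1} (hu : u ≫ pullback.snd _ _ = pullback.snd _ _)
    (hqu : toModel hq T.1 ≫ u = toModel hr T.1) {v : modelAt z' T.1 ⟶ modelAt z T.1}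
    (hv : v ≫ pullback.snd _ _ = pullback.snd _ _) (hrv : toModel hr T.1 ≫ v = toModel hq T.1) :
    ∀ᶠ T' : FGSubalgebra R S in atTop, ∀ h : T.1 ≤ T'.1,
      modelHomRestrict h u hu ≫ modelHomRestrict h v hv = 𝟙 _ := by
  refine (eventually_modelHomRestrict_eq hq (u := u ≫ v) (v := 𝟙 _) (by rw [Category.assoc, hv, hu])
    (Category.id_comp _) ?_).mono fun T' hT' h => ?_
  · rw [reassoc_of% hqu, hrv, Category.comp_id]
  · rw [modelHomRestrict_comp, hT' h, modelHomRestrict_id]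

end HomsOfModels

section Diagrams

open Filter

/-- A diagram of schemes over a ring `S`, indexed by the quiver with vertices `A`, edges `B`,
sources `s` and targets `t`. -/
structure SchemeDiagram {A B : Type} (s t : B → A) (S : Type) [CommRing S] where
  obj : A → Scheme
  str : ∀ a, obj a ⟶ Spec (CommRingCat.of S)
  hom : ∀ b, obj (s b) ⟶ obj (t b)
  hom_str : ∀ b, hom b ≫ str (t b) = str (s b)

/-- A morphism of diagrams lying over `φ : R → S` and identifying its source with the base change
of its target along `φ`. -/
structure CartesianHom {A B : Type} {s t : B → A} {R S : Type} [CommRing R] [CommRing S]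
    (φ : R →+* S) (E : SchemeDiagram s t S) (M : SchemeDiagram s t R) where
  map : ∀ a, E.obj a ⟶ M.obj a
  isPullback : ∀ a, IsPullback (map a) (E.str a) (M.str a) (specMap φ)
  map_comp_hom : ∀ b, map (s b) ≫ M.hom b = E.hom b ≫ map (t b)

variable {A B : Type} {s t : B → A} {R S T : Type} [CommRing R] [CommRing S] [CommRing T]

namespace SchemeDiagram

/-- Every object of the diagram is quasi-projective over the base ring. -/
def IsQuasiProjective (M : SchemeDiagram s t R) : Prop :=
  ∀ a, QuasiProjectiveOver R (M.str a)

/-- The base change of a diagram along a ring homomorphism. -/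
def baseChange (M : SchemeDiagram s t R) (φ : R →+* S) : SchemeDiagram s t S where
  obj a := pullback (M.str a) (specMap φ)
  str _ := pullback.snd _ _
  hom b := pullback.lift (pullback.fst _ _ ≫ M.hom b) (pullback.snd _ _)
    (by rw [Category.assoc, M.hom_str, pullback.condition])
  hom_str _ := pullback.lift_snd _ _ _

/-- The projection from the base change of a diagram. -/
def baseChangeHom (M : SchemeDiagram s t R) (φ : R →+* S) :
    CartesianHom φ (M.baseChange φ) M where
  map _ := pullback.fst _ _
  isPullback _ := .of_hasPullback _ _
  map_comp_hom _ := (pullback.lift_fst _ _ _).symm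

lemma IsQuasiProjective.of_cartesianHom {M : SchemeDiagram s t R} (hM : M.IsQuasiProjective)
    {φ : R →+* S} {E : SchemeDiagram s t S} (c : CartesianHom φ E M) : E.IsQuasiProjective :=
  fun a => (hM a).of_isPullback (c.isPullback a)

end SchemeDiagram

namespace CartesianHom

variable {φ : R →+* S} {ψ : S →+* T} {χ : R →+* T} {M : SchemeDiagram s t R}
  {N : SchemeDiagram s t S} {E : SchemeDiagram s t T}

/-- The composite of cartesian morphisms. -/
def comp (h : ψ.comp φ = χ) (c : CartesianHom φ N M) (d : CartesianHom ψ E N) :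
    CartesianHom χ E M where
  map a := d.map a ≫ c.map a
  isPullback a := by
    have := (d.isPullback a).paste_horiz (c.isPullback a)
    rwa [specMap_comp_specMap, h] at this
  map_comp_hom b := by
    rw [Category.assoc, c.map_comp_hom, reassoc_of% d.map_comp_hom]

/-- The factorization of a cartesian morphism through another one. -/
def factor (h : ψ.comp φ = χ) (c : CartesianHom φ N M) (d : CartesianHom χ E M) :
    CartesianHom ψ E N where
  map a := (c.isPullback a).lift (d.map a) (E.str a ≫ specMap ψ)
    (by rw [Category.assoc, specMap_comp_specMap, h, (d.isPullback a).w])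
  isPullback a := by
    refine .of_right ?_ ((c.isPullback a).lift_snd _ _ _) (c.isPullback a)
    rw [IsPullback.lift_fst, specMap_comp_specMap, h]
    exact d.isPullback a
  map_comp_hom b := by
    apply (c.isPullback _).hom_ext
    · simp only [Category.assoc, ← c.map_comp_hom, IsPullback.lift_fst,
        IsPullback.lift_fst_assoc, d.map_comp_hom]
    · simp only [Category.assoc, N.hom_str, IsPullback.lift_snd, reassoc_of% E.hom_str]

end CartesianHom

variable [Algebra R S]

lemma QuasiProjectiveOver.eventually_exists_model [IsNoetherianRing S] {X : Scheme}
    {y : X ⟶ Spec (CommRingCat.of S)} (h : QuasiProjectiveOver S y) :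
    ∀ᶠ T : FGSubalgebra R S in atTop, ∃ (Z : Scheme) (z : Z ⟶ Spec (CommRingCat.of T.1))
      (q : X ⟶ Z), QuasiProjectiveOver T.1 z ∧ IsPullback q y z (specMap T.1.val.toRingHom) := by
  obtain ⟨T, Z, z, q, hz, hq⟩ := h.exists_model R
  filter_upwards [eventually_ge_atTop T] with T' hT'
  have hT := IsPullback.of_hasPullback z (specMap (Subalgebra.inclusion hT').toRingHom)
  refine ⟨_, _, hT.lift q (y ≫ specMap T'.1.val.toRingHom) ?_, hz.of_isPullback hT,
    .of_right ?_ (hT.lift_snd _ _ _) hT⟩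
  · rw [Category.assoc, specMap_comp_specMap, hq.w]
    rfl
  · rw [hT.lift_fst, specMap_comp_specMap]
    exact hq

namespace SchemeDiagram

lemma eventually_exists_model_of_isPullback [Finite B] {E : SchemeDiagram s t S}
    {Z : A → Scheme} {z : ∀ a, Z a ⟶ Spec (CommRingCat.of R)} [∀ a, CompactSpace (Z a)]
    [∀ a, QuasiSeparatedSpace (Z a)] [∀ a, LocallyOfFinitePresentation (z a)]
    {q : ∀ a, E.obj a ⟶ Z a}
    (hq : ∀ a, IsPullback (q a) (E.str a) (z a) (specMap (algebraMap R S))) :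
    ∀ᶠ T : FGSubalgebra R S in atTop, ∃ M : SchemeDiagram s t T.1,
      (∀ a, ∃ r : M.obj a ⟶ Z a, IsPullback r (M.str a) (z a) (specMap (algebraMap R T.1))) ∧
      Nonempty (CartesianHom T.1.val.toRingHom E M) := by
  filter_upwards [eventually_all.2 fun b =>
    eventually_exists_modelHom (hq (s b)) (hq (t b)) (E.hom b) (E.hom_str b)] with T hT
  choose u hu hqu using hT
  exact ⟨{ obj a := modelAt (z a) T.1, str _ := pullback.snd _ _, hom := u, hom_str := hu },
    fun a => ⟨_, .of_hasPullback _ _⟩,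
    ⟨{ map a := toModel (hq a) T.1
       isPullback a := isPullback_toModel (hq a) T.1
       map_comp_hom := hqu }⟩⟩

lemma IsQuasiProjective.exists_model [IsNoetherianRing R] [IsNoetherianRing S] [Finite A]
    [Finite B] {E : SchemeDiagram s t S} (hE : E.IsQuasiProjective) :
    ∃ (T : FGSubalgebra R S) (M : SchemeDiagram s t T.1), M.IsQuasiProjective ∧
      Nonempty (CartesianHom T.1.val.toRingHom E M) := by
  obtain ⟨T₀, hT₀⟩ := (eventually_all.2 fun a => (hE a).eventually_exists_model (R := R)).exists
  choose Z z q hz hq using hT₀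
  have : Algebra.FiniteType R T₀.1 := T₀.1.fg_iff_finiteType.1 T₀.2
  have : IsNoetherianRing T₀.1 := Algebra.FiniteType.isNoetherianRing R T₀.1
  have (a : A) : IsNoetherian (Z a) := (hz a).isNoetherian
  have (a : A) : LocallyOfFinitePresentation (z a) := (hz a).locallyOfFinitePresentation
  obtain ⟨T, M, hM, hEM⟩ := (eventually_exists_model_of_isPullback hq).exists
  exact ⟨T₀.restrictScalars T, M, fun a => (hz a).of_isPullback (hM a).choose_spec, hEM⟩

section

variable (M : SchemeDiagram s t R) (T : Subalgebra R S) (b : B)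

/-- The edge `b` of the base change of `M` to `T`, as a morphism of models. -/
def modelHom : modelAt (M.str (s b)) T ⟶ modelAt (M.str (t b)) T :=
  (M.baseChange (algebraMap R T)).hom b

lemma modelHom_fst : M.modelHom T b ≫ pullback.fst _ _ = pullback.fst _ _ ≫ M.hom b :=
  pullback.lift_fst _ _ _

lemma modelHom_snd : M.modelHom T b ≫ pullback.snd _ _ = pullback.snd _ _ :=
  pullback.lift_snd _ _ _

lemma modelHomRestrict_modelHom {T' : Subalgebra R S} (h : T ≤ T') :
    modelHomRestrict h (M.modelHom T b) (M.modelHom_snd T b) = M.modelHom T' b := by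
  apply pullback.hom_ext
  · rw [modelHomRestrict, pullback.lift_fst, modelHom_fst, modelHom_fst,
      reassoc_of% modelTransition_fst]
  · rw [modelHomRestrict_snd, modelHom_snd]

end

end SchemeDiagram

namespace CartesianHom

variable {E : SchemeDiagram s t S} {M N : SchemeDiagram s t R}

lemma toModel_comp_modelHom (c : CartesianHom (algebraMap R S) E M) (T : Subalgebra R S) (b : B) :
    toModel (c.isPullback (s b)) T ≫ M.modelHom T b =
      E.hom b ≫ toModel (c.isPullback (t b)) T := by
  apply pullback.hom_ext
  · rw [Category.assoc, SchemeDiagram.modelHom_fst, reassoc_of% toModel_fst, Category.assoc,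
      toModel_fst, c.map_comp_hom]
  · rw [Category.assoc, SchemeDiagram.modelHom_snd, toModel_snd, Category.assoc, toModel_snd,
      reassoc_of% E.hom_str]

lemma nonempty_id_of_isIso {T : Subalgebra R S}
    {u : ∀ a, modelAt (M.str a) T ⟶ modelAt (N.str a) T} [∀ a, IsIso (u a)]
    (hu : ∀ a, u a ≫ pullback.snd _ _ = pullback.snd _ _)
    (hcomm : ∀ b, u (s b) ≫ N.modelHom T b = M.modelHom T b ≫ u (t b)) :
    Nonempty (CartesianHom (RingHom.id T) (M.baseChange (algebraMap R T))
      (N.baseChange (algebraMap R T))) := by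
  have specMap_id : specMap (RingHom.id T) = 𝟙 _ := Spec.map_id _
  have : IsIso (specMap (RingHom.id T)) := by rw [specMap_id]; infer_instance
  have hpb (a : A) : IsPullback (u a) (pullback.snd (M.str a) (specMap (algebraMap R T)))
      (pullback.snd (N.str a) (specMap (algebraMap R T))) (specMap (RingHom.id T)) :=
    .of_horiz_isIso ⟨by rw [hu, specMap_id, Category.comp_id]⟩
  exact ⟨{ map := u, isPullback := hpb, map_comp_hom := hcomm }⟩

lemma exists_baseChange_id [IsNoetherianRing R] [Finite A] [Finite B]
    (c : CartesianHom (algebraMap R S) E M) (d : CartesianHom (algebraMap R S) E N)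
    (hM : M.IsQuasiProjective) (hN : N.IsQuasiProjective) :
    ∃ T : FGSubalgebra R S, Nonempty (CartesianHom (RingHom.id T.1)
      (M.baseChange (algebraMap R T.1)) (N.baseChange (algebraMap R T.1))) := by
  have (a : A) : IsNoetherian (M.obj a) := (hM a).isNoetherian
  have (a : A) : IsNoetherian (N.obj a) := (hN a).isNoetherian
  have (a : A) : LocallyOfFinitePresentation (M.str a) := (hM a).locallyOfFinitePresentation
  have (a : A) : LocallyOfFinitePresentation (N.str a) := (hN a).locallyOfFinitePresentation
  obtain ⟨T, huT, hvT⟩ := ((eventually_all.2 fun a => eventually_exists_modelHom (c.isPullback a)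
    (d.isPullback a) (𝟙 _) (Category.id_comp _)).and (eventually_all.2 fun a =>
      eventually_exists_modelHom (d.isPullback a) (c.isPullback a) (𝟙 _)
        (Category.id_comp _))).exists
  simp only [Category.id_comp] at huT hvT
  choose u hu hcu using huT
  choose v hv hdv using hvT
  have comm (b : B) := eventually_modelHomRestrict_eq (c.isPullback (s b)) (T := T)
    (u := u (s b) ≫ N.modelHom T.1 b) (v := M.modelHom T.1 b ≫ u (t b))
    (by rw [Category.assoc, N.modelHom_snd, hu]) (by rw [Category.assoc, hu, M.modelHom_snd])
    (by rw [reassoc_of% hcu, toModel_comp_modelHom, reassoc_of% toModel_comp_modelHom, hcu])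
  obtain ⟨T', hTT', huv, hvu, hcomm⟩ := ((eventually_ge_atTop T).and
    ((eventually_all.2 fun a => eventually_modelHomRestrict_comp_eq_id (c.isPullback a)
      (d.isPullback a) (hu a) (hcu a) (hv a) (hdv a)).and
    ((eventually_all.2 fun a => eventually_modelHomRestrict_comp_eq_id (d.isPullback a)
      (c.isPullback a) (hv a) (hdv a) (hu a) (hcu a)).and (eventually_all.2 comm)))).exists
  have (a : A) : IsIso (modelHomRestrict hTT' (u a) (hu a)) := ⟨_, huv a hTT', hvu a hTT'⟩
  refine ⟨T', nonempty_id_of_isIso (fun a => modelHomRestrict_snd hTT' (u a) (hu a)) fun b => ?_⟩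
  have := hcomm b hTT'
  rwa [← modelHomRestrict_comp hTT' (hu _) (N.modelHom_snd _ _),
    ← modelHomRestrict_comp hTT' (M.modelHom_snd _ _) (hu _),
    SchemeDiagram.modelHomRestrict_modelHom, SchemeDiagram.modelHomRestrict_modelHom] at this

end CartesianHom

end Diagrams

/-! ### Specialization -/

section

lemma exists_algEquiv_apply_eq_of_perm [IsAlgClosed K] {F : Type} [Field F] [Algebra k F]
    [Algebra F K] [IsScalarTower k F K] {ι : Type} {v : ι → K} (hv : IsTranscendenceBasis F v)
    (τ : F ≃ₐ[k] F) (e : Equiv.Perm ι) :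
    ∃ σ : K ≃ₐ[k] K, (∀ c, σ (algebraMap F K c) = algebraMap F K (τ c)) ∧
      ∀ i, σ (v i) = v (e i) := by
  let := IsAlgClosed.isAlgClosure_of_transcendence_basis v hv
  let E : Algebra.adjoin F (Set.range v) ≃+* Algebra.adjoin F (Set.range v) :=
    hv.1.aevalEquiv.symm.toRingEquiv.trans
      (((MvPolynomial.mapEquiv ι τ.toRingEquiv).trans
        (MvPolynomial.renameEquiv F e).toRingEquiv).trans hv.1.aevalEquiv.toRingEquiv)
  let σ : K ≃+* K := IsAlgClosure.equivOfEquiv K K E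
  have hσ (p : MvPolynomial ι F) : σ (MvPolynomial.aeval v p) =
      MvPolynomial.aeval v (MvPolynomial.rename e (MvPolynomial.map (τ : F →+* F) p)) := by
    have h : MvPolynomial.aeval v p =
        algebraMap (Algebra.adjoin F (Set.range v)) K (hv.1.aevalEquiv p) := by simp
    rw [h, IsAlgClosure.equivOfEquiv_algebraMap]
    simp [E]
  have hF (c : F) : σ (algebraMap F K c) = algebraMap F K (τ c) := by
    simpa using hσ (MvPolynomial.C c)
  refine ⟨AlgEquiv.ofRingEquiv (f := σ) fun c => ?_, hF, fun i => ?_⟩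
  · rw [IsScalarTower.algebraMap_apply k F K, hF, τ.commutes]
  · simpa using hσ (MvPolynomial.X i)

lemma infinite_of_isTranscendenceBasis
    (htr : ∀ L : IntermediateField k K, L.FG → ∃ x : K, Transcendental L x)
    {ι : Type} {v : ι → K} (hv : IsTranscendenceBasis k v) : Infinite ι := by
  by_contra hfin
  rw [not_infinite_iff_finite] at hfin
  obtain ⟨x, hx⟩ := htr (IntermediateField.adjoin k (Set.range v))
    (IntermediateField.fg_adjoin_of_finite (Set.finite_range v))
  exact hx (hv.isAlgebraic_field.isAlgebraic x)

lemma exists_perm_disjoint_range {ι β : Type} [Finite ι] [Infinite β] {a : ι → β}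
    (ha : Function.Injective a) :
    ∃ e : Equiv.Perm β, Disjoint (Set.range a) (Set.range (e ∘ a)) := by
  have := (Set.finite_range a).infinite_compl.to_subtype
  obtain ⟨b⟩ : Nonempty (ι ↪ ((Set.range a)ᶜ : Set β)) := by
    have := Fintype.ofFinite ι
    exact ⟨(Fintype.equivFin ι).toEmbedding.trans
      (Fin.valEmbedding.trans (Infinite.natEmbedding _))⟩
  obtain ⟨e, he⟩ := Equiv.Perm.exists_extending_pair a (fun i => (b i : β)) ha
    (Subtype.val_injective.comp b.injective)
  refine ⟨e, Set.disjoint_left.mpr ?_⟩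
  rintro _ ha ⟨j, rfl⟩
  exact (b j).2 (he j ▸ ha)

lemma exists_algEquiv_algebraicIndependent_algebraicClosure_adjoin [IsAlgClosed K]
    (htr : ∀ L : IntermediateField k K, L.FG → ∃ x : K, Transcendental L x)
    {ι : Type} [Finite ι] {x : ι → K} (hx : AlgebraicIndependent k x) :
    ∃ σ : K ≃ₐ[k] K, AlgebraicIndependent
      (algebraicClosure (IntermediateField.adjoin k (Set.range x)) K) (fun i => σ (x i)) := by
  obtain ⟨ℬ, hℬ, hb⟩ := exists_isTranscendenceBasis_superset hx.to_subtype_range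
  have := infinite_of_isTranscendenceBasis htr hb
  let a : ι → ℬ := fun i => ⟨x i, hℬ ⟨i, rfl⟩⟩
  have ha : Function.Injective a := fun i j h => hx.injective (congrArg Subtype.val h)
  obtain ⟨e, he⟩ := exists_perm_disjoint_range ha
  obtain ⟨σ, -, hσ⟩ := exists_algEquiv_apply_eq_of_perm hb (AlgEquiv.refl (R := k)) e
  refine ⟨σ, AlgebraicIndependent.algebraicClosure ?_⟩
  rw [IntermediateField.algebraicIndependent_adjoin_iff]
  have hrange : ((↑) : ℬ → K) '' Set.range a = Set.range x := by
    rw [← Set.range_comp]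
    rfl
  have hind := hb.1.adjoin_of_disjoint he
  rw [hrange] at hind
  have hσx : (fun i => σ (x i)) = fun i => (e (a i) : K) := funext fun i => hσ (a i)
  rw [hσx]
  exact hind.comp (fun i => (⟨e (a i), ⟨i, rfl⟩⟩ : Set.range (e ∘ a)))
    fun i j h => ha (e.injective (congrArg Subtype.val h))

lemma exists_basicOpen_subset_range_comap {R S : Type} [CommRing R] [IsDomain R]
    [IsNoetherianRing R] [CommRing S] {f : R →+* S} (hf : Function.Injective f)
    (hft : f.FiniteType) :
    ∃ h : R, h ≠ 0 ∧
      (PrimeSpectrum.basicOpen h : Set (PrimeSpectrum R)) ⊆ Set.range (PrimeSpectrum.comap f) := by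
  obtain ⟨s, hs⟩ := PrimeSpectrum.exists_constructibleSetData_iff.mpr
    (PrimeSpectrum.isConstructible_range_comap (RingHom.FinitePresentation.of_finiteType.mp hft))
  obtain ⟨P, hP, hPf⟩ := Ideal.exists_comap_eq_of_mem_minimalPrimes_of_injective hf ⊥
    (by rw [IsDomain.minimalPrimes_eq_singleton_bot]; rfl)
  have hbot : (⊥ : PrimeSpectrum R) ∈ s.toSet :=
    hs ▸ ⟨⟨P, hP⟩, PrimeSpectrum.ext hPf⟩
  simp only [PrimeSpectrum.ConstructibleSetData.toSet, Set.mem_iUnion] at hbot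
  obtain ⟨C, hC, hCV, hCf⟩ := hbot
  refine ⟨C.f, fun h => hCf (by simp [h]), fun x hx => ?_⟩
  rw [← hs]
  simp only [PrimeSpectrum.ConstructibleSetData.toSet, Set.mem_iUnion]
  refine ⟨C, hC, fun y hy => ?_, by simpa using hx⟩
  rw [show y = 0 from hCV hy]
  exact x.asIdeal.zero_mem

lemma exists_algHom_comp_eq {F A T : Type} [Field F] [IsAlgClosed F] [CommRing A] [CommRing T]
    [Algebra F A] [Algebra F T] [Algebra.FiniteType F T] (φ : A →ₐ[F] T) (ε : A →ₐ[F] F)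
    (hε : ⟨RingHom.ker ε, RingHom.ker_isPrime ε⟩ ∈ Set.range (PrimeSpectrum.comap φ.toRingHom)) :
    ∃ w : T →ₐ[F] F, w.comp φ = ε := by
  obtain ⟨P, hP⟩ := hε
  obtain ⟨N, hN, hPN⟩ := Ideal.exists_le_maximal P.asIdeal P.isPrime.ne_top
  let := Ideal.Quotient.field N
  have : Module.Finite F (T ⧸ N) := finite_of_finite_type_of_isJacobsonRing F (T ⧸ N)
  let e : F ≃ₐ[F] (T ⧸ N) := AlgEquiv.ofBijective (Algebra.ofId F _)
    IsAlgClosed.algebraMap_bijective_of_isIntegral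
  refine ⟨e.symm.toAlgHom.comp (Ideal.Quotient.mkₐ F N), AlgHom.ext fun a => ?_⟩
  have hker : a - algebraMap F A (ε a) ∈ RingHom.ker ε := by simp [RingHom.mem_ker]
  have hmem : φ a - algebraMap F T (ε a) ∈ N := hPN <| by
    have h := (PrimeSpectrum.ext_iff.mp hP).ge hker
    simpa using h
  change e.symm (Ideal.Quotient.mk N (φ a)) = _
  rw [Ideal.Quotient.eq.mpr hmem, AlgEquiv.symm_apply_eq]
  rfl

lemma exists_algHom_apply_mem_of_infinite {F T ι : Type} [Field F] [IsAlgClosed F] [CommRing T]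
    [Algebra F T] [Algebra.FiniteType F T] [Finite ι] {y : ι → T} (hy : AlgebraicIndependent F y)
    {Z : Set F} (hZ : Z.Infinite) {Q : MvPolynomial ι F} (hQ : Q ≠ 0) :
    ∃ w : T →ₐ[F] F, (∀ i, w (y i) ∈ Z) ∧ MvPolynomial.eval (fun i => w (y i)) Q ≠ 0 := by
  let φ : MvPolynomial ι F →ₐ[F] T := MvPolynomial.aeval y
  have hφ : φ.toRingHom.FiniteType := by
    refine RingHom.FiniteType.of_comp_finiteType (f := algebraMap F (MvPolynomial ι F)) ?_
    rw [show φ.toRingHom.comp (algebraMap F _) = algebraMap F T from φ.comp_algebraMap,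
      RingHom.finiteType_algebraMap]
    infer_instance
  obtain ⟨h, h0, hh⟩ := exists_basicOpen_subset_range_comap (f := φ.toRingHom) hy hφ
  obtain ⟨c, hcZ, hc⟩ : ∃ c ∈ Set.univ.pi fun _ : ι => Z, MvPolynomial.eval c (h * Q) ≠ 0 := by
    by_contra! hcon
    exact mul_ne_zero h0 hQ (MvPolynomial.funext_set (fun _ => Z) (fun _ => hZ)
      fun c hc => (hcon c hc).trans (map_zero _).symm)
  rw [map_mul] at hc
  obtain ⟨w, hw⟩ := exists_algHom_comp_eq φ (MvPolynomial.aeval c) (hh (left_ne_zero_of_mul hc))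
  have hwc (i : ι) : w (y i) = c i := by
    simpa [φ] using DFunLike.congr_fun hw (MvPolynomial.X i)
  refine ⟨w, fun i => (hwc i).symm ▸ hcZ i trivial, ?_⟩
  rw [funext hwc]
  exact right_ne_zero_of_mul hc

lemma exists_ne_zero_forall_isAlgebraic {S ι : Type} [CommRing S] [Algebra k S]
    [Algebra.FiniteType k S] {x : ι → S} (hx : IsTranscendenceBasis k x) :
    ∃ Q : MvPolynomial ι k, Q ≠ 0 ∧ ∀ φ : S →ₐ[k] K, (∀ i, IsAlgebraic k (φ (x i))) →
      MvPolynomial.aeval (fun i => φ (x i)) Q ≠ 0 → ∀ s, IsAlgebraic k (φ s) := by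
  obtain ⟨G, hG⟩ := (inferInstance : Algebra.FiniteType k S).out
  have hxi : AlgebraicIndependent k x := hx.1
  let R := Algebra.adjoin k (Set.range x)
  have : IsDomain R := hxi.aevalEquiv.symm.toMulEquiv.isDomain _
  have : Algebra.IsAlgebraic R S := hx.isAlgebraic
  obtain ⟨y, hy, hyG⟩ := Algebra.IsAlgebraic.exists_integral_multiples R G
  obtain ⟨Q, rfl⟩ := hxi.aevalEquiv.surjective y
  refine ⟨Q, by simpa using hy, fun φ hφ hφQ => ?_⟩
  have hφR : R ≤ (integralClosure k K).comap φ :=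
    Algebra.adjoin_le (Set.range_subset_iff.mpr fun i => (hφ i).isIntegral)
  let ψ : R →ₐ[k] integralClosure k K :=
    (φ.comp R.val).codRestrict (integralClosure k K) fun r => hφR r.2
  have hG' : (G : Set S) ⊆ (integralClosure k K).comap φ := by
    intro g hg
    have hint : IsIntegral k (φ (hxi.aevalEquiv Q • g)) :=
      isIntegral_trans (A := integralClosure k K) _
        ((hyG g hg).map_of_comp_eq ψ.toRingHom φ.toRingHom rfl)
    have hQint : IsIntegral k (φ (hxi.aevalEquiv Q)) := hφR (hxi.aevalEquiv Q).2
    have hQ0 : φ (hxi.aevalEquiv Q) ≠ 0 := by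
      rwa [AlgebraicIndependent.aevalEquiv_apply_coe, MvPolynomial.comp_aeval_apply]
    rw [Subalgebra.smul_def, smul_eq_mul, map_mul] at hint
    have h := hQint.isAlgebraic.inv.mul hint.isAlgebraic
    rw [inv_mul_cancel_left₀ hQ0] at h
    exact h.isIntegral
  have htop := Algebra.adjoin_le hG'
  rw [hG] at htop
  exact fun s => IsIntegral.isAlgebraic (htop (Algebra.mem_top (x := s)))

lemma mem_algebraicClosure_adjoin_of_isTranscendenceBasis {S : Subalgebra k K} {ι : Type}
    {x : ι → S} (hx : IsTranscendenceBasis k x) (s : S) :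
    (s : K) ∈ algebraicClosure (IntermediateField.adjoin k (Set.range fun i => (x i : K))) K := by
  have hle : Algebra.adjoin k (Set.range x) ≤
      (IntermediateField.adjoin k (Set.range fun i => (x i : K))).toSubalgebra.comap S.val :=
    Algebra.adjoin_le <| Set.range_subset_iff.mpr fun i =>
      IntermediateField.subset_adjoin k _ ⟨i, rfl⟩
  let f : Algebra.adjoin k (Set.range x) →+*
      IntermediateField.adjoin k (Set.range fun i => (x i : K)) :=
    ((S.val.comp (Algebra.adjoin k (Set.range x)).val).codRestrict _ fun r => hle r.2).toRingHom
  have hf : Function.Injective f := fun a b h =>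
    Subtype.ext (Subtype.ext (congrArg (algebraMap _ K) h))
  rw [mem_algebraicClosure_iff]
  exact (hx.isAlgebraic.isAlgebraic s).ringHom_of_comp_eq f S.val.toRingHom hf rfl

/- `S` contains a transcendence basis `x` of itself, and `σ` moves `x` to a family that stays
algebraically independent over the algebraic closure `F` of `k(x)`, which contains `S`. The
specialization is a point of `T` over `F` at which `σ(x)` becomes algebraic over `k`. -/
theorem exists_algEquiv_forall_exists_specialization [IsAlgClosed K]
    (htr : ∀ L : IntermediateField k K, L.FG → ∃ x : K, Transcendental L x)
    (S : FGSubalgebra k K) :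
    ∃ σ : K ≃ₐ[k] K, ∀ (T : FGSubalgebra k K) (hST : ∀ s : S.1, (s : K) ∈ T.1)
      (hσT : ∀ s : S.1, σ s ∈ T.1), ∃ w : T.1 →ₐ[k] K,
        (∀ s : S.1, w ⟨s, hST s⟩ = s) ∧ ∀ s : S.1, IsAlgebraic k (w ⟨σ s, hσT s⟩) := by
  have hft : Algebra.FiniteType k S.1 := S.1.fg_iff_finiteType.mp S.2
  obtain ⟨ι, x, hx⟩ := exists_isTranscendenceBasis' k S.1
  have : Finite ι := Cardinal.lt_aleph0_iff_finite.mp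
    (hx.cardinalMk_eq_trdeg.trans_lt trdeg_lt_aleph0_of_finiteType)
  obtain ⟨σ, hσ⟩ := exists_algEquiv_algebraicIndependent_algebraicClosure_adjoin htr
    (hx.1.map' (f := S.1.val) Subtype.val_injective)
  obtain ⟨Q, hQ, hQalg⟩ := exists_ne_zero_forall_isAlgebraic (K := K) hx
  let L := IntermediateField.adjoin k (Set.range fun i => (x i : K))
  let F := algebraicClosure L K
  have : IsScalarTower k F K := IsScalarTower.of_algebraMap_eq fun _ => rfl
  have : IsAlgClosed F := (algebraicClosure.isAlgClosure L K).isAlgClosed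
  have : IsAlgClosed (algebraicClosure k F) := (algebraicClosure.isAlgClosure k F).isAlgClosed
  refine ⟨σ, fun T hST hσT => ?_⟩
  obtain ⟨G, hG⟩ := T.2
  let T' : Subalgebra F K := Algebra.adjoin F G
  have hTT' : T.1 ≤ T'.restrictScalars k := hG ▸ Algebra.adjoin_le Algebra.subset_adjoin
  have : Algebra.FiniteType F T' := T'.fg_iff_finiteType.mp ⟨G, rfl⟩
  obtain ⟨w, hw, hwQ⟩ := exists_algHom_apply_mem_of_infinite
    (y := fun i => (⟨σ (x i), hTT' (hσT (x i))⟩ : T')) (AlgebraicIndependent.of_comp T'.val hσ)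
    (Set.infinite_coe_iff.mp (inferInstance : Infinite (algebraicClosure k F)))
    ((map_ne_zero_iff _ (MvPolynomial.map_injective _ (algebraMap k F).injective)).mpr hQ)
  let w' : T.1 →ₐ[k] K := (IsScalarTower.toAlgHom k F K).comp
    ((w.restrictScalars k).comp (Subalgebra.inclusion hTT'))
  have hwS (s : S.1) : w' ⟨s, hST s⟩ = s := congrArg (algebraMap F K)
    (w.commutes ⟨s, mem_algebraicClosure_adjoin_of_isTranscendenceBasis hx s⟩)
  refine ⟨w', hwS, fun s => hQalg
    (w'.comp ((σ.toAlgHom.comp S.1.val).codRestrict T.1 hσT)) (fun i => ?_) ?_ s⟩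
  · exact IsAlgebraic.algHom (IsScalarTower.toAlgHom k F K) (mem_algebraicClosure_iff.mp (hw i))
  · rw [MvPolynomial.eval_map, ← MvPolynomial.aeval_def] at hwQ
    rw [← map_ne_zero_iff _ (algebraMap F K).injective] at hwQ
    exact ne_of_eq_of_ne (MvPolynomial.comp_aeval_apply _ (IsScalarTower.toAlgHom k F K) Q).symm hwQ

end

/-! ### Descent of finite families to a finite normal extension -/

section

variable {A B : Type} {s t : B → A}

lemma exists_normal_forall_mem [IsAlgClosed K] {S : Type} [CommRing S]
    [Algebra k S] [Algebra.FiniteType k S] (β : S →ₐ[k] K) (hβ : ∀ x, IsAlgebraic k (β x)) :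
    ∃ k' : IntermediateField k K, FiniteDimensional k k' ∧ Normal k k' ∧ ∀ x, β x ∈ k' := by
  obtain ⟨G, hG⟩ := (inferInstance : Algebra.FiniteType k S).out
  let L := IntermediateField.adjoin k (β '' G)
  have : FiniteDimensional k L := by
    have : Finite (β '' (G : Set S)) := G.finite_toSet.image β
    refine IntermediateField.finiteDimensional_adjoin ?_
    rintro _ ⟨x, -, rfl⟩
    exact (hβ x).isIntegral
  have : Normal k (IntermediateField.normalClosure k L K) :=
    (Algebra.IsAlgebraic.isNormalClosure_normalClosure (F := k) (K := L) (L := K)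
      fun x => IsAlgClosed.splits _).normal
  have hβL : β.range ≤ L.toSubalgebra := by
    rw [← Algebra.map_top, ← hG, AlgHom.map_adjoin, Algebra.adjoin_le_iff]
    exact IntermediateField.subset_adjoin _ _
  exact ⟨IntermediateField.normalClosure k L K, inferInstance, this, fun x =>
    L.le_normalClosure (hβL ⟨x, rfl⟩)⟩

/-- If the base changes of `M` along `φ₁` and `φ₂` become isomorphic over `T`, and `E` is the base
change of `M` along a specialization of `φ₁` over `T`, then it is also the base change of `M` along
the corresponding specialization of `φ₂`. -/
def CartesianHom.specialize {R R' T L : Type} [CommRing R] [CommRing R'] [CommRing T] [CommRing L]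
    {E : SchemeDiagram s t L} {M : SchemeDiagram s t R} {φ₁ φ₂ : R →+* R'} {τ : R' →+* T}
    {w : T →+* L} {ι : R →+* L} (c : CartesianHom ι E M) (h : (w.comp τ).comp φ₁ = ι)
    (iso : CartesianHom (RingHom.id T) ((M.baseChange φ₁).baseChange τ)
      ((M.baseChange φ₂).baseChange τ)) :
    CartesianHom ((w.comp τ).comp φ₂) E M :=
  .comp rfl (M.baseChangeHom φ₂) <| .comp rfl ((M.baseChange φ₂).baseChangeHom τ) <|
    .comp (RingHom.comp_id w) iso <| .factor rfl ((M.baseChange φ₁).baseChangeHom τ) <|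
      .factor h (M.baseChangeHom φ₁) c

/- `M` and its conjugate by `σ` become isomorphic over some finitely generated `T ⊆ K` containing
`S` and `σ S`; specializing `σ S` to algebraic elements while fixing `S` turns this into an
isomorphism of `E` with a diagram defined over the algebraic closure of `k`. -/
lemma exists_cartesianHom_isAlgebraic [IsAlgClosed K]
    (htr : ∀ L : IntermediateField k K, L.FG → ∃ x : K, Transcendental L x)
    [Finite A] [Finite B] {E : SchemeDiagram s t K}
    (act : ∀ σ : K ≃ₐ[k] K, Nonempty (CartesianHom (σ : K →+* K) E E)) {S : FGSubalgebra k K}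
    {M : SchemeDiagram s t S.1} (hM : M.IsQuasiProjective)
    (c : CartesianHom S.1.val.toRingHom E M) :
    ∃ β : S.1 →ₐ[k] K, (∀ x, IsAlgebraic k (β x)) ∧ Nonempty (CartesianHom β.toRingHom E M) := by
  obtain ⟨σ, hσ⟩ := exists_algEquiv_forall_exists_specialization htr S
  obtain ⟨a⟩ := act σ
  let R : FGSubalgebra k K := ⟨S.1 ⊔ S.1.map σ.toAlgHom, S.2.sup (S.2.map _)⟩
  have : Algebra.FiniteType k R.1 := R.1.fg_iff_finiteType.mp R.2
  have : IsNoetherianRing R.1 := Algebra.FiniteType.isNoetherianRing k R.1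
  let φ₁ : S.1 →ₐ[k] R.1 := Subalgebra.inclusion le_sup_left
  let φ₂ : S.1 →ₐ[k] R.1 := (σ.toAlgHom.comp S.1.val).codRestrict R.1 fun x =>
    le_sup_right (a := S.1) (Subalgebra.mem_map.mpr ⟨x, x.2, rfl⟩)
  let c₁ : CartesianHom (algebraMap R.1 K) E (M.baseChange φ₁.toRingHom) :=
    .factor rfl (M.baseChangeHom _) c
  let c₂ : CartesianHom (algebraMap R.1 K) E (M.baseChange φ₂.toRingHom) :=
    .factor (χ := (σ : K →+* K).comp S.1.val.toRingHom) rfl (M.baseChangeHom _) (.comp rfl c a)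
  obtain ⟨T, ⟨iso⟩⟩ := c₁.exists_baseChange_id c₂ (hM.of_cartesianHom (M.baseChangeHom _))
    (hM.of_cartesianHom (M.baseChangeHom _))
  obtain ⟨w, hw, hwalg⟩ := hσ (R.restrictScalars T) (fun x => (algebraMap R.1 T.1 (φ₁ x)).2)
    (fun x => (algebraMap R.1 T.1 (φ₂ x)).2)
  exact ⟨w.comp (IsScalarTower.toAlgHom k R.1 T.1 |>.comp φ₂), hwalg,
    ⟨c.specialize (w := w.toRingHom) (RingHom.ext hw) iso⟩⟩

theorem exists_normal_cartesianHom [IsAlgClosed K]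
    (htr : ∀ L : IntermediateField k K, L.FG → ∃ x : K, Transcendental L x)
    [Finite A] [Finite B] {E : SchemeDiagram s t K} (hE : E.IsQuasiProjective)
    (act : ∀ σ : K ≃ₐ[k] K, Nonempty (CartesianHom (σ : K →+* K) E E)) :
    ∃ k' : IntermediateField k K, FiniteDimensional k k' ∧ Normal k k' ∧
      ∃ N : SchemeDiagram s t k', N.IsQuasiProjective ∧
        Nonempty (CartesianHom (algebraMap k' K) E N) := by
  obtain ⟨S, M, hM, ⟨c⟩⟩ := hE.exists_model (R := k)
  obtain ⟨β, hβ, ⟨d⟩⟩ := exists_cartesianHom_isAlgebraic htr act hM c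
  have : Algebra.FiniteType k S.1 := S.1.fg_iff_finiteType.mp S.2
  obtain ⟨k', hfin, hnormal, hk'⟩ := exists_normal_forall_mem β hβ
  let β' : S.1 →ₐ[k] k' := β.codRestrict k'.toSubalgebra hk'
  exact ⟨k', hfin, hnormal, M.baseChange β'.toRingHom, hM.of_cartesianHom (M.baseChangeHom _),
    ⟨.factor (χ := β.toRingHom) rfl (M.baseChangeHom _) d⟩⟩

lemma exists_finset_forall_of_finite {P : A → Type} [∀ a, Finite (P a)]
    {r : ∀ b, P (s b) → P (t b) → Prop} {a : A} {Q : P a → Prop}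
    (h : ∀ x : ∀ a, P a, (∀ b, r b (x (s b)) (x (t b))) → Q (x a)) :
    ∃ F : Finset B, ∀ x : ∀ a, P a, (∀ b ∈ F, r b (x (s b)) (x (t b))) → Q (x a) := by
  let _ (a : A) : TopologicalSpace (P a) := ⊥
  have (a : A) : DiscreteTopology (P a) := ⟨rfl⟩
  let U : Set (∀ a, P a) := {x | ¬ Q (x a)}
  let C : B → Set (∀ a, P a) := fun b => {x | r b (x (s b)) (x (t b))}
  have hU : IsClosed U := (isClosed_discrete {y | ¬ Q y}).preimage (continuous_apply a)
  have hC : ∀ b, IsClosed (C b) := fun b =>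
    (isClosed_discrete {y : P (s b) × P (t b) | r b y.1 y.2}).preimage
      ((continuous_apply (s b)).prodMk (continuous_apply (t b)))
  have hUC : U ∩ ⋂ b, C b = ∅ :=
    Set.eq_empty_of_forall_notMem fun x hx => hx.1 (h x fun b => Set.mem_iInter.mp hx.2 b)
  obtain ⟨F, hF⟩ := hU.isCompact.elim_finite_subfamily_closed C hC hUC
  exact ⟨F, fun x hx => by_contra fun hne =>
    Set.eq_empty_iff_forall_notMem.mp hF x ⟨hne, Set.mem_iInter₂.mpr hx⟩⟩

/-- A family of automorphisms of the members of `E` over the base ring, compatible with the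
morphisms of `E`. -/
structure SchemeDiagram.IsAut {S : Type} [CommRing S] (E : SchemeDiagram s t S)
    (ψ : ∀ a, Aut (E.obj a)) : Prop where
  hom_str (a : A) : (ψ a).hom ≫ E.str a = E.str a
  comp_hom (b : B) : E.hom b ≫ (ψ (t b)).hom = (ψ (s b)).hom ≫ E.hom b

/-- The subdiagram of `E` with members indexed by `A'` and morphisms indexed by `B'`. -/
def SchemeDiagram.restrict {S : Type} [CommRing S] (E : SchemeDiagram s t S) {A' : Set A}
    {B' : Set B} (hs : Set.MapsTo s B' A') (ht : Set.MapsTo t B' A') :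
    SchemeDiagram hs.restrict ht.restrict S where
  obj a := E.obj a
  str a := E.str a
  hom b := E.hom b
  hom_str b := E.hom_str b

lemma SchemeDiagram.exists_finite_restrict_rigid {S : Type} [CommRing S] (E : SchemeDiagram s t S)
    (hfin : ∀ a, Finite {e : Aut (E.obj a) // e.hom ≫ E.str a = E.str a}) {a : A}
    (hrigid : ∀ ψ, E.IsAut ψ → ψ a = 1) :
    ∃ (A' : Set A) (B' : Set B) (hs : Set.MapsTo s B' A') (ht : Set.MapsTo t B' A') (ha : a ∈ A'),
      A'.Finite ∧ B'.Finite ∧ ∀ ψ, (E.restrict hs ht).IsAut ψ → ψ ⟨a, ha⟩ = 1 := by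
  classical
  obtain ⟨F, hF⟩ := exists_finset_forall_of_finite
    (P := fun a => {e : Aut (E.obj a) // e.hom ≫ E.str a = E.str a})
    (r := fun b e e' => E.hom b ≫ e'.1.hom = e.1.hom ≫ E.hom b) (Q := fun e => e.1 = 1)
    fun x hx => hrigid (fun a => (x a).1) ⟨fun a => (x a).2, hx⟩
  let A' : Set A := insert a (s '' F ∪ t '' F)
  have hs : Set.MapsTo s F A' := fun b hb => .inr (.inl ⟨b, hb, rfl⟩)
  have ht : Set.MapsTo t F A' := fun b hb => .inr (.inr ⟨b, hb, rfl⟩)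
  have ha : a ∈ A' := .inl rfl
  refine ⟨A', F, hs, ht, ha,
    ((F.finite_toSet.image s).union (F.finite_toSet.image t)).insert a, F.finite_toSet,
    fun ψ hψ => ?_⟩
  let ψ' (a : A) : Aut (E.obj a) := if h : a ∈ A' then ψ ⟨a, h⟩ else 1
  have hψ' {a : A} (h : a ∈ A') : ψ' a = ψ ⟨a, h⟩ := dif_pos h
  have hstr (a : A) : (ψ' a).hom ≫ E.str a = E.str a := by
    by_cases h : a ∈ A'
    · rw [hψ' h]
      exact hψ.hom_str ⟨a, h⟩
    · rw [show ψ' a = 1 from dif_neg h]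
      exact Category.id_comp _
  rw [← hψ' ha]
  refine hF (fun a => ⟨ψ' a, hstr a⟩) fun b hb => ?_
  simp only [hψ' (hs hb), hψ' (ht hb)]
  exact hψ.comp_hom ⟨b, hb⟩

namespace CartesianHom

variable {R S : Type} [CommRing R] [CommRing S] {φ : R →+* S} {E : SchemeDiagram s t S}
  {M : SchemeDiagram s t R}

/-- The automorphism of the base change `E` of `M` induced by an automorphism `g` of the base
over `Spec R`. -/
def liftAut (c : CartesianHom φ E M) (g : Spec (.of S) ⟶ Spec (.of S)) [IsIso g]
    (hg : g ≫ specMap φ = specMap φ) (a : A) : Aut (E.obj a) :=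
  have h : IsPullback (c.map a) (E.str a ≫ g) (M.str a) (specMap φ) :=
    .of_iso (c.isPullback a) (Iso.refl _) (Iso.refl _) (asIso g) (Iso.refl _) (by simp) (by simp)
      (by simp) (by simp [hg])
  IsPullback.isoIsPullback _ _ h (c.isPullback a)

variable (c : CartesianHom φ E M) (g : Spec (.of S) ⟶ Spec (.of S)) [IsIso g]
  (hg : g ≫ specMap φ = specMap φ)

lemma liftAut_hom_comp_map (a : A) : (c.liftAut g hg a).hom ≫ c.map a = c.map a :=
  IsPullback.isoIsPullback_hom_fst _ _ _ _

lemma liftAut_hom_comp_str (a : A) : (c.liftAut g hg a).hom ≫ E.str a = E.str a ≫ g :=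
  IsPullback.isoIsPullback_hom_snd _ _ _ _

lemma hom_comp_liftAut_hom (b : B) :
    E.hom b ≫ (c.liftAut g hg (t b)).hom = (c.liftAut g hg (s b)).hom ≫ E.hom b := by
  refine (c.isPullback _).hom_ext ?_ ?_
  · rw [Category.assoc, Category.assoc, liftAut_hom_comp_map, ← c.map_comp_hom,
      reassoc_of% c.liftAut_hom_comp_map g hg (s b)]
  · rw [Category.assoc, Category.assoc, liftAut_hom_comp_str, E.hom_str, liftAut_hom_comp_str,
      reassoc_of% E.hom_str b]

end CartesianHom

lemma specAut_comp_specAut (σ τ : K ≃ₐ[k] K) :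
    specAut k K σ ≫ specAut k K τ = specAut k K (τ * σ) :=
  (Spec.map_comp _ _).symm

lemma specAut_one : specAut k K 1 = 𝟙 _ :=
  Spec.map_id _

instance (σ : K ≃ₐ[k] K) : IsIso (specAut k K σ) :=
  ⟨specAut k K σ⁻¹, by rw [specAut_comp_specAut, inv_mul_cancel, specAut_one],
    by rw [specAut_comp_specAut, mul_inv_cancel, specAut_one]⟩

lemma specAut_comp_specMap_algebraMap {k' : IntermediateField k K} {τ : K ≃ₐ[k] K}
    (hτ : τ ∈ k'.fixingSubgroup) :
    specAut k K τ ≫ specMap (algebraMap k' K) = specMap (algebraMap k' K) := by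
  refine (specMap_comp_specMap _ _).trans (congrArg specMap (RingHom.ext fun x => ?_))
  exact τ.symm_apply_eq.mpr ((k'.mem_fixingSubgroup_iff τ).mp hτ x x.2).symm

/-- The action of `σ⁻¹` on a diagram with equivariant descent data identifies the diagram with its
conjugate by `σ`. -/
def SchemeDiagram.cartesianHomOfDescentDatum {E : SchemeDiagram s t K}
    (D : ∀ a, DescentDatum k K (E.obj a) (E.str a))
    (hD : ∀ b σ, E.hom b ≫ ((D (t b)).act σ).hom = ((D (s b)).act σ).hom ≫ E.hom b)
    (σ : K ≃ₐ[k] K) : CartesianHom (σ : K →+* K) E E where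
  map a := ((D a).act σ⁻¹).hom
  isPullback a :=
    have : IsIso (specMap (σ : K →+* K)) := inferInstanceAs (IsIso (specAut k K σ⁻¹))
    have : IsIso ((D a).act σ⁻¹).hom := Iso.isIso_hom ((D a).act σ⁻¹ : E.obj a ≅ E.obj a)
    .of_horiz_isIso ⟨(D a).compat σ⁻¹⟩
  map_comp_hom b := (hD b σ⁻¹).symm

/- The descent datum of the model `N` differs from `D` by an automorphism of `E`. -/
lemma CartesianHom.act_hom_comp_map {k' : IntermediateField k K} {E : SchemeDiagram s t K}
    {N : SchemeDiagram s t k'} (c : CartesianHom (algebraMap k' K) E N)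
    (D : ∀ a, DescentDatum k K (E.obj a) (E.str a))
    (hD : ∀ b σ, E.hom b ≫ ((D (t b)).act σ).hom = ((D (s b)).act σ).hom ≫ E.hom b) {a : A}
    (hrigid : ∀ ψ, E.IsAut ψ → ψ a = 1) {τ : K ≃ₐ[k] K} (hτ : τ ∈ k'.fixingSubgroup) :
    ((D a).act τ).hom ≫ c.map a = c.map a := by
  let l := c.liftAut (specAut k K τ) (specAut_comp_specMap_algebraMap hτ)
  have hl : E.IsAut fun a => (D a).act τ⁻¹ * l a :=
    { hom_str a := by
        change ((l a).hom ≫ ((D a).act τ⁻¹).hom) ≫ E.str a = _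
        rw [Category.assoc, (D a).compat, reassoc_of% c.liftAut_hom_comp_str, specAut_comp_specAut,
          inv_mul_cancel, specAut_one, Category.comp_id]
      comp_hom b := by
        change E.hom b ≫ (l (t b)).hom ≫ _ = ((l (s b)).hom ≫ _) ≫ _
        rw [reassoc_of% c.hom_comp_liftAut_hom, hD, Category.assoc] }
  have hact : (D a).act τ = l a := by
    rw [← inv_mul_eq_one, ← map_inv]
    exact hrigid _ hl
  rw [hact, c.liftAut_hom_comp_map]

theorem exists_normal_forall_act_comp_eq [IsAlgClosed K]
    (htr : ∀ L : IntermediateField k K, L.FG → ∃ x : K, Transcendental L x)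
    (E : SchemeDiagram s t K) (hE : E.IsQuasiProjective)
    (hfin : ∀ a, Finite {e : Aut (E.obj a) // e.hom ≫ E.str a = E.str a})
    (D : ∀ a, DescentDatum k K (E.obj a) (E.str a))
    (hD : ∀ b σ, E.hom b ≫ ((D (t b)).act σ).hom = ((D (s b)).act σ).hom ≫ E.hom b) {a : A}
    (hrigid : ∀ ψ, E.IsAut ψ → ψ a = 1) :
    ∃ k' : IntermediateField k K, FiniteDimensional k k' ∧ Normal k k' ∧
      ∃ (Y : Scheme) (q : Y ⟶ Spec (.of k')) (r : E.obj a ⟶ Y), QuasiProjectiveOver k' q ∧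
        IsPullback r (E.str a) q (specMap (algebraMap k' K)) ∧
        ∀ τ ∈ k'.fixingSubgroup, ((D a).act τ).hom ≫ r = r := by
  obtain ⟨A', B', hs, ht, ha, hA', hB', hrigid'⟩ := E.exists_finite_restrict_rigid hfin hrigid
  have := hA'.to_subtype
  have := hB'.to_subtype
  let E' := E.restrict hs ht
  let D' (a : A') : DescentDatum k K (E'.obj a) (E'.str a) := D a
  obtain ⟨k', hfd, hnormal, N, hN, ⟨c⟩⟩ := exists_normal_cartesianHom htr
    (E := E') (fun a => hE a)
    fun σ => ⟨SchemeDiagram.cartesianHomOfDescentDatum D' (fun b => hD b) σ⟩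
  exact ⟨k', hfd, hnormal, _, _, c.map ⟨a, ha⟩, hN _, c.isPullback _, fun τ hτ =>
    c.act_hom_comp_map D' (fun b => hD b) hrigid' hτ⟩

end

/-! ### Semilinear Galois descent -/

section

lemma isInvariant_algEquiv [PerfectField k] [IsAlgClosed K]
    (htr : ∀ L : IntermediateField k K, L.FG → ∃ x : K, Transcendental L x) :
    Algebra.IsInvariant k K (K ≃ₐ[k] K) where
  isInvariant x hx := by
    classical
    by_cases hal : IsAlgebraic k x
    · have : Normal k (algebraicClosure k K) := IsAlgClosure.normal k _
      have : IsGalois k (algebraicClosure k K) := {}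
      obtain ⟨ι, v, hv⟩ := exists_isTranscendenceBasis' (algebraicClosure k K) K
      obtain ⟨c, hc⟩ := (InfiniteGalois.mem_range_algebraMap_iff_fixed (k := k)
        (⟨x, mem_algebraicClosure_iff.mpr hal⟩ : algebraicClosure k K)).mpr fun τ => by
          obtain ⟨σ, hσ, -⟩ := exists_algEquiv_apply_eq_of_perm hv τ (Equiv.refl ι)
          exact Subtype.ext ((hσ _).symm.trans (hx σ))
      exact ⟨c, congrArg Subtype.val hc⟩
    · obtain ⟨ℬ, hxℬ, hℬ⟩ := exists_isTranscendenceBasis_superset (R := k) (s := {x})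
        (algebraicIndependent_unique_type_iff.mpr hal)
      have := infinite_of_isTranscendenceBasis htr hℬ
      let b : ℬ := ⟨x, hxℬ rfl⟩
      obtain ⟨y, hy⟩ := exists_ne b
      obtain ⟨σ, -, hσ⟩ := exists_algEquiv_apply_eq_of_perm hℬ
        (AlgEquiv.refl (R := k)) (Equiv.swap b y)
      refine absurd (Subtype.ext ?_) hy
      rw [← Equiv.swap_apply_left b y, ← hσ]
      exact hx σ

variable {G : Type*} [Group G] [MulSemiringAction G K]

/- In a relation of minimal length expressing one vector through the others, applying `g` and
subtracting shows that the coefficients are `G`-invariant. -/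
lemma linearIndependent_of_forall_smul_eq [Algebra.IsInvariant k K G] {V : Type*}
    [AddCommGroup V] [Module k V] [Module K V] [IsScalarTower k K V] [DistribMulAction G V]
    [SMulDistribClass G K V] {ι : Type*} {b : ι → V} (hb : ∀ (g : G) i, g • b i = b i)
    (hli : LinearIndependent k b) : LinearIndependent K b := by
  classical
  rw [linearIndependent_iff_finset_linearIndependent]
  intro s
  induction s using Finset.induction_on with
  | empty => exact linearIndependent_empty_type
  | insert j s hj ih =>
    have ih : LinearIndepOn K b s := ih
    suffices LinearIndepOn K b (insert j s : Set ι) by rwa [← Finset.coe_insert] at this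
    refine (linearIndepOn_insert hj).mpr ⟨ih, fun hjs => ?_⟩
    obtain ⟨c, hc⟩ := Submodule.mem_span_image_finset_iff_exists_fun K |>.mp hjs
    have hinv (g : G) (i : s) : g • c i = c i := by
      have h : ∑ i, (g • c i - c i) • b i = 0 := by
        simp only [sub_smul, Finset.sum_sub_distrib]
        rw [sub_eq_zero, hc, ← hb g j, ← hc, Finset.smul_sum]
        simp only [smul_distrib_smul, hb]
      exact sub_eq_zero.mp (Fintype.linearIndependent_iff.mp ih _ h i)
    choose d hd using fun i =>
      Algebra.IsInvariant.isInvariant (A := k) (c i) fun g => hinv g i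
    refine ((linearIndepOn_insert hj).mp (hli.linearIndepOn (insert j (s : Set ι)))).2 ?_
    refine (Submodule.mem_span_image_finset_iff_exists_fun k).mpr ⟨d, ?_⟩
    simp only [← hc, ← hd, algebraMap_smul]

/- If `f` is a linear form killing the invariants `∑ τ e • τ a`, where `e ∈ k'` and `τ` runs
through the embeddings of `k'` induced by `G`, then Dedekind's independence of characters shows
that it kills every `τ a`. -/
lemma mem_span_fixedPoints (k' : IntermediateField k K) [FiniteDimensional k k']
    [SMulCommClass G k K] {V : Type*} [AddCommGroup V] [Module K V] [DistribMulAction G V]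
    [SMulDistribClass G K V] {a : V}
    (ha : a ∈ MulAction.fixedPoints (fixingSubgroup G (k' : Set K)) V) :
    a ∈ Submodule.span K (MulAction.fixedPoints G V) := by
  classical
  let χ (g : G) : k' →ₐ[k] K := (MulSemiringAction.toAlgHom k K g).comp k'.val
  have hχ {g h : G} (hgh : χ g = χ h) : g • a = h • a := by
    rw [← inv_smul_eq_iff, smul_smul]
    refine ha ⟨h⁻¹ * g, (mem_fixingSubgroup_iff G).mpr fun x hx => ?_⟩
    rw [mul_smul, inv_smul_eq_iff]
    exact DFunLike.congr_fun hgh ⟨x, hx⟩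
  let O := MulAction.orbit G ((Subtype.val : k' → K), a)
  choose l hl using fun o : O => o.2
  have hlχ : Function.Injective fun o => χ (l o) := fun o o' h => by
    have hfst : l o • (Subtype.val : k' → K) = l o' • Subtype.val :=
      funext fun e => DFunLike.congr_fun h e
    rw [Subtype.ext_iff, ← hl o, ← hl o']
    exact Prod.ext hfst (hχ h)
  have := Fintype.ofInjective _ hlχ
  have hfix (e : k') : ∑ o : O, o.1.1 e • o.1.2 ∈ MulAction.fixedPoints G V := fun g => by
    rw [Finset.smul_sum]
    exact (Finset.sum_congr rfl fun o _ => smul_distrib_smul g _ _).trans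
      (Equiv.sum_comp (MulAction.toPerm g) fun o : O => o.1.1 e • o.1.2)
  by_contra hspan
  obtain ⟨f, hfa, hf⟩ := Submodule.exists_le_ker_of_notMem hspan
  have hli : LinearIndependent K fun o : O => ((χ (l o) : k' →* K) : k' → K) :=
    (linearIndependent_monoidHom k' K).comp (fun o => (χ (l o) : k' →* K))
      fun o o' h => hlχ (AlgHom.ext fun e => DFunLike.congr_fun h e)
  have hzero := Fintype.linearIndependent_iff.mp hli (fun o => f o.1.2) <| funext fun e => by
    rw [Finset.sum_apply, Pi.zero_apply,
      ← LinearMap.mem_ker.mp (hf (Submodule.subset_span (hfix e))), map_sum]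
    refine Finset.sum_congr rfl fun o _ => ?_
    rw [map_smul, ← hl o]
    exact mul_comm _ _
  exact hfa (hzero ⟨_, MulAction.mem_orbit_self _⟩)

lemma isBaseChange_of_linearIndependent {R S M N : Type*} [CommRing R] [CommRing S] [Algebra R S]
    [AddCommGroup M] [Module R M] [AddCommGroup N] [Module R N] [Module S N] [IsScalarTower R S N]
    {f : M →ₗ[R] N} {ι : Type*} (b : Module.Basis ι R M) (hli : LinearIndependent S (f ∘ b))
    (hspan : ⊤ ≤ Submodule.span S (Set.range (f ∘ b))) : IsBaseChange S f := by
  let e := (Algebra.TensorProduct.basis S b).equiv (.mk hli hspan) (Equiv.refl _)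
  have he : e.toLinearMap.restrictScalars R ∘ₗ TensorProduct.mk R S M 1 = f :=
    b.ext fun i => by
      have h := (Algebra.TensorProduct.basis S b).equiv_apply i (.mk hli hspan) (Equiv.refl _)
      rw [Algebra.TensorProduct.basis_apply, Module.Basis.mk_apply] at h
      exact h
  exact .of_equiv e fun x => LinearMap.congr_fun he x

lemma isPushout_fixedPoints [Algebra.IsInvariant k K G] {A : Type*} [CommRing A] [Algebra k A]
    [Algebra K A] [IsScalarTower k K A] [MulSemiringAction G A] [SMulCommClass G k A]
    [SMulDistribClass G K A] (h : Submodule.span K (MulAction.fixedPoints G A) = ⊤) :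
    Algebra.IsPushout k K (FixedPoints.subalgebra k A G) A where
  out := by
    let B := FixedPoints.subalgebra k A G
    let b := Module.Free.chooseBasis k B
    refine isBaseChange_of_linearIndependent b
      (linearIndependent_of_forall_smul_eq (fun g i => (b i).2 g)
        (b.linearIndependent.map' B.val.toLinearMap
          (LinearMap.ker_eq_bot.mpr Subtype.val_injective))) ?_
    rw [← h, Submodule.span_le]
    intro x hx
    have hx' := Submodule.mem_map_of_mem (f := B.val.toLinearMap) (b.mem_span ⟨x, hx⟩)
    rw [Submodule.map_span, ← Set.range_comp] at hx'
    exact Submodule.span_le_restrictScalars k K _ hx'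

lemma span_fixedPoints_eq_top (k' : IntermediateField k K) [FiniteDimensional k k']
    [SMulCommClass G k K] {A : Type*} [CommRing A] [Algebra K A] [MulSemiringAction G A]
    [SMulDistribClass G K A] (h : Subring.closure (Set.range (algebraMap K A) ∪
      MulAction.fixedPoints (fixingSubgroup G (k' : Set K)) A) = ⊤) :
    Submodule.span K (MulAction.fixedPoints G A) = ⊤ := by
  let B := FixedPoints.submonoid (fixingSubgroup G (k' : Set K)) A
  have hB : Submodule.span K (B : Set A) = ⊤ := by
    have hadj : Algebra.adjoin K (B : Set A) = ⊤ := by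
      rw [← Algebra.toSubring_eq_top, Algebra.adjoin_eq_ring_closure]
      exact h
    rw [← Algebra.top_toSubmodule, ← hadj, Algebra.adjoin_eq_span, Submonoid.closure_eq]
  rw [eq_top_iff, ← hB, Submodule.span_le]
  exact fun a ha => mem_span_fixedPoints k' ha
end

/-! ### Finite sets of points of quasi-projective schemes -/

lemma exists_mem_basicOpen_le {R : Type} [CommRing R] {n : ℕ}
    {W : (Proj (polyGrading R n)).Opens} {x : Proj (polyGrading R n)} (hx : x ∈ W) :
    ∃ d > 0, ∃ g ∈ polyGrading R n d, x ∈ Proj.basicOpen (polyGrading R n) g ∧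
      Proj.basicOpen (polyGrading R n) g ≤ W := by
  obtain ⟨_, ⟨_, ⟨f, rfl⟩, rfl⟩, hxf, hfW⟩ :=
    (Proj.isBasis_basicOpen (polyGrading R n)).exists_subset_of_mem_open (a := x) hx W.isOpen
  change x ∈ Proj.basicOpen (polyGrading R n) f at hxf
  change Proj.basicOpen (polyGrading R n) f ≤ W at hfW
  rw [Proj.basicOpen_eq_iSup_proj] at hxf hfW
  obtain ⟨i, hi⟩ := TopologicalSpace.Opens.mem_iSup.mp hxf
  have htop := Proj.iSup_basicOpen_eq_top (polyGrading R n)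
    (fun j : Fin (n + 1) => MvPolynomial.X j) (irrelevant_le_span_X R n)
  obtain ⟨j, hj⟩ := TopologicalSpace.Opens.mem_iSup.mp (htop.ge (Set.mem_univ x))
  refine ⟨i + 1, i.succ_pos, GradedRing.proj (polyGrading R n) i f * MvPolynomial.X j,
    SetLike.mul_mem_graded (SetLike.coe_mem _) (X_mem_polyGrading R n j), ?_, ?_⟩
  · rw [Proj.basicOpen_mul]
    exact ⟨hi, hj⟩
  · rw [Proj.basicOpen_mul]
    exact inf_le_left.trans ((iSup_le_iff.mp hfW) i)

lemma proj_basicOpen_add_le {R : Type} [CommRing R] {n : ℕ} (f g : MvPolynomial (Fin (n + 1)) R) :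
    Proj.basicOpen (polyGrading R n) (f + g) ≤
      Proj.basicOpen (polyGrading R n) f ⊔ Proj.basicOpen (polyGrading R n) g := fun x hx => by
  by_contra h
  rw [← SetLike.mem_coe, TopologicalSpace.Opens.coe_sup, Set.mem_union, not_or] at h
  exact hx (add_mem (not_not.mp h.1) (not_not.mp h.2))

lemma mem_proj_basicOpen_add {R : Type} [CommRing R] {n : ℕ} {f g : MvPolynomial (Fin (n + 1)) R}
    {x : Proj (polyGrading R n)} (hf : x ∈ Proj.basicOpen (polyGrading R n) f)
    (hg : x ∉ Proj.basicOpen (polyGrading R n) g) :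
    x ∈ Proj.basicOpen (polyGrading R n) (f + g) := fun h =>
  hf ((Ideal.add_mem_iff_left _ (not_not.mp hg)).mp h)

/- Induction on `T`: let `x ∈ T` be a point which is not a specialization of another point of `T`,
and suppose that the form `f` obtained for `T \ {x}` vanishes at `x`. Then add to a power of `f` a
power of a form `g` that vanishes at the other points but not at `x`. -/
lemma exists_finset_subset_basicOpen_le {R : Type} [CommRing R] {n : ℕ}
    {W : (Proj (polyGrading R n)).Opens} (T : Finset (Proj (polyGrading R n)))
    (hT : ∀ x ∈ T, x ∈ W) : ∃ d > 0, ∃ g ∈ polyGrading R n d,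
      (∀ x ∈ T, x ∈ Proj.basicOpen (polyGrading R n) g) ∧
      Proj.basicOpen (polyGrading R n) g ≤ W := by
  classical
  induction T using Finset.strongInduction with
  | H T ih =>
    obtain rfl | hne := T.eq_empty_or_nonempty
    · refine ⟨1, one_pos, 0, zero_mem _, by simp, ?_⟩
      rw [Proj.basicOpen_zero]
      exact bot_le
    obtain ⟨x, hxT, hxmin⟩ := Finset.exists_minimal (α := ProjectiveSpectrum (polyGrading R n)) hne
    obtain ⟨d, hd, f, hf, hTf, hfW⟩ := ih _ (Finset.erase_ssubset hxT) fun y hy =>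
      hT y (Finset.mem_of_mem_erase hy)
    by_cases hxf : x ∈ Proj.basicOpen (polyGrading R n) f
    · refine ⟨d, hd, f, hf, fun y hy => ?_, hfW⟩
      obtain rfl | hyx := eq_or_ne y x
      exacts [hxf, hTf y (Finset.mem_erase.mpr ⟨hyx, hy⟩)]
    let U : (Proj (polyGrading R n)).Opens := ⟨(⋃ y ∈ T.erase x, closure {y})ᶜ,
      (isClosed_biUnion_finset fun _ _ => isClosed_closure).isOpen_compl⟩
    have hxU : x ∈ U := by
      intro hx
      obtain ⟨y, hy, hxy⟩ := Set.mem_iUnion₂.mp hx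
      have hyx := (ProjectiveSpectrum.le_iff_mem_closure _ y x).mpr hxy
      exact (Finset.ne_of_mem_erase hy)
        (hyx.antisymm (hxmin (Finset.mem_of_mem_erase hy) hyx))
    obtain ⟨e, he, g, hg, hxg, hgW⟩ := exists_mem_basicOpen_le (W := W ⊓ U) ⟨hT x hxT, hxU⟩
    have hTg : ∀ y ∈ T.erase x, y ∉ Proj.basicOpen (polyGrading R n) g := fun y hy hyg =>
      (hgW hyg).2 (Set.mem_biUnion hy (subset_closure rfl))
    have hfe := Proj.basicOpen_pow (polyGrading R n) f e he
    have hgd := Proj.basicOpen_pow (polyGrading R n) g d hd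
    refine ⟨d * e, mul_pos hd he, f ^ e + g ^ d, add_mem ?_ (SetLike.pow_mem_graded d hg),
      fun y hy => ?_, (proj_basicOpen_add_le _ _).trans ?_⟩
    · rw [mul_comm]
      exact SetLike.pow_mem_graded e hf
    · obtain rfl | hyx := eq_or_ne y x
      · rw [add_comm (f ^ e)]
        exact mem_proj_basicOpen_add (hgd ▸ hxg) (hfe ▸ hxf)
      · have hyT := Finset.mem_erase.mpr ⟨hyx, hy⟩
        exact mem_proj_basicOpen_add (hfe ▸ hTf y hyT) (hgd ▸ hTg y hyT)
    · rw [hfe, hgd]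
      exact sup_le hfW (hgW.trans inf_le_left)

lemma QuasiProjectiveOver.exists_isAffineOpen_forall_mem {R : Type} [CommRing R] {Y : Scheme}
    {q : Y ⟶ Spec (.of R)} (hq : QuasiProjectiveOver R q) {ι : Type*} [Finite ι] (y : ι → Y) :
    ∃ U : Y.Opens, IsAffineOpen U ∧ ∀ i, y i ∈ U := by
  classical
  obtain ⟨n, f, hf, -⟩ := iff_exists_proj.mp hq
  have := Fintype.ofFinite ι
  let W := f.coborderRange
  obtain ⟨d, hd, g, hg, hy, hgW⟩ := exists_finset_subset_basicOpen_le (W := W)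
    (Finset.univ.image fun i => f (y i)) fun x hx => by
      obtain ⟨i, -, rfl⟩ := Finset.mem_image.mp hx
      rw [← f.liftCoborder_ι, Scheme.Hom.comp_apply]
      exact (f.liftCoborder (y i)).2
  refine ⟨f ⁻¹ᵁ Proj.basicOpen (polyGrading R n) g, ?_, fun i =>
    hy _ (Finset.mem_image_of_mem _ (Finset.mem_univ i))⟩
  have hpre : f ⁻¹ᵁ Proj.basicOpen (polyGrading R n) g =
      f.liftCoborder ⁻¹ᵁ (W.ι ⁻¹ᵁ Proj.basicOpen (polyGrading R n) g) := by
    rw [← Scheme.Hom.comp_preimage, f.liftCoborder_ι]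
  rw [hpre]
  refine .preimage ((Proj.isAffineOpen_basicOpen _ g hg hd).preimage_of_isOpenImmersion W.ι ?_) _
  rwa [Scheme.Opens.opensRange_ι]

/-! ### Stable affine open subschemes -/

section

variable {X : Scheme.{0}} {R S : Type} [CommRing R] [CommRing S]

lemma mem_closure_range_presheaf_map_of_isSeparated [X.IsSeparated] {V W : X.Opens}
    (hV : IsAffineOpen V) (hW : IsAffineOpen W) (x : Γ(X, V ⊓ W)) :
    x ∈ Subring.closure (Set.range (X.presheaf.map (homOfLE (inf_le_left : V ⊓ W ≤ V)).op).hom ∪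
      Set.range (X.presheaf.map (homOfLE (inf_le_right : V ⊓ W ≤ W)).op).hom) := by
  have : IsAffine V := hV
  have : IsAffine W := hW
  let δ : (V ⊓ W).toScheme ⟶
      pullback (V.ι ≫ terminal.from X) (W.ι ≫ terminal.from X) :=
    (isPullback_opens_inf V W).isoPullback.hom ≫ pullback.mapDesc V.ι W.ι (terminal.from X)
  have hδ : IsClosedImmersion δ := inferInstance
  have hδV : δ ≫ pullback.fst _ _ = X.homOfLE inf_le_left := by
    simp only [δ, pullback.mapDesc, Category.assoc, pullback.map, pullback.lift_fst,
      Category.comp_id, IsPullback.isoPullback_hom_fst]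
  have hδW : δ ≫ pullback.snd _ _ = X.homOfLE inf_le_right := by
    simp only [δ, pullback.mapDesc, Category.assoc, pullback.map, pullback.lift_snd,
      Category.comp_id, IsPullback.isoPullback_hom_snd]
  have hres : ∀ {U : X.Opens} (hU : V ⊓ W ≤ U) (g : _ ⟶ U.toScheme), δ ≫ g = X.homOfLE hU →
      (g.appTop ≫ δ.appTop) ≫ (V ⊓ W).topIso.hom =
        U.topIso.hom ≫ X.presheaf.map (homOfLE hU).op := by
    intro U hU g hg
    rw [← Scheme.Hom.comp_appTop, hg, Scheme.homOfLE_appTop]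
    refine (X.presheaf.map_comp _ _).symm.trans (Eq.trans ?_ (X.presheaf.map_comp _ _))
    congr 1
  let φ := (δ.appTop ≫ (V ⊓ W).topIso.hom).hom
  obtain ⟨u, rfl⟩ : ∃ u, φ u = x := by
    obtain ⟨u, hu⟩ :=
      (IsClosedImmersion.isAffine_surjective_of_isAffine δ).2 ((V ⊓ W).topIso.inv x)
    refine ⟨u, (congrArg (V ⊓ W).topIso.hom hu).trans ?_⟩
    exact congr($((V ⊓ W).topIso.inv_hom_id) x)
  have hu := mem_closure_range_union_range_of_isPushout
    (isPushout_appTop_of_isPullback (IsPullback.of_hasPullback _ _)) u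
  rw [← Subring.mem_comap]
  refine Subring.closure_le.mpr ?_ hu
  rintro _ (⟨a, rfl⟩ | ⟨a, rfl⟩)
  · exact Subring.subset_closure (Or.inl ⟨V.topIso.hom a, congr($(hres _ _ hδV) a).symm⟩)
  · exact Subring.subset_closure (Or.inr ⟨W.topIso.hom a, congr($(hres _ _ hδW) a).symm⟩)

/-- The `R`-algebra structure on the sections over `V` of a scheme `p : X ⟶ Spec R`. -/
def structureRingHom (p : X ⟶ Spec (.of R)) (V : X.Opens) : R →+* Γ(X, V) :=
  ((Scheme.ΓSpecIso (.of R)).inv ≫ p.appTop ≫ X.presheaf.map (homOfLE le_top).op).hom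

lemma presheaf_map_structureRingHom (p : X ⟶ Spec (.of R)) {V V' : X.Opens} (h : V' ≤ V)
    (c : R) : X.presheaf.map (homOfLE h).op (structureRingHom p V c) = structureRingHom p V' c := by
  have hres : X.presheaf.map (homOfLE (le_top : V ≤ ⊤)).op ≫ X.presheaf.map (homOfLE h).op =
      X.presheaf.map (homOfLE le_top).op := (X.presheaf.map_comp _ _).symm
  exact congr($hres (p.appTop ((Scheme.ΓSpecIso (.of R)).inv c)))

lemma appLE_structureRingHom {X' : Scheme} {p : X ⟶ Spec (.of R)} {p' : X' ⟶ Spec (.of S)}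
    {f : X' ⟶ X} {φ : R →+* S} (h : f ≫ p = p' ≫ specMap φ) {V : X.Opens} {V' : X'.Opens}
    (hV : V' ≤ f ⁻¹ᵁ V) (c : R) :
    f.appLE V V' hV (structureRingHom p V c) = structureRingHom p' V' (φ c) := by
  have hres : X.presheaf.map (homOfLE (le_top : V ≤ ⊤)).op ≫ f.appLE V V' hV =
      f.appTop ≫ X'.presheaf.map (homOfLE le_top).op := by
    rw [Scheme.Hom.map_appLE]
    rfl
  have htop : p.appTop ≫ f.appTop = (specMap φ).appTop ≫ p'.appTop := by
    rw [← Scheme.Hom.comp_appTop, h, Scheme.Hom.comp_appTop]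
  have hnat : (Scheme.ΓSpecIso (.of R)).inv ≫ p.appTop ≫
      X.presheaf.map (homOfLE (le_top : V ≤ ⊤)).op ≫ f.appLE V V' hV = CommRingCat.ofHom φ ≫
        (Scheme.ΓSpecIso (.of S)).inv ≫ p'.appTop ≫ X'.presheaf.map (homOfLE le_top).op := by
    rw [hres, reassoc_of% htop]
    exact (Scheme.ΓSpecIso_inv_naturality_assoc (CommRingCat.ofHom φ) _).symm
  exact congr($hnat c)

lemma toSpecΓ_SpecMap_structureRingHom (p : X ⟶ Spec (.of R)) (V : X.Opens) :
    V.toSpecΓ ≫ specMap (structureRingHom p V) = V.ι ≫ p := by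
  rw [specMap, structureRingHom, CommRingCat.ofHom_hom, Spec.map_comp, Spec.map_comp,
    Category.assoc, Scheme.Opens.toSpecΓ_SpecMap_presheaf_map_top_assoc,
    ← Scheme.toSpecΓ_naturality_assoc, toSpecΓ_SpecMap_ΓSpecIso_inv, Category.comp_id]

end

namespace DescentDatum

variable {X : Scheme} {p : X ⟶ Spec (.of K)} (D : DescentDatum k K X p)

lemma act_hom_comp_act_hom (σ τ : K ≃ₐ[k] K) :
    (D.act σ).hom ≫ (D.act τ).hom = (D.act (τ * σ)).hom := by
  rw [map_mul]
  rfl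

lemma appLE_act_structureRingHom (σ : K ≃ₐ[k] K) {V W : X.Opens} (h : W ≤ (D.act σ).hom ⁻¹ᵁ V)
    (c : K) : (D.act σ).hom.appLE V W h (structureRingHom p V c) =
      structureRingHom p W ((σ⁻¹ : K ≃ₐ[k] K) c) :=
  appLE_structureRingHom (D.compat σ) h c

/-- The sections over `V` invariant under those elements of `N` which preserve `V`. -/
def invariantSections (N : Subgroup (K ≃ₐ[k] K)) (V : X.Opens) : Subring Γ(X, V) where
  carrier := {s | ∀ σ ∈ N, ∀ h : V ≤ (D.act σ).hom ⁻¹ᵁ V, (D.act σ).hom.appLE V V h s = s}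
  zero_mem' _ _ _ := map_zero _
  one_mem' _ _ _ := map_one _
  add_mem' ha hb σ hσ h := (map_add _ _ _).trans (congrArg₂ _ (ha σ hσ h) (hb σ hσ h))
  mul_mem' ha hb σ hσ h := (map_mul _ _ _).trans (congrArg₂ _ (ha σ hσ h) (hb σ hσ h))
  neg_mem' ha σ hσ h := (map_neg _ _).trans (congrArg _ (ha σ hσ h))

lemma presheaf_map_mem_invariantSections {N : Subgroup (K ≃ₐ[k] K)} {V W : X.Opens} (h : W ≤ V)
    (hV : ∀ σ ∈ N, V ≤ (D.act σ).hom ⁻¹ᵁ V) {s : Γ(X, V)} (hs : s ∈ D.invariantSections N V) :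
    X.presheaf.map (homOfLE h).op s ∈ D.invariantSections N W := by
  intro σ hσ hW
  have hcomm : X.presheaf.map (homOfLE h).op ≫ (D.act σ).hom.appLE W W hW =
      (D.act σ).hom.appLE V V (hV σ hσ) ≫ X.presheaf.map (homOfLE h).op := by
    rw [Scheme.Hom.map_appLE, Scheme.Hom.appLE_map]
  refine congr($hcomm s).trans ?_
  exact congrArg (X.presheaf.map (homOfLE h).op).hom (hs σ hσ (hV σ hσ))

/-- The affine opens stable under `N` over which the scalars and the `N`-invariants generate all
sections: these are the ones which descend to the fixed field of `N`. -/
structure IsAdmissible (N : Subgroup (K ≃ₐ[k] K)) (V : X.Opens) : Prop where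
  isAffineOpen : IsAffineOpen V
  le_preimage : ∀ σ ∈ N, V ≤ (D.act σ).hom ⁻¹ᵁ V
  closure_eq_top :
    Subring.closure (Set.range (structureRingHom p V) ∪ D.invariantSections N V) = ⊤

variable {D} {N : Subgroup (K ≃ₐ[k] K)} {V W : X.Opens}

lemma IsAdmissible.map_mem (hV : D.IsAdmissible N V) {B : Type*} [CommRing B] {φ : Γ(X, V) →+* B}
    {T : Subring B} (hK : ∀ c, φ (structureRingHom p V c) ∈ T)
    (hN : ∀ s ∈ D.invariantSections N V, φ s ∈ T) (a : Γ(X, V)) : φ a ∈ T := by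
  have hle : Subring.closure _ ≤ T.comap φ :=
    Subring.closure_le.mpr (Set.union_subset (Set.range_subset_iff.mpr hK) hN)
  exact hle (hV.closure_eq_top ▸ Subring.mem_top a)

lemma IsAdmissible.inf [X.IsSeparated] (hV : D.IsAdmissible N V) (hW : D.IsAdmissible N W) :
    D.IsAdmissible N (V ⊓ W) := by
  have hres : ∀ {V U : X.Opens} (hU : U ≤ V), D.IsAdmissible N V → ∀ a : Γ(X, V),
      X.presheaf.map (homOfLE hU).op a ∈
        Subring.closure (Set.range (structureRingHom p U) ∪ D.invariantSections N U) := by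
    refine fun hU hV => hV.map_mem (φ := (X.presheaf.map (homOfLE hU).op).hom) ?_ ?_
    · exact fun c => Subring.subset_closure
        (Or.inl ⟨c, (presheaf_map_structureRingHom p hU c).symm⟩)
    · exact fun s hs => Subring.subset_closure
        (Or.inr (D.presheaf_map_mem_invariantSections hU hV.le_preimage hs))
  refine ⟨hV.isAffineOpen.inf hW.isAffineOpen, fun σ hσ x hx =>
    ⟨hV.le_preimage σ hσ hx.1, hW.le_preimage σ hσ hx.2⟩, eq_top_iff.mpr fun x _ => ?_⟩
  refine Subring.closure_le.mpr ?_
    (mem_closure_range_presheaf_map_of_isSeparated hV.isAffineOpen hW.isAffineOpen x)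
  rintro _ (⟨a, rfl⟩ | ⟨a, rfl⟩)
  · exact hres inf_le_left hV a
  · exact hres inf_le_right hW a

lemma IsAdmissible.preimage_act [N.Normal] (hV : D.IsAdmissible N V) (σ : K ≃ₐ[k] K) :
    D.IsAdmissible N ((D.act σ).hom ⁻¹ᵁ V) := by
  have : IsIso (D.act σ).hom := Iso.isIso_hom (D.act σ : X ≅ X)
  have hcomm : ∀ τ,
      (D.act τ).hom ≫ (D.act σ).hom = (D.act σ).hom ≫ (D.act (σ * τ * σ⁻¹)).hom := fun τ => by
    rw [act_hom_comp_act_hom, act_hom_comp_act_hom, inv_mul_cancel_right]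
  have hconj : ∀ τ ∈ N, σ * τ * σ⁻¹ ∈ N := fun τ hτ => Subgroup.Normal.conj_mem ‹_› τ hτ σ
  refine ⟨hV.isAffineOpen.preimage_of_isIso _, fun τ hτ => ?_, eq_top_iff.mpr fun x _ => ?_⟩
  · rw [← Scheme.Hom.comp_preimage, hcomm, Scheme.Hom.comp_preimage]
    exact fun x hx => hV.le_preimage _ (hconj τ hτ) hx
  let φ := ((D.act σ).hom.appLE V ((D.act σ).hom ⁻¹ᵁ V) le_rfl).hom
  obtain ⟨a, rfl⟩ : ∃ a, φ a = x := by
    refine ⟨inv ((D.act σ).hom.app V) x, ?_⟩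
    simp only [φ, Scheme.Hom.appLE_eq_app]
    exact congr($(IsIso.inv_hom_id ((D.act σ).hom.app V)) x)
  refine hV.map_mem (φ := φ) (fun c => Subring.subset_closure (Or.inl ⟨_,
    (D.appLE_act_structureRingHom σ le_rfl c).symm⟩)) (fun s hs => Subring.subset_closure
      (Or.inr fun τ hτ h => ?_)) a
  have hVτ := hV.le_preimage _ (hconj τ hτ)
  have happ : (D.act σ).hom.appLE V ((D.act σ).hom ⁻¹ᵁ V) le_rfl ≫ (D.act τ).hom.appLE _ _ h =
      (D.act (σ * τ * σ⁻¹)).hom.appLE V V hVτ ≫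
        (D.act σ).hom.appLE V ((D.act σ).hom ⁻¹ᵁ V) le_rfl := by
    rw [Scheme.Hom.appLE_comp_appLE, Scheme.Hom.appLE_comp_appLE]
    simp only [hcomm]
  exact congr($happ s).trans (congrArg φ (hs _ (hconj τ hτ) hVτ))

lemma isAdmissible_preimage {F : Type} [CommRing F] [Algebra F K] {Y : Scheme}
    {q : Y ⟶ Spec (.of F)} {r : X ⟶ Y} (hr : IsPullback r p q (specMap (algebraMap F K)))
    (hN : ∀ τ ∈ N, (D.act τ).hom ≫ r = r) {U : Y.Opens} (hU : IsAffineOpen U) :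
    D.IsAdmissible N (r ⁻¹ᵁ U) := by
  have : IsAffineHom r := MorphismProperty.of_isPullback hr.flip
    (inferInstance : IsAffineHom (specMap (algebraMap F K)))
  refine ⟨hU.preimage r, fun τ hτ => ?_, eq_top_iff.mpr fun x _ => ?_⟩
  · rw [← Scheme.Hom.comp_preimage, hN τ hτ]
  have hpush := (isIso_pushoutSection_iff hr (US := ⊤) (UT := ⊤) (UX := U) (UY := r ⁻¹ᵁ U)
    le_top le_top (by simp)).mp (isIso_pushoutSection_of_isAffineOpen hr le_top le_top (by simp)
    (isAffineOpen_top _) (isAffineOpen_top _) hU)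
  refine Subring.closure_le.mpr ?_ (mem_closure_range_union_range_of_isPushout hpush x)
  rintro _ (⟨a, rfl⟩ | ⟨c, rfl⟩)
  · refine Subring.subset_closure (Or.inr fun τ hτ h => ?_)
    have happ : r.appLE U (r ⁻¹ᵁ U) le_rfl ≫ (D.act τ).hom.appLE _ _ h =
        r.appLE U (r ⁻¹ᵁ U) le_rfl := by
      rw [Scheme.Hom.appLE_comp_appLE]
      simp only [hN τ hτ]
    exact congr($happ a)
  · obtain ⟨c, rfl⟩ : ∃ d : K, (Scheme.ΓSpecIso (.of K)).inv d = c :=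
      ⟨(Scheme.ΓSpecIso (.of K)).hom c, by simp⟩
    exact Subring.subset_closure (Or.inl ⟨c, rfl⟩)

/- Intersect the translates of `V` by representatives of the classes modulo `N`. -/
lemma IsAdmissible.exists_stable [X.IsSeparated] [N.Normal] [N.FiniteIndex]
    (hV : D.IsAdmissible N V) :
    ∃ W : X.Opens, D.IsAdmissible N W ∧ (∀ σ, W ≤ (D.act σ).hom ⁻¹ᵁ W) ∧
      ∀ x, (∀ g : (K ≃ₐ[k] K) ⧸ N, (D.act g.out).hom x ∈ V) → x ∈ W := by
  let W : X.Opens := ⨅ g : (K ≃ₐ[k] K) ⧸ N, (D.act g.out).hom ⁻¹ᵁ V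
  have hmem : ∀ x, x ∈ W ↔ ∀ g : (K ≃ₐ[k] K) ⧸ N, (D.act g.out).hom x ∈ V := fun x => by
    rw [← SetLike.mem_coe, TopologicalSpace.Opens.coe_iInf, Set.mem_iInter]
    rfl
  have hmem_all : ∀ x ∈ W, ∀ σ, (D.act σ).hom x ∈ V := by
    intro x hx σ
    let ρ := (QuotientGroup.mk σ : (K ≃ₐ[k] K) ⧸ N).out
    have hρ : σ * ρ⁻¹ ∈ N :=
      Subgroup.Normal.mem_comm ‹_› (QuotientGroup.eq.mp (QuotientGroup.out_eq' _))
    rw [← inv_mul_cancel_right σ ρ, ← act_hom_comp_act_hom]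
    exact hV.le_preimage _ hρ ((hmem x).mp hx _)
  refine ⟨W, ?_, fun σ x hx => (hmem _).mpr fun g => ?_, fun x hx => (hmem x).mpr hx⟩
  · exact InfClosed.iInf_mem_of_nonempty (s := Set.ofPred (D.IsAdmissible N))
      (fun _ h _ h' => h.inf h') fun g => hV.preimage_act g.out
  · rw [← Scheme.Hom.comp_apply, act_hom_comp_act_hom]
    exact hmem_all x hx _

lemma exists_isAdmissible_stable {F : Type} [CommRing F] [Algebra F K] [X.IsSeparated]
    [N.Normal] [N.FiniteIndex] {Y : Scheme} {q : Y ⟶ Spec (.of F)} (hq : QuasiProjectiveOver F q)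
    {r : X ⟶ Y} (hr : IsPullback r p q (specMap (algebraMap F K)))
    (hN : ∀ τ ∈ N, (D.act τ).hom ≫ r = r) (x : X) :
    ∃ V : X.Opens, x ∈ V ∧ D.IsAdmissible N V ∧ ∀ σ, V ≤ (D.act σ).hom ⁻¹ᵁ V := by
  obtain ⟨U, hU, hxU⟩ := hq.exists_isAffineOpen_forall_mem
    fun g : (K ≃ₐ[k] K) ⧸ N => r ((D.act g.out).hom x)
  obtain ⟨V, hV, hstable, hxV⟩ := (isAdmissible_preimage hr hN hU).exists_stable
  exact ⟨V, hxV x hxU, hV, hstable⟩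

end DescentDatum

namespace DescentDatum

variable {X : Scheme} {p : X ⟶ Spec (.of K)} (D : DescentDatum k K X p) (V : X.Opens)

/-- The algebra structure over the base field `k` of the sections invariant under all of
`Aut(K/k)`. -/
def invariantsAlgebraMap : k →+* D.invariantSections ⊤ V :=
  ((structureRingHom p V).comp (algebraMap k K)).codRestrict _ fun c σ _ h =>
    (D.appLE_act_structureRingHom σ h _).trans (congrArg _ ((σ⁻¹ : K ≃ₐ[k] K).commutes c))

/-- The projection from `V` to the spectrum of the invariant sections, the candidate for the
descent of `V` to `k`. -/
def toSpecInvariants : V.toScheme ⟶ Spec (.of (D.invariantSections ⊤ V)) :=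
  V.toSpecΓ ≫ specMap (D.invariantSections ⊤ V).subtype

lemma resLE_act_comp_toSpecInvariants (σ : K ≃ₐ[k] K) (hV : V ≤ (D.act σ).hom ⁻¹ᵁ V) :
    (D.act σ).hom.resLE V V hV ≫ D.toSpecInvariants V = D.toSpecInvariants V := by
  have hsub : CommRingCat.ofHom (D.invariantSections ⊤ V).subtype ≫ (D.act σ).hom.appLE V V hV =
      CommRingCat.ofHom (D.invariantSections ⊤ V).subtype := by
    ext a
    exact a.2 σ (Subgroup.mem_top σ) hV
  rw [toSpecInvariants, ← Scheme.Opens.toSpecΓ_SpecMap_appLE_assoc, specMap, ← Spec.map_comp, hsub]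

variable {V}

/-- The action of `Aut(K/k)` on the sections over a stable open. -/
def sectionsAction (hV : ∀ σ, V ≤ (D.act σ).hom ⁻¹ᵁ V) :
    (K ≃ₐ[k] K) →* (Γ(X, V) →+* Γ(X, V)) where
  toFun σ := ((D.act σ⁻¹).hom.appLE V V (hV σ⁻¹)).hom
  map_one' := by
    have hone : (D.act (1 : K ≃ₐ[k] K)⁻¹).hom = 𝟙 X := by
      rw [inv_one, map_one]
      rfl
    simp only [hone]
    exact congrArg CommRingCat.Hom.hom ((𝟙 X : X ⟶ X).app_eq_appLE (U := V)).symm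
  map_mul' σ τ := by
    have hcomp : (D.act τ⁻¹).hom.appLE V V (hV τ⁻¹) ≫ (D.act σ⁻¹).hom.appLE V V (hV σ⁻¹) =
        (D.act (σ * τ)⁻¹).hom.appLE V V (hV _) := by
      rw [Scheme.Hom.appLE_comp_appLE]
      simp only [act_hom_comp_act_hom, mul_inv_rev]
    exact congrArg CommRingCat.Hom.hom hcomp.symm

lemma sectionsAction_structureRingHom (hV : ∀ σ, V ≤ (D.act σ).hom ⁻¹ᵁ V) (σ : K ≃ₐ[k] K) (c : K) :
    D.sectionsAction hV σ (structureRingHom p V c) = structureRingHom p V (σ c) :=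
  (D.appLE_act_structureRingHom σ⁻¹ (hV σ⁻¹) c).trans (by rw [inv_inv])

lemma mem_invariantSections_iff_sectionsAction (hV : ∀ σ, V ≤ (D.act σ).hom ⁻¹ᵁ V)
    {N : Subgroup (K ≃ₐ[k] K)} {s : Γ(X, V)} :
    s ∈ D.invariantSections N V ↔ ∀ σ ∈ N, D.sectionsAction hV σ s = s := by
  refine ⟨fun hs σ hσ => hs σ⁻¹ (inv_mem hσ) (hV σ⁻¹), fun hs σ hσ h => ?_⟩
  obtain ⟨τ, rfl⟩ : ∃ τ, σ = τ⁻¹ := ⟨σ⁻¹, (inv_inv σ).symm⟩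
  exact hs τ (inv_mem_iff.mp hσ)

variable {D}

lemma IsAdmissible.isPushout_invariants [Algebra.IsInvariant k K (K ≃ₐ[k] K)]
    (k' : IntermediateField k K) [FiniteDimensional k k']
    (hV : D.IsAdmissible k'.fixingSubgroup V) (hstable : ∀ σ, V ≤ (D.act σ).hom ⁻¹ᵁ V) :
    IsPushout (CommRingCat.ofHom (D.invariantsAlgebraMap V))
      (CommRingCat.ofHom (algebraMap k K))
      (CommRingCat.ofHom (D.invariantSections ⊤ V).subtype)
      (CommRingCat.ofHom (structureRingHom p V)) := by
  let : Algebra K Γ(X, V) := (structureRingHom p V).toAlgebra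
  let : Algebra k Γ(X, V) := ((structureRingHom p V).comp (algebraMap k K)).toAlgebra
  have : IsScalarTower k K Γ(X, V) := .of_algebraMap_eq fun _ => rfl
  let : MulSemiringAction (K ≃ₐ[k] K) Γ(X, V) :=
    MulSemiringAction.compHom _ (D.sectionsAction hstable)
  have : SMulDistribClass (K ≃ₐ[k] K) K Γ(X, V) := ⟨fun σ c a => by
    rw [Algebra.smul_def, Algebra.smul_def, MulSemiringAction.smul_mul]
    exact congrArg (· * _) (D.sectionsAction_structureRingHom hstable σ c)⟩
  have : SMulCommClass (K ≃ₐ[k] K) k Γ(X, V) := ⟨fun σ c a => by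
    rw [← algebraMap_smul K c a, ← algebraMap_smul K c (σ • a), smul_distrib_smul]
    exact congrArg (· • σ • a) (σ.commutes c)⟩
  have hspan : Submodule.span K (MulAction.fixedPoints (K ≃ₐ[k] K) Γ(X, V)) = ⊤ := by
    refine span_fixedPoints_eq_top k' (eq_top_iff.mpr ?_)
    rw [← hV.closure_eq_top]
    refine Subring.closure_mono (Set.union_subset_union_right _ fun s hs σ => ?_)
    exact (D.mem_invariantSections_iff_sectionsAction hstable).mp hs σ σ.2
  let B : Subalgebra k Γ(X, V) :=
    { D.invariantSections ⊤ V with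
      algebraMap_mem' := fun c => (D.invariantsAlgebraMap V c).2 }
  have hB : FixedPoints.subalgebra k Γ(X, V) (K ≃ₐ[k] K) = B := by
    ext s
    exact ⟨fun hs => (D.mem_invariantSections_iff_sectionsAction hstable).mpr fun σ _ => hs σ,
      fun hs σ => (D.mem_invariantSections_iff_sectionsAction hstable).mp hs σ (Subgroup.mem_top σ)⟩
  have hpush : Algebra.IsPushout k K B Γ(X, V) := hB ▸ isPushout_fixedPoints hspan
  exact (CommRingCat.isPushout_of_isPushout k K B Γ(X, V)).flip

lemma IsAdmissible.isPullback_toSpecInvariants [Algebra.IsInvariant k K (K ≃ₐ[k] K)]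
    (k' : IntermediateField k K) [FiniteDimensional k k']
    (hV : D.IsAdmissible k'.fixingSubgroup V) (hstable : ∀ σ, V ≤ (D.act σ).hom ⁻¹ᵁ V) :
    IsPullback (D.toSpecInvariants V) (V.ι ≫ p) (specMap (D.invariantsAlgebraMap V))
      (specMap (algebraMap k K)) := by
  have hiso : IsIso V.toSpecΓ := by
    rw [← hV.isAffineOpen.isoSpec_hom]
    infer_instance
  have hV_spec : IsPullback V.toSpecΓ (V.ι ≫ p) (specMap (structureRingHom p V)) (𝟙 _) :=
    IsPullback.of_horiz_isIso ⟨by rw [toSpecΓ_SpecMap_structureRingHom, Category.comp_id]⟩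
  have hpaste := hV_spec.paste_horiz
    (isPullback_SpecMap_of_isPushout _ _ _ _ (hV.isPushout_invariants k' hstable))
  rwa [Category.id_comp] at hpaste

end DescentDatum

/-! ### Gluing descended charts -/

section

variable {X S S₀ : Scheme.{0}}

lemma exists_apply_eq_of_isPullback {W Y Z : Scheme} {a : W ⟶ X} {b : W ⟶ Y} {f : X ⟶ Z}
    {g : Y ⟶ Z} (h : IsPullback a b f g) {x : X} {y : Y} (hxy : f x = g y) :
    ∃ w, a w = x ∧ b w = y := by
  obtain ⟨w, hx, hy⟩ := Scheme.Pullback.exists_preimage_pullback x y hxy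
  refine ⟨h.isoPullback.inv w, ?_, ?_⟩
  · rw [← hx, ← Scheme.Hom.comp_apply, IsPullback.isoPullback_inv_fst]
  · rw [← hy, ← Scheme.Hom.comp_apply, IsPullback.isoPullback_inv_snd]

/-- The open cover of `X` by the members of a set of opens. -/
def openCoverOfSet {J : Set X.Opens} (hcover : ∀ x : X, ∃ V ∈ J, x ∈ V) : X.OpenCover :=
  Scheme.Cover.mkOfCovers J (fun V => V.1.toScheme) (fun V => V.1.ι)
    (fun x => have ⟨V, hV, hx⟩ := hcover x; ⟨⟨V, hV⟩, ⟨x, hx⟩, rfl⟩) fun _ => inferInstance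

lemma exists_ι_comp_eq_of_infClosed {Z : Scheme} {J : Set X.Opens} (hJ : InfClosed J)
    (hcover : ∀ x : X, ∃ V ∈ J, x ∈ V) (g : ∀ V : J, V.1.toScheme ⟶ Z)
    (hg : ∀ {V W : J} (h : V.1 ≤ W.1), X.homOfLE h ≫ g W = g V) :
    ∃ π : X ⟶ Z, ∀ V : J, V.1.ι ≫ π = g V := by
  refine ⟨(openCoverOfSet hcover).glueMorphisms g fun V W => ?_,
    fun V => Scheme.Cover.ι_glueMorphisms (openCoverOfSet hcover) _ _ V⟩
  let VW : J := ⟨V.1 ⊓ W.1, hJ V.2 W.2⟩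
  change pullback.fst V.1.ι W.1.ι ≫ g V = pullback.snd V.1.ι W.1.ι ≫ g W
  rw [← cancel_epi (isPullback_opens_inf V.1 W.1).isoPullback.hom,
    IsPullback.isoPullback_hom_fst_assoc, IsPullback.isoPullback_hom_snd_assoc]
  exact (hg (V := VW) inf_le_left).trans (hg (V := VW) inf_le_right).symm

/-- Compatible descents along `a : S ⟶ S₀` of the members of a set `J` of open subschemes of an
`S`-scheme `p : X ⟶ S`: the charts of a descent of `X` itself. -/
structure DescentCharts (p : X ⟶ S) (a : S ⟶ S₀) (J : Set X.Opens) where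
  chart : J ⥤ Scheme.{0}
  str (V : J) : chart.obj V ⟶ S₀
  map_str {V W : J} (f : V ⟶ W) : chart.map f ≫ str W = str V
  proj (V : J) : V.1.toScheme ⟶ chart.obj V
  proj_map {V W : J} (f : V ⟶ W) : proj V ≫ chart.map f = X.homOfLE (leOfHom f) ≫ proj W
  isPullback_proj (V : J) : IsPullback (proj V) (V.1.ι ≫ p) (str V) a

namespace DescentCharts

variable {p : X ⟶ S} {a : S ⟶ S₀} {J : Set X.Opens} (C : DescentCharts p a J) {V W : J}

lemma isPullback_map (f : V ⟶ W) :
    IsPullback (C.proj V) (X.homOfLE (leOfHom f)) (C.chart.map f) (C.proj W) := by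
  refine IsPullback.of_bot ?_ (C.proj_map f) (C.isPullback_proj W)
  rw [C.map_str f, ← Category.assoc, Scheme.homOfLE_ι]
  exact C.isPullback_proj V

lemma exists_proj_eq (f : V ⟶ W) {u : C.chart.obj V} {w : W.1.toScheme}
    (h : C.chart.map f u = C.proj W w) : ∃ v : V.1.toScheme, C.proj V v = u ∧ v.1 = w.1 := by
  obtain ⟨v, hv, hvw⟩ := exists_apply_eq_of_isPullback (C.isPullback_map f) h
  exact ⟨v, hv, (Scheme.homOfLE_apply (leOfHom f) v).symm.trans (congrArg Subtype.val hvw)⟩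

lemma map_proj_apply (f : V ⟶ W) {v : V.1.toScheme} {w : W.1.toScheme} (h : v.1 = w.1) :
    C.chart.map f (C.proj V v) = C.proj W w := by
  have hvw : X.homOfLE (leOfHom f) v = w :=
    Subtype.ext ((Scheme.homOfLE_apply (leOfHom f) v).trans h)
  rw [← Scheme.Hom.comp_apply, C.proj_map f, Scheme.Hom.comp_apply, hvw]

lemma surjective_proj [Surjective a] (V : J) : Surjective (C.proj V) :=
  MorphismProperty.of_isPullback (P := @Surjective) (C.isPullback_proj V).flip ‹_›

lemma isOpenImmersion_map [Flat a] [Surjective a] [QuasiCompact a] (f : V ⟶ W) :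
    IsOpenImmersion (C.chart.map f) := by
  have hflat : Flat (C.proj W) :=
    MorphismProperty.of_isPullback (P := @Flat) (C.isPullback_proj W).flip ‹_›
  have hqc : QuasiCompact (C.proj W) :=
    MorphismProperty.of_isPullback (P := @QuasiCompact) (C.isPullback_proj W).flip ‹_›
  exact MorphismProperty.of_isPullback_of_descendsAlong (P := @IsOpenImmersion)
    (Q := @Surjective ⊓ @Flat ⊓ @QuasiCompact) (C.isPullback_map f).flip
    ⟨⟨C.surjective_proj W, hflat⟩, hqc⟩ inferInstance

lemma isLocallyDirected [Surjective a] (hJ : InfClosed J) :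
    (C.chart ⋙ Scheme.forget).IsLocallyDirected where
  cond {V W U} f g v w h := by
    obtain ⟨u, hu⟩ := (C.surjective_proj U).surj (C.chart.map f v)
    obtain ⟨v', hv', hvu⟩ := C.exists_proj_eq f hu.symm
    obtain ⟨w', hw', hwu⟩ := C.exists_proj_eq g (h.symm.trans hu.symm)
    let VW : J := ⟨V.1 ⊓ W.1, hJ V.2 W.2⟩
    let uVW : VW.1.toScheme := ⟨u.1, hvu ▸ v'.2, hwu ▸ w'.2⟩
    exact ⟨VW, homOfLE (show V.1 ⊓ W.1 ≤ V.1 from inf_le_left),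
      homOfLE (show V.1 ⊓ W.1 ≤ W.1 from inf_le_right), C.proj VW uVW,
      (C.map_proj_apply (v := uVW) _ hvu.symm).trans hv',
      (C.map_proj_apply (v := uVW) _ hwu.symm).trans hw'⟩

theorem exists_isPullback [Flat a] [Surjective a] [QuasiCompact a] (hJ : InfClosed J)
    (hcover : ∀ x : X, ∃ V ∈ J, x ∈ V) :
    ∃ (X₀ : Scheme.{0}) (q : X₀ ⟶ S₀) (π : X ⟶ X₀), IsPullback π p q a ∧
      ∀ V : J, ∃ c : C.chart.obj V ⟶ X₀, V.1.ι ≫ π = C.proj V ≫ c := by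
  have hopen {V W : J} (f : V ⟶ W) := C.isOpenImmersion_map f
  have hdir := C.isLocallyDirected hJ
  let c (V : J) : C.chart.obj V ⟶ colimit C.chart := colimit.ι C.chart V
  let q : colimit C.chart ⟶ S₀ := colimit.desc C.chart
    ⟨S₀, ⟨C.str, fun _ _ f => (C.map_str f).trans (Category.comp_id _).symm⟩⟩
  obtain ⟨π, hπ⟩ := exists_ι_comp_eq_of_infClosed hJ hcover (fun V => C.proj V ≫ c V)
    fun {V W} h => by
      rw [← reassoc_of% C.proj_map (homOfLE h : V ⟶ W)]
      exact congrArg (C.proj V ≫ ·) (colimit.w C.chart _)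
  have hπ_apply (V : J) (v : V.1.toScheme) : π v.1 = c V (C.proj V v) := congr($(hπ V) v)
  refine ⟨colimit C.chart, q, π, ?_, fun V => ⟨c V, hπ V⟩⟩
  refine isPullback_of_isOpenImmersion_cover _ _ c
    (Scheme.IsLocallyDirected.ι_jointly_surjective C.chart) (fun V => V.1.ι) C.proj
    (fun V => (IsOpenImmersion.isPullback _ _ _ _ (hπ V) ?_).flip) fun V => ?_
  · ext x
    constructor
    · rintro ⟨v, hv⟩
      obtain ⟨W, hW, hx⟩ := hcover x
      obtain ⟨U, f, g, u, hu, -⟩ := (Scheme.IsLocallyDirected.ι_eq_ι_iff C.chart).mp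
        ((hπ_apply ⟨W, hW⟩ ⟨x, hx⟩).symm.trans hv.symm)
      obtain ⟨u', -, hu'⟩ := C.exists_proj_eq f hu
      have hxU : x ∈ U.1 := (show u'.1 = x from hu') ▸ u'.2
      exact ⟨⟨x, leOfHom g hxU⟩, rfl⟩
    · rintro ⟨v, rfl⟩
      exact ⟨C.proj V v, (hπ_apply V v).symm⟩
  · rw [show c V ≫ q = C.str V from colimit.ι_desc _ V]
    exact C.isPullback_proj V

end DescentCharts

end

/-! ### Effectivity -/

lemma comp_isoPullback_hom_eq_comp_map {C : Type*} [Category* C] {X X₀ S S₀ : C} {π : X ⟶ X₀}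
    {p : X ⟶ S} {q : X₀ ⟶ S₀} {a : S ⟶ S₀} [HasPullback q a] (h : IsPullback π p q a) {d : X ⟶ X}
    {g : S ⟶ S} (hπ : d ≫ π = π) (hp : d ≫ p = p ≫ g) (ha : a ≫ 𝟙 S₀ = g ≫ a) :
    d ≫ h.isoPullback.hom =
      h.isoPullback.hom ≫ pullback.map q a q a (𝟙 X₀) g (𝟙 S₀) (by simp) ha := by
  apply pullback.hom_ext
  · rw [Category.assoc, Category.assoc, pullback.map, pullback.lift_fst, Category.comp_id,
      IsPullback.isoPullback_hom_fst, hπ]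
  · rw [Category.assoc, Category.assoc, pullback.map, pullback.lift_snd,
      IsPullback.isoPullback_hom_snd, hp, IsPullback.isoPullback_hom_snd_assoc]

namespace DescentDatum

variable {X : Scheme.{0}} {p : X ⟶ Spec (.of K)} (D : DescentDatum k K X p)

/-- The admissible opens for `N` which are stable under the whole of `Aut(K/k)`. -/
def stableAdmissibleOpens (N : Subgroup (K ≃ₐ[k] K)) : Set X.Opens :=
  {V | D.IsAdmissible N V ∧ ∀ σ, V ≤ (D.act σ).hom ⁻¹ᵁ V}

lemma infClosed_stableAdmissibleOpens [X.IsSeparated] (N : Subgroup (K ≃ₐ[k] K)) :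
    InfClosed (D.stableAdmissibleOpens N) :=
  fun _ hV _ hW => ⟨hV.1.inf hW.1, fun σ _ hx => ⟨hV.2 σ hx.1, hW.2 σ hx.2⟩⟩

/-- The restriction of invariant sections from a stable open. -/
def restrictInvariants {V W : X.Opens} (h : V ≤ W) (hW : ∀ σ, W ≤ (D.act σ).hom ⁻¹ᵁ W) :
    D.invariantSections ⊤ W →+* D.invariantSections ⊤ V :=
  ((X.presheaf.map (homOfLE h).op).hom.comp (D.invariantSections ⊤ W).subtype).codRestrict _
    fun s => D.presheaf_map_mem_invariantSections h (fun σ _ => hW σ) s.2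

lemma restrictInvariants_comp_invariantsAlgebraMap {V W : X.Opens} (h : V ≤ W)
    (hW : ∀ σ, W ≤ (D.act σ).hom ⁻¹ᵁ W) :
    (D.restrictInvariants h hW).comp (D.invariantsAlgebraMap W) = D.invariantsAlgebraMap V :=
  RingHom.ext fun c => Subtype.ext (presheaf_map_structureRingHom p h (algebraMap k K c))

lemma toSpecInvariants_comp_specMap_restrictInvariants {V W : X.Opens} (h : V ≤ W)
    (hW : ∀ σ, W ≤ (D.act σ).hom ⁻¹ᵁ W) :
    D.toSpecInvariants V ≫ specMap (D.restrictInvariants h hW) =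
      X.homOfLE h ≫ D.toSpecInvariants W := by
  rw [toSpecInvariants, toSpecInvariants, Category.assoc, specMap_comp_specMap,
    ← reassoc_of% Scheme.Opens.toSpecΓ_SpecMap_presheaf_map V W h, specMap, specMap,
    ← Spec.map_comp]
  rfl

/-- The functor sending a stable admissible open to the spectrum of its invariant sections. -/
def invariantsChart (N : Subgroup (K ≃ₐ[k] K)) : D.stableAdmissibleOpens N ⥤ Scheme.{0} where
  obj V := Spec (.of (D.invariantSections ⊤ V.1))
  map {_ W} f := specMap (D.restrictInvariants (leOfHom f) W.2.2)
  map_id V := by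
    have hid : D.restrictInvariants (leOfHom (𝟙 V)) V.2.2 = RingHom.id _ :=
      RingHom.ext fun s => Subtype.ext congr($(X.presheaf.map_id (.op V.1)) s.1)
    rw [hid]
    exact Spec.map_id _
  map_comp {V W U} f g := by
    rw [specMap_comp_specMap]
    refine congrArg specMap (RingHom.ext fun s => Subtype.ext ?_)
    have hVW : V.1 ≤ W.1 := leOfHom f
    have hWU : W.1 ≤ U.1 := leOfHom g
    exact congr($(X.presheaf.map_comp (homOfLE hWU).op (homOfLE hVW).op) s.1)

/-- The spectra of the invariant sections over the stable admissible opens, as descents of these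
to `k`. -/
def descentCharts [Algebra.IsInvariant k K (K ≃ₐ[k] K)] (k' : IntermediateField k K)
    [FiniteDimensional k k'] :
    DescentCharts p (specMap (algebraMap k K)) (D.stableAdmissibleOpens k'.fixingSubgroup) where
  chart := D.invariantsChart k'.fixingSubgroup
  str V := specMap (D.invariantsAlgebraMap V.1)
  map_str {_ W} f := (specMap_comp_specMap _ _).trans
    (congrArg specMap (D.restrictInvariants_comp_invariantsAlgebraMap (leOfHom f) W.2.2))
  proj V := D.toSpecInvariants V.1
  proj_map {_ W} f := D.toSpecInvariants_comp_specMap_restrictInvariants (leOfHom f) W.2.2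
  isPullback_proj V := V.2.1.isPullback_toSpecInvariants k' V.2.2

theorem exists_isPullback_forall_act_comp_eq [Algebra.IsInvariant k K (K ≃ₐ[k] K)]
    [X.IsSeparated] (k' : IntermediateField k K) [FiniteDimensional k k'] [Normal k k']
    {Y : Scheme} {q' : Y ⟶ Spec (.of k')} {r : X ⟶ Y} (hq' : QuasiProjectiveOver k' q')
    (hr : IsPullback r p q' (specMap (algebraMap k' K)))
    (hN : ∀ τ ∈ k'.fixingSubgroup, (D.act τ).hom ≫ r = r) :
    ∃ (X₀ : Scheme.{0}) (q : X₀ ⟶ Spec (.of k)) (π : X ⟶ X₀),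
      IsPullback π p q (specMap (algebraMap k K)) ∧ ∀ σ, (D.act σ).hom ≫ π = π := by
  have hker := IntermediateField.restrictNormalHom_ker (K := k) (L := K) k'
  have hnormal : k'.fixingSubgroup.Normal := hker ▸ MonoidHom.normal_ker _
  have hindex : k'.fixingSubgroup.FiniteIndex := hker ▸ Subgroup.finiteIndex_ker _
  have hflat : Flat (specMap (algebraMap k K)) :=
    Flat.SpecMap_iff.mpr (RingHom.flat_algebraMap_iff.mpr inferInstance)
  have hsurj : Surjective (specMap (algebraMap k K)) :=
    ⟨fun _ => ⟨(⊥ : PrimeSpectrum K), Subsingleton.elim (α := PrimeSpectrum k) _ _⟩⟩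
  have hcover (x : X) : ∃ V ∈ D.stableAdmissibleOpens k'.fixingSubgroup, x ∈ V :=
    have ⟨V, hx, hV⟩ := D.exists_isAdmissible_stable hq' hr hN x
    ⟨V, hV, hx⟩
  obtain ⟨X₀, q, π, hπ, hchart⟩ :=
    (D.descentCharts k').exists_isPullback (D.infClosed_stableAdmissibleOpens _) hcover
  refine ⟨X₀, q, π, hπ, fun σ => Scheme.Cover.hom_ext (openCoverOfSet hcover) _ _ fun V => ?_⟩
  change V.1.ι ≫ (D.act σ).hom ≫ π = V.1.ι ≫ π
  obtain ⟨c, hc⟩ := hchart V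
  rw [← reassoc_of% Scheme.Hom.resLE_comp_ι (D.act σ).hom (V.2.2 σ), hc]
  exact (Category.assoc _ _ _).symm.trans
    (congrArg (· ≫ c) (D.resLE_act_comp_toSpecInvariants V.1 σ (V.2.2 σ)))

end DescentDatum

theorem effectivity_of_descent_data_for_rigid_families_general [PerfectField k] [IsAlgClosed K]
    (htr : ∀ L : IntermediateField k K, L.FG → ∃ x : K, Transcendental L x)
    {A B : Type} {s t : B → A} (E : SchemeDiagram s t K) (hE : E.IsQuasiProjective)
    (hfin : ∀ a, Finite {e : Aut (E.obj a) // e.hom ≫ E.str a = E.str a})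
    (D : ∀ a, DescentDatum k K (E.obj a) (E.str a))
    (hD : ∀ b σ, E.hom b ≫ ((D (t b)).act σ).hom = ((D (s b)).act σ).hom ≫ E.hom b) {a : A}
    (hrigid : ∀ ψ, E.IsAut ψ → ψ a = 1) :
    ∃ (X₀ : Scheme) (q : X₀ ⟶ Spec (.of k)) (e : E.obj a ≅ baseChange k K q),
      e.hom ≫ pullback.snd q (specMap (algebraMap k K)) = E.str a ∧
      ∀ σ : K ≃ₐ[k] K, ((D a).act σ).hom ≫ e.hom = e.hom ≫ baseChangeAut k K q σ := by
  have hinv := isInvariant_algEquiv htr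
  have hsep := (hE a).isSeparated
  obtain ⟨k', _, _, Y, q', r, hq', hr, hN⟩ :=
    exists_normal_forall_act_comp_eq htr E hE hfin D hD hrigid
  obtain ⟨X₀, q, π, hπ, hact⟩ := (D a).exists_isPullback_forall_act_comp_eq k' hq' hr hN
  exact ⟨X₀, q, hπ.isoPullback, hπ.isoPullback_hom_snd, fun σ =>
    comp_isoPullback_hom_eq_comp_map hπ (hact σ) ((D a).compat σ)
      ((Category.comp_id _).trans (specAut_comp k K σ).symm)⟩

/-- Effectivity of descent data for rigid families: given a family of
quasi-projective `K`-schemes with finite automorphism groups over `K`, connected by a family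
of `K`-morphisms admitting no non-trivial compatible family of automorphisms, every
collection of descent data with respect to `K/k` making all the morphisms equivariant is
effective. -/
theorem effectivity_of_descent_data_for_rigid_families
    (k K : Type) [Field k] [CharZero k] [Field K] [IsAlgClosed K] [Algebra k K]
    -- `K` has infinite transcendence degree over `k`
    (htr : ∀ L : IntermediateField k K, L.FG → ∃ x : K, Transcendental L x)
    (A B : Type) (X : A → Scheme) (p : ∀ α : A, X α ⟶ Spec (CommRingCat.of K))
    (s t : B → A) (f : ∀ β : B, X (s β) ⟶ X (t β))
    -- each `X α` is quasi-projective over `K`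
    (hqp : ∀ α : A, QuasiProjectiveOver K (p α))
    -- the `f β` are morphisms of schemes over `K`
    (hover : ∀ β : B, f β ≫ p (t β) = p (s β))
    -- (i) each `X α` has only finitely many automorphisms as a scheme over `K`
    (hfin : ∀ α : A, Finite {e : Aut (X α) // e.hom ≫ p α = p α})
    -- (ii) the only family of `K`-automorphisms commuting with all the `f β` is the identity
    (hrigid : ∀ ψ : ∀ α : A, Aut (X α), (∀ α : A, (ψ α).hom ≫ p α = p α) →
      (∀ β : B, f β ≫ (ψ (t β)).hom = (ψ (s β)).hom ≫ f β) → ∀ α : A, ψ α = 1)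
    -- descent data on the `X α` with respect to `K/k`
    (D : ∀ α : A, DescentDatum k K (X α) (p α))
    -- under which every `f β` is `Aut(K/k)`-equivariant
    (hequiv : ∀ (β : B) (σ : K ≃ₐ[k] K),
      f β ≫ ((D (t β)).act σ).hom = ((D (s β)).act σ).hom ≫ f β) :
    -- then each descent datum is effective
    ∀ α : A, ∃ (X₀ : Scheme) (q : X₀ ⟶ Spec (CommRingCat.of k))
      (e : X α ≅ baseChange k K q),
      e.hom ≫ pullback.snd q (Spec.map (CommRingCat.ofHom (algebraMap k K))) = p α ∧
      ∀ σ : K ≃ₐ[k] K, ((D α).act σ).hom ≫ e.hom = e.hom ≫ baseChangeAut k K q σ := by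
  exact fun a => effectivity_of_descent_data_for_rigid_families_general htr ⟨X, p, f, hover⟩ hqp
    hfin D hequiv fun ψ hψ => hrigid ψ hψ.hom_str hψ.comp_hom a

end Paper
end
end

section
/- Equality of composite rings of conjugate invariants: Let k be an algebraically closed field of characteristic zero and K an algebraically closed field extension of k of infinite transcendence degree over k. Let R be a finitely generated commutative K-algebra equipped with a continuous semilinear action of Aut(K/k), and let L be an intermediate field of K/k, finitely generated over k, such that the subring R₁ := { r ∈ R : σ(r) = r for every σ ∈ Aut(K/k) fixing L pointwise } spans R as a K-vector space. Let σ, τ ∈ Aut(K/k) be such that σ(L) and τ(L) are linearly disjoint over k inside K (i.e., the multiplication map σ(L) ⊗_k τ(L) → K is injective). Then the composite rings τ(R₁)·σ(L) and σ(R₁)·τ(L) are equal, that is, the k-subalgebra of R generated by τ(R₁) together with the image of σ(L) equals the k-subalgebra of R generated by σ(R₁) together with the image of τ(L). -/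
/-!
Choose a `K`-basis `b` of `R` inside `R₁`. The matrix expressing `τ b` in terms of `σ b` has entries
in the composite field of `σ(L)` and `τ(L)`, because the field of invariants of the automorphisms
fixing a finitely generated `N` is `N` itself. The point is that each entry `m` lies in the
composite *ring* `S = τ(L)·σ(L)`. To see it, choose `ρ` with `ρ(L)` linearly disjoint from the
composite field and factor the matrix through `ρ b`: clearing the denominators of the two factors
gives `f ∈ τ(L)·ρ(L)` and `g ∈ σ(L)·ρ(L)`, nonzero, with `m f g ∈ S·ρ(L)`. Expanding in a `k`-basis
of `ρ(L)`, the coefficients of `f g` lie in the ideal `I = (S : m)` of `S`. If `I` were contained in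
a maximal ideal `𝔪`, then the images of `f` and `g` would be nonzero elements with product zero in
`(S/𝔪) ⊗ ρ(L)`, a domain since `k` is algebraically closed. So `I = S`, that is, `m ∈ S`.
-/

open TensorProduct IntermediateField.algebraAdjoinAdjoin

section BaseChange

variable {k A B N ι : Type*} [CommRing k] [CommRing A] [Algebra k A] [CommRing B] [Algebra k B]
  [CommRing N] [Algebra k N]

theorem basis_repr_tensorMap_apply (b : Module.Basis ι k N) (f : A →ₐ[k] B) (z : A ⊗[k] N) (i : ι) :
    (Algebra.TensorProduct.basis B b).repr (Algebra.TensorProduct.map f (AlgHom.id k N) z) i =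
      f ((Algebra.TensorProduct.basis A b).repr z i) := by
  induction z with
  | zero => simp
  | add x y hx hy => simp [hx, hy]
  | tmul x y => simp [Algebra.TensorProduct.basis_repr_tmul]

theorem exists_subalgebra_fg_map_val_eq (x y : A ⊗[k] N) :
    ∃ C : Subalgebra k A, C.FG ∧ ∃ x' y' : C ⊗[k] N,
      Algebra.TensorProduct.map C.val (AlgHom.id k N) x' = x ∧
      Algebra.TensorProduct.map C.val (AlgHom.id k N) y' = y := by
  obtain ⟨C, hC, x, rfl⟩ := TensorProduct.Algebra.exists_of_fg x
  obtain ⟨D, hD, y, rfl⟩ := TensorProduct.Algebra.exists_of_fg y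
  refine ⟨C ⊔ D, hC.sup hD,
    LinearMap.rTensor N (Subalgebra.inclusion (le_sup_left : C ≤ C ⊔ D)).toLinearMap x,
    LinearMap.rTensor N (Subalgebra.inclusion (le_sup_right : D ≤ C ⊔ D)).toLinearMap y,
    ?_, ?_⟩
  · exact (LinearMap.rTensor_comp_apply N (C ⊔ D).val.toLinearMap _ x).symm
  · exact (LinearMap.rTensor_comp_apply N (C ⊔ D).val.toLinearMap _ y).symm

end BaseChange

section TensorDomain

variable {k A N : Type*} [Field k] [IsAlgClosed k] [CommRing A] [Algebra k A]
  [CommRing N] [Algebra k N]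

theorem exists_algHom_apply_ne_zero [IsReduced A] [Algebra.FiniteType k A] {a : A}
    (ha : a ≠ 0) : ∃ p : A →ₐ[k] k, p a ≠ 0 := by
  have : IsJacobsonRing A := isJacobsonRing_of_finiteType (A := k)
  have ha_jacobson : a ∉ (⊥ : Ideal A).jacobson := by
    rwa [IsJacobsonRing.out ‹_› (Ideal.isRadical_bot_iff.2 ‹_›)]
  obtain ⟨m, hm, ham⟩ : ∃ m : Ideal A, m.IsMaximal ∧ a ∉ m := by
    simpa [Ideal.jacobson, Submodule.mem_sInf] using ha_jacobson
  let : Field (A ⧸ m) := Ideal.Quotient.field m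
  have : Module.Finite k (A ⧸ m) := finite_of_finite_type_of_isJacobsonRing k (A ⧸ m)
  let p : A ⧸ m →ₐ[k] k := IsAlgClosed.lift
  exact ⟨p.comp (Ideal.Quotient.mkₐ k m),
    (map_ne_zero p).2 (mt Ideal.Quotient.eq_zero_iff_mem.1 ham)⟩

theorem exists_algHom_map_ne_zero [IsDomain A] [Algebra.FiniteType k A]
    {x y : A ⊗[k] N} (hx : x ≠ 0) (hy : y ≠ 0) : ∃ p : A →ₐ[k] k,
      Algebra.TensorProduct.map p (AlgHom.id k N) x ≠ 0 ∧
      Algebra.TensorProduct.map p (AlgHom.id k N) y ≠ 0 := by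
  let b := Module.Basis.ofVectorSpace k N
  have exists_coord {z : A ⊗[k] N} (hz : z ≠ 0) :
      ∃ i, (Algebra.TensorProduct.basis A b).repr z i ≠ 0 :=
    DFunLike.ne_iff.1 ((LinearEquiv.map_ne_zero_iff _).2 hz)
  obtain ⟨i, hi⟩ := exists_coord hx
  obtain ⟨j, hj⟩ := exists_coord hy
  obtain ⟨p, hp⟩ := exists_algHom_apply_ne_zero (k := k) (mul_ne_zero hi hj)
  rw [map_mul, mul_ne_zero_iff, ← basis_repr_tensorMap_apply, ← basis_repr_tensorMap_apply] at hp
  exact ⟨p, fun h ↦ hp.1 (by simp [h]), fun h ↦ hp.2 (by simp [h])⟩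

theorem noZeroDivisors_tensorProduct_of_finiteType [IsDomain A]
    [Algebra.FiniteType k A] [NoZeroDivisors N] : NoZeroDivisors (A ⊗[k] N) where
  eq_zero_or_eq_zero_of_mul_eq_zero {x y} hxy := by
    have : NoZeroDivisors (k ⊗[k] N) :=
      (Algebra.TensorProduct.lid k N).toMulEquiv.noZeroDivisors N
    by_contra! h
    obtain ⟨p, hpx, hpy⟩ := exists_algHom_map_ne_zero h.1 h.2
    exact mul_ne_zero hpx hpy (by rw [← map_mul, hxy, map_zero])

theorem noZeroDivisors_tensorProduct_of_isAlgClosed [IsDomain A]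
    [NoZeroDivisors N] : NoZeroDivisors (A ⊗[k] N) where
  eq_zero_or_eq_zero_of_mul_eq_zero {x y} hxy := by
    obtain ⟨C, hC, x, y, rfl, rfl⟩ := exists_subalgebra_fg_map_val_eq x y
    have : Algebra.FiniteType k C := C.fg_iff_finiteType.1 hC
    have := noZeroDivisors_tensorProduct_of_finiteType (k := k) (A := C) (N := N)
    have hinj : Function.Injective (Algebra.TensorProduct.map C.val (AlgHom.id k N)) :=
      TensorProduct.map_injective_of_flat_flat _ _ Subtype.val_injective Function.injective_id
    rw [← map_mul, map_eq_zero_iff _ hinj, mul_eq_zero] at hxy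
    exact hxy.imp (by simp +contextual) (by simp +contextual)

end TensorDomain

/-! ### Extending automorphisms -/

theorem algebraicIndependent_sumElim_of_adjoin {F K ι κ : Type*} [Field F] [Field K] [Algebra F K]
    {x : ι → K} {y : κ → K} (hx : AlgebraicIndependent F x)
    (hy : AlgebraicIndependent (IntermediateField.adjoin F (Set.range x)) y) :
    AlgebraicIndependent F (Sum.elim y x) :=
  hx.sumElim_of_tower (Set.range_subset_iff.2 fun i ↦
    ⟨⟨x i, IntermediateField.subset_adjoin F _ ⟨i, rfl⟩⟩, rfl⟩) hy

section Extension

variable {F F' K K' ι : Type*} [Field F] [Field F'] [Field K] [IsAlgClosed K] [Algebra F K]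
  [Field K'] [IsAlgClosed K'] [Algebra F' K']

theorem exists_ringEquiv_extending_of_isTranscendenceBasis {v : ι → K} {w : ι → K'}
    (hv : IsTranscendenceBasis F v) (hw : IsTranscendenceBasis F' w) (g : F ≃+* F') :
    ∃ e : K ≃+* K', (∀ i, e (v i) = w i) ∧
      ∀ a, e (algebraMap F K a) = algebraMap F' K' (g a) := by
  let := IsAlgClosed.isAlgClosure_of_transcendence_basis v hv
  let := IsAlgClosed.isAlgClosure_of_transcendence_basis w hw
  let E : Algebra.adjoin F (Set.range v) ≃+* Algebra.adjoin F' (Set.range w) :=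
    (hv.1.aevalEquiv.symm.toRingEquiv.trans (MvPolynomial.mapEquiv ι g)).trans
      hw.1.aevalEquiv.toRingEquiv
  have apply_aeval (p : MvPolynomial ι F) :
      IsAlgClosure.equivOfEquiv K K' E (MvPolynomial.aeval v p) =
        MvPolynomial.aeval w (MvPolynomial.map (g : F →+* F') p) := by
    have h := IsAlgClosure.equivOfEquiv_algebraMap K K' E (hv.1.aevalEquiv p)
    simpa [E] using h
  exact ⟨IsAlgClosure.equivOfEquiv K K' E, fun i ↦ by simpa using apply_aeval (.X i),
    fun a ↦ by simpa using apply_aeval (.C a)⟩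

theorem exists_algEquiv_apply_eq_of_algebraicIndependent {x y : ι → K}
    (h : AlgebraicIndependent F (Sum.elim x y)) : ∃ e : K ≃ₐ[F] K, ∀ i, e (x i) = y i := by
  obtain ⟨t, ht, htb⟩ := exists_isTranscendenceBasis_superset h.coe_range
  let j : ι ⊕ ι ↪ t := ⟨fun a ↦ ⟨Sum.elim x y a, ht ⟨a, rfl⟩⟩, fun a b hab ↦
    h.injective (congrArg Subtype.val hab)⟩
  let swap : Equiv.Perm t := Equiv.Perm.viaEmbedding (Equiv.sumComm ι ι) j
  obtain ⟨e, he, heF⟩ := exists_ringEquiv_extending_of_isTranscendenceBasis htb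
    (htb.comp_equiv swap) (RingEquiv.refl F)
  refine ⟨AlgEquiv.ofRingEquiv (f := e) heF, fun i ↦ ?_⟩
  have := he (j (Sum.inl i))
  rwa [Function.comp_apply, Equiv.Perm.viaEmbedding_apply] at this

theorem exists_algEquiv_apply_eq_of_transcendental {x y : K} (hx : Transcendental F x)
    (hy : Transcendental (IntermediateField.adjoin F {x}) y) : ∃ e : K ≃ₐ[F] K, e y = x := by
  rw [← Set.range_const (ι := Unit)] at hy
  have hxy := algebraicIndependent_sumElim_of_adjoin
    (algebraicIndependent_unique_type_iff (x := fun _ : Unit ↦ x) |>.2 hx)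
    (algebraicIndependent_unique_type_iff (x := fun _ : Unit ↦ y) |>.2 hy)
  obtain ⟨e, he⟩ := exists_algEquiv_apply_eq_of_algebraicIndependent hxy
  exact ⟨e, he ()⟩

theorem exists_algEquiv_extending_of_algebraicClosure
    (g : algebraicClosure F K ≃ₐ[F] algebraicClosure F K) :
    ∃ e : K ≃ₐ[F] K, ∀ a : algebraicClosure F K, e a = g a := by
  obtain ⟨s, hs⟩ := exists_isTranscendenceBasis (algebraicClosure F K) K
  obtain ⟨e, -, he⟩ := exists_ringEquiv_extending_of_isTranscendenceBasis hs hs g.toRingEquiv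
  refine ⟨AlgEquiv.ofRingEquiv (f := e) fun a ↦ ?_, he⟩
  simpa using he (algebraMap F _ a)

theorem mem_range_algebraMap_of_isAlgebraic_of_forall_algEquiv [PerfectField F] {x : K}
    (hx : IsAlgebraic F x) (hfix : ∀ g : K ≃ₐ[F] K, g x = x) : x ∈ Set.range (algebraMap F K) := by
  have : IsGalois F (algebraicClosure F K) := { to_normal := IsAlgClosure.normal F _ }
  let x' : algebraicClosure F K := ⟨x, mem_algebraicClosure_iff.2 hx⟩
  have hfix' (g : algebraicClosure F K ≃ₐ[F] algebraicClosure F K) : g x' = x' := by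
    obtain ⟨e, he⟩ := exists_algEquiv_extending_of_algebraicClosure g
    exact Subtype.ext ((he x').symm.trans (hfix e))
  obtain ⟨y, hy⟩ := (InfiniteGalois.mem_range_algebraMap_iff_fixed (k := F) _).2 hfix'
  exact ⟨y, congrArg Subtype.val hy⟩

end Extension

/-! ### Infinite transcendence degree -/

section LinearDisjoint

theorem isAlgebraic_adjoin_image_includeRight {k F L : Type*} [Field k] [CommRing F] [Nontrivial F]
    [Algebra k F] [CommRing L] [Nontrivial L] [Algebra k L] [NoZeroDivisors (F ⊗[k] L)] {s : Set L}
    (hs : Algebra.IsAlgebraic (Algebra.adjoin k s) L) :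
    Algebra.IsAlgebraic (Algebra.adjoin F ((Algebra.TensorProduct.includeRight :
      L →ₐ[k] F ⊗[k] L) '' s)) (F ⊗[k] L) := by
  let incl : L →ₐ[k] F ⊗[k] L := Algebra.TensorProduct.includeRight
  let A := Algebra.adjoin F (incl '' s)
  have incl_injective : Function.Injective incl :=
    Algebra.TensorProduct.includeRight_injective (algebraMap k F).injective
  have : Nontrivial (F ⊗[k] L) := incl_injective.nontrivial
  have adjoin_le : Algebra.adjoin k s ≤ (A.restrictScalars k).comap incl :=
    Algebra.adjoin_le fun a ha ↦ Algebra.subset_adjoin ⟨a, ha, rfl⟩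
  let f : Algebra.adjoin k s →+* A := ((incl.comp (Algebra.adjoin k s).val).codRestrict
    (A.restrictScalars k) fun a ↦ adjoin_le a.2).toRingHom
  have f_injective : Function.Injective f := fun a b hab ↦
    Subtype.ext (incl_injective (congrArg Subtype.val hab))
  refine ⟨fun z ↦ ?_⟩
  induction z with
  | zero => exact isAlgebraic_zero
  | add z w hz hw => exact hz.add hw
  | tmul a b =>
    have hb : IsAlgebraic A (incl b) := (hs.isAlgebraic b).ringHom_of_comp_eq f incl f_injective rfl
    have ha : IsAlgebraic A (algebraMap F (F ⊗[k] L) a) := isAlgebraic_algebraMap (algebraMap F A a)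
    simpa [incl] using ha.mul hb

theorem injective_of_algebraicIndependent_comp {F T K ι : Type*} [CommRing F] [CommRing T]
    [NoZeroDivisors T] [Algebra F T] [CommRing K] [Algebra F K] {x : ι → T}
    (hx : Algebra.IsAlgebraic (Algebra.adjoin F (Set.range x)) T) (Φ : T →ₐ[F] K)
    (hΦ : AlgebraicIndependent F (Φ ∘ x)) : Function.Injective Φ := by
  let A := Algebra.adjoin F (Set.range x)
  have comp_val_injective : Function.Injective (Φ.comp A.val) := by
    rw [injective_iff_map_eq_zero]
    rintro ⟨a, ha⟩ h
    obtain ⟨p, rfl⟩ := (Algebra.adjoin_range_eq_range_aeval F x).le ha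
    have hp : p = 0 := hΦ.eq_zero_of_aeval_eq_zero p <|
      (MvPolynomial.comp_aeval_apply x Φ p).symm.trans h
    exact Subtype.ext (by simp [hp])
  let : Algebra T K := Φ.toAlgebra
  exact Algebra.IsAlgebraic.injective_tower_top (R := A) T comp_val_injective

variable {k K : Type*} [Field k] [Field K] [Algebra k K]

theorem linearDisjoint_of_isTranscendenceBasis [IsAlgClosed k] {M L : IntermediateField k K}
    {ι : Type*} {x : ι → L} (hx : IsTranscendenceBasis k x)
    (hxM : AlgebraicIndependent M fun i ↦ (x i : K)) : M.LinearDisjoint L := by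
  let mulMap : M ⊗[k] L →ₐ[M] K := Algebra.TensorProduct.lift (Algebra.ofId M K) L.val
    fun _ _ ↦ .all _ _
  have := noZeroDivisors_tensorProduct_of_isAlgClosed (k := k) (A := M) (N := L)
  have halg := isAlgebraic_adjoin_image_includeRight (F := M) hx.isAlgebraic
  rw [← Set.range_comp] at halg
  have mulMap_injective : Function.Injective mulMap :=
    injective_of_algebraicIndependent_comp halg mulMap <| by
      simpa [Function.comp_def, mulMap] using hxM
  rwa [IntermediateField.linearDisjoint_iff', Subalgebra.linearDisjoint_iff_injective]

end LinearDisjoint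

section InfiniteTranscendenceDegree

variable {k K : Type*} [Field k] [Field K] [Algebra k K]

/-- Infinite transcendence degree of `K` over `k`: every intermediate field finitely generated over
`k` admits an element of `K` transcendental over it. -/
def HasInfiniteTrdeg (k K : Type*) [Field k] [Field K] [Algebra k K] : Prop :=
  ∀ L : IntermediateField k K, L.FG → ∃ x : K, Transcendental L x

theorem fg_restrictScalars_adjoin {M : IntermediateField k K} (hM : M.FG)
    {s : Set K} (hs : s.Finite) : ((IntermediateField.adjoin M s).restrictScalars k).FG := by
  rw [IntermediateField.restrictScalars_adjoin, IntermediateField.adjoin_union,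
    IntermediateField.adjoin_self]
  exact IntermediateField.fg_sup hM (IntermediateField.fg_adjoin_of_finite hs)

theorem HasInfiniteTrdeg.exists_algebraicIndependent (htr : HasInfiniteTrdeg k K)
    {M : IntermediateField k K} (hM : M.FG) (ι : Type*) [Finite ι] :
    ∃ y : ι → K, AlgebraicIndependent M y := by
  induction ι using Finite.induction_empty_option with
  | @of_equiv α β e h =>
    obtain ⟨y, hy⟩ := h
    exact ⟨y ∘ e.symm, hy.comp _ e.symm.injective⟩
  | h_empty =>
    exact ⟨PEmpty.elim, algebraicIndependent_empty_type_iff.2 (algebraMap M K).injective⟩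
  | @h_option α _ h =>
    obtain ⟨y, hy⟩ := h
    obtain ⟨z, hz⟩ := htr _ (fg_restrictScalars_adjoin hM (Set.finite_range y))
    rw [← algebraicIndependent_unique_type_iff (ι := Unit) (x := fun _ ↦ z)] at hz
    exact ⟨_, (algebraicIndependent_sumElim_of_adjoin hy hz).comp
      ((Equiv.optionEquivSumPUnit α).trans (Equiv.sumComm _ _)) (Equiv.injective _)⟩

theorem HasInfiniteTrdeg.fixedField_fixingSubgroup [CharZero k] [IsAlgClosed K]
    (htr : HasInfiniteTrdeg k K) {M : IntermediateField k K} (hM : M.FG) :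
    IntermediateField.fixedField M.fixingSubgroup = M := by
  refine le_antisymm (fun x hx ↦ ?_) ((IntermediateField.le_iff_le _ _).2 le_rfl)
  have hfix (g : K ≃ₐ[M] K) : g x = x := hx ⟨g.restrictScalars k, fun y ↦ g.commutes y⟩
  have halg : IsAlgebraic M x := by
    by_contra hx
    obtain ⟨y, hy⟩ := htr _ (fg_restrictScalars_adjoin hM (Set.finite_singleton x))
    obtain ⟨e, he⟩ := exists_algEquiv_apply_eq_of_transcendental hx hy
    obtain rfl : y = x := e.injective (he.trans (hfix e).symm)
    exact hy (isAlgebraic_algebraMap (IntermediateField.AdjoinSimple.gen M y))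
  obtain ⟨y, rfl⟩ := mem_range_algebraMap_of_isAlgebraic_of_forall_algEquiv halg hfix
  exact y.2

theorem algebraicIndependent_of_le {M N : IntermediateField k K} (h : M ≤ N) {ι : Type*} {y : ι → K}
    (hy : AlgebraicIndependent N y) : AlgebraicIndependent M y := by
  let : Algebra M N := (IntermediateField.inclusion h).toAlgebra
  have : IsScalarTower M N K := .of_algebraMap_eq fun _ ↦ rfl
  exact hy.restrictScalars (algebraMap M N).injective

theorem HasInfiniteTrdeg.exists_linearDisjoint_map [IsAlgClosed k] [IsAlgClosed K]
    (htr : HasInfiniteTrdeg k K) {M L : IntermediateField k K} (hM : M.FG) (hL : L.FG) :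
    ∃ ρ : K ≃ₐ[k] K, M.LinearDisjoint (L.map ρ.toAlgHom) := by
  have : Algebra.EssFiniteType k L := IntermediateField.essFiniteType_iff.2 hL
  obtain ⟨s, hs⟩ := exists_isTranscendenceBasis k L
  have : Finite s := finite_of_isTranscendenceBasis hs
  let x : s → K := fun i ↦ (i : L)
  have hx : AlgebraicIndependent k x := hs.1.map' (f := L.val) Subtype.val_injective
  have adjoin_le : IntermediateField.adjoin k (Set.range x) ≤ L :=
    IntermediateField.adjoin_le_iff.2 (Set.range_subset_iff.2 fun i ↦ (i : L).2)
  obtain ⟨y, hy⟩ := htr.exists_algebraicIndependent (IntermediateField.fg_sup hM hL) s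
  obtain ⟨e, he⟩ := exists_algEquiv_apply_eq_of_algebraicIndependent <|
    algebraicIndependent_sumElim_of_adjoin hx <|
      algebraicIndependent_of_le (adjoin_le.trans le_sup_right) hy
  refine ⟨e.symm, linearDisjoint_of_isTranscendenceBasis
    ((IntermediateField.intermediateFieldMap e.symm L).isTranscendenceBasis hs) ?_⟩
  convert algebraicIndependent_of_le le_sup_left hy with i
  exact e.symm_apply_eq.2 (he i).symm

end InfiniteTranscendenceDegree

/-! ### Descent from the composite field to the composite ring -/

section Content

variable {k E N Q : Type*} [Field k] [Field E] [Algebra k E] [CommRing N] [Algebra k N]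

theorem map_algHom_id_ne_zero [CommRing Q] [Nontrivial Q] [Algebra k Q] (i : E →ₐ[k] Q)
    {z : E ⊗[k] N} (hz : z ≠ 0) : Algebra.TensorProduct.map i (AlgHom.id k N) z ≠ 0 := by
  have map_injective : Function.Injective (Algebra.TensorProduct.map i (AlgHom.id k N)) :=
    TensorProduct.map_injective_of_flat_flat _ _ i.injective Function.injective_id
  rwa [Ne, map_eq_zero_iff _ map_injective]

theorem exists_basis_repr_mul_notMem [IsAlgClosed k] {E' S ι : Type*} [Field E']
    [Algebra k E'] [NoZeroDivisors N] [CommRing S] [Algebra k S]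
    (b : Module.Basis ι k N) (i : E →ₐ[k] S) (j : E' →ₐ[k] S) {f : E ⊗[k] N}
    {g : E' ⊗[k] N} (hf : f ≠ 0) (hg : g ≠ 0) {I : Ideal S} (hI : I ≠ ⊤) :
    ∃ n, (Algebra.TensorProduct.basis S b).repr (Algebra.TensorProduct.map i (AlgHom.id k N) f *
      Algebra.TensorProduct.map j (AlgHom.id k N) g) n ∉ I := by
  obtain ⟨m, hm, hIm⟩ := Ideal.exists_le_maximal I hI
  let π := Ideal.Quotient.mkₐ k m
  have := noZeroDivisors_tensorProduct_of_isAlgClosed (k := k) (A := S ⧸ m) (N := N)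
  by_contra! coeff_mem
  refine mul_ne_zero (map_algHom_id_ne_zero (π.comp i) hf)
    (map_algHom_id_ne_zero (π.comp j) hg) ?_
  rw [← AlgHom.comp_id (AlgHom.id k N), Algebra.TensorProduct.map_comp,
    Algebra.TensorProduct.map_comp, AlgHom.comp_apply, AlgHom.comp_apply, ← map_mul]
  refine (Algebra.TensorProduct.basis (S ⧸ m) b).ext_elem fun n ↦ ?_
  rw [basis_repr_tensorMap_apply, map_zero]
  exact Ideal.Quotient.eq_zero_iff_mem.2 (hIm (coeff_mem n))

end Content

section IntermediateField

variable {k K : Type*} [Field k] [Field K] [Algebra k K]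

theorem mulMap_map_inclusion {A B : Subalgebra k K} (h : A ≤ B) (C : Subalgebra k K)
    (z : A ⊗[k] C) :
    B.mulMap C (Algebra.TensorProduct.map (Subalgebra.inclusion h) (AlgHom.id k C) z) =
      A.mulMap C z := by
  induction z with
  | zero => simp
  | add x y hx hy => simp [hx, hy]
  | tmul x y => simp

theorem mul_basis_repr_eq_of_mul_mulMap_eq {S M N : Subalgebra k K} (hSM : S ≤ M)
    (hMN : M.LinearDisjoint N) {ι : Type*} (b : Module.Basis ι k N) {m : K} (hm : m ∈ M)
    {h t : S ⊗[k] N} (hht : m * S.mulMap N h = S.mulMap N t) (i : ι) :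
    m * ((Algebra.TensorProduct.basis S b).repr h i : K) =
      (Algebra.TensorProduct.basis S b).repr t i := by
  let extend : S ⊗[k] N →ₐ[k] M ⊗[k] N :=
    Algebra.TensorProduct.map (Subalgebra.inclusion hSM) (AlgHom.id k N)
  have smul_extend : (⟨m, hm⟩ : M) • extend h = extend t := by
    apply Subalgebra.linearDisjoint_iff_injective.1 hMN
    rw [Algebra.smul_def (R := M) (A := M ⊗[k] N), map_mul, mulMap_map_inclusion,
      mulMap_map_inclusion, ← hht]
    simp
  simpa [extend, basis_repr_tensorMap_apply] using
    congrArg (fun z ↦ ((Algebra.TensorProduct.basis M b).repr z i : K)) smul_extend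

theorem exists_mulMap_eq_of_mem_sup {A B : Subalgebra k K} {x : K} (hx : x ∈ A ⊔ B) :
    ∃ z, A.mulMap B z = x := by
  rwa [← Subalgebra.mulMap_range] at hx

theorem mem_toSubalgebra_sup_of_mul_mem [IsAlgClosed k] {E₁ E₂ N : IntermediateField k K}
    (hN : (E₁ ⊔ E₂).LinearDisjoint N) {f g m : K} (hf : f ∈ E₁.toSubalgebra ⊔ N.toSubalgebra)
    (hf0 : f ≠ 0) (hg : g ∈ E₂.toSubalgebra ⊔ N.toSubalgebra) (hg0 : g ≠ 0) (hm : m ∈ E₁ ⊔ E₂)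
    (hmfg : m * (f * g) ∈ E₁.toSubalgebra ⊔ E₂.toSubalgebra ⊔ N.toSubalgebra) :
    m ∈ E₁.toSubalgebra ⊔ E₂.toSubalgebra := by
  let S := E₁.toSubalgebra ⊔ E₂.toSubalgebra
  have hSM : S ≤ (E₁ ⊔ E₂).toSubalgebra := sup_le (le_sup_left : E₁ ≤ _) (le_sup_right : E₂ ≤ _)
  obtain ⟨f, rfl⟩ := exists_mulMap_eq_of_mem_sup hf
  obtain ⟨g, rfl⟩ := exists_mulMap_eq_of_mem_sup hg
  obtain ⟨t, ht⟩ := exists_mulMap_eq_of_mem_sup hmfg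
  let b := Module.Basis.ofVectorSpace k N.toSubalgebra
  let I : Ideal S := (1 : Submodule S K).colon {m}
  have mem_I {s : S} : s ∈ I ↔ m * s ∈ S := by
    simp [I, Submodule.mem_colon_singleton, Algebra.smul_def, mul_comm]
  by_contra hmS
  have hI : I ≠ ⊤ := by
    rwa [Ideal.ne_top_iff_one, mem_I, OneMemClass.coe_one, mul_one]
  have hf0 : f ≠ 0 := by rintro rfl; exact hf0 (map_zero _)
  have hg0 : g ≠ 0 := by rintro rfl; exact hg0 (map_zero _)
  obtain ⟨i, hi⟩ := exists_basis_repr_mul_notMem (E := E₁) (E' := E₂) b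
    (Subalgebra.inclusion (le_sup_left : _ ≤ S)) (Subalgebra.inclusion (le_sup_right : _ ≤ S))
    hf0 hg0 hI
  refine hi (mem_I.2 ?_)
  rw [mul_basis_repr_eq_of_mul_mulMap_eq hSM
    (IntermediateField.linearDisjoint_iff'.1 hN) b hm (t := t)]
  · exact Subtype.prop _
  · rw [ht, map_mul, mulMap_map_inclusion, mulMap_map_inclusion]

theorem exists_ne_zero_forall_mul_mem_adjoin {s : Set K} {ι : Type*} (T : Finset ι) {x : ι → K}
    (hx : ∀ i ∈ T, x i ∈ IntermediateField.adjoin k s) :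
    ∃ d ∈ Algebra.adjoin k s, d ≠ 0 ∧ ∀ i ∈ T, d * x i ∈ Algebra.adjoin k s := by
  obtain ⟨d, hd⟩ := IsLocalization.exist_integer_multiples
    (nonZeroDivisors (Algebra.adjoin k s)) T.attach
    fun i ↦ (⟨x i, hx i i.2⟩ : IntermediateField.adjoin k s)
  refine ⟨d, d.1.2, by simp, fun i hi ↦ ?_⟩
  obtain ⟨a, ha⟩ := hd ⟨i, hi⟩ (T.mem_attach _)
  have coe_eq : (a : K) = d * x i := congrArg Subtype.val ha
  exact coe_eq ▸ a.2

theorem exists_ne_zero_forall_mul_mem_toSubalgebra_sup (E F : IntermediateField k K)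
    {ι : Type*} (T : Finset ι) {x : ι → K} (hx : ∀ i ∈ T, x i ∈ E ⊔ F) :
    ∃ d ∈ E.toSubalgebra ⊔ F.toSubalgebra,
      d ≠ 0 ∧ ∀ i ∈ T, d * x i ∈ E.toSubalgebra ⊔ F.toSubalgebra := by
  have field_sup : IntermediateField.adjoin k (E ∪ F) = E ⊔ F := by
    simp [IntermediateField.adjoin_union]
  have ring_sup : Algebra.adjoin k (E ∪ F) = E.toSubalgebra ⊔ F.toSubalgebra :=
    Algebra.adjoin_union .. |>.trans <| congrArg₂ _
      (Algebra.adjoin_eq E.toSubalgebra) (Algebra.adjoin_eq F.toSubalgebra)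
  rw [← field_sup] at hx
  rw [← ring_sup]
  exact exists_ne_zero_forall_mul_mem_adjoin T hx

theorem sum_mul_mem_toSubalgebra_sup [IsAlgClosed k] {E₁ E₂ N : IntermediateField k K}
    (hN : (E₁ ⊔ E₂).LinearDisjoint N) {ι : Type*} {T : Finset ι} {p q : ι → K}
    (hp : ∀ i ∈ T, p i ∈ E₁ ⊔ N) (hq : ∀ i ∈ T, q i ∈ E₂ ⊔ N)
    (hpq : ∑ i ∈ T, p i * q i ∈ E₁ ⊔ E₂) :
    ∑ i ∈ T, p i * q i ∈ E₁.toSubalgebra ⊔ E₂.toSubalgebra := by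
  obtain ⟨f, hf, hf0, hfp⟩ := exists_ne_zero_forall_mul_mem_toSubalgebra_sup E₁ N T hp
  obtain ⟨g, hg, hg0, hgq⟩ := exists_ne_zero_forall_mul_mem_toSubalgebra_sup E₂ N T hq
  refine mem_toSubalgebra_sup_of_mul_mem hN hf hf0 hg hg0 hpq ?_
  rw [Finset.sum_mul]
  refine Subalgebra.sum_mem _ fun i hi ↦ ?_
  rw [mul_mul_mul_comm, mul_comm (p i), mul_comm (q i)]
  exact mul_mem
    ((sup_le_sup_right le_sup_left _ : E₁.toSubalgebra ⊔ _ ≤ _) (hfp i hi))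
    ((sup_le_sup_right le_sup_right _ : E₂.toSubalgebra ⊔ _ ≤ _) (hgq i hi))

end IntermediateField

/-! ### Semilinear actions -/

section FixedPoints

variable {k K V : Type*} [Field k] [Field K] [Algebra k K] [MulAction (K ≃ₐ[k] K) V]

theorem fixedPoints_fixingSubgroup_mono {M N : IntermediateField k K} (h : M ≤ N) :
    MulAction.fixedPoints M.fixingSubgroup V ⊆ MulAction.fixedPoints N.fixingSubgroup V :=
  fun _ hv g ↦ hv ⟨g, IntermediateField.fixingSubgroup_antitone h g.2⟩

theorem smul_mem_fixedPoints_fixingSubgroup_map {L : IntermediateField k K} {v : V}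
    (hv : v ∈ MulAction.fixedPoints L.fixingSubgroup V) (σ : K ≃ₐ[k] K) :
    σ • v ∈ MulAction.fixedPoints (L.map σ.toAlgHom).fixingSubgroup V := by
  rintro ⟨g, hg⟩
  rw [IsGalois.map_fixingSubgroup, Subgroup.mem_pointwise_smul_iff_inv_smul_mem, ← map_inv,
    MulAut.smul_def, MulAut.conj_apply, inv_inv] at hg
  simpa [mul_smul, Subgroup.smul_def, inv_smul_eq_iff] using hv ⟨_, hg⟩

end FixedPoints

section SemilinearAction

theorem basis_repr_eq_sum {K V ι : Type*} [Semiring K] [AddCommMonoid V] [Module K V]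
    (b c : Module.Basis ι K V) (v : V) (j : ι) :
    c.repr v j = ∑ l ∈ (b.repr v).support, b.repr v l * c.repr (b l) j := by
  conv_lhs => rw [← b.linearCombination_repr v, Finsupp.linearCombination_apply]
  simp [Finsupp.sum, Finsupp.finsetSum_apply]

variable {k K V ι : Type*} [Field k] [Field K] [Algebra k K] [AddCommGroup V] [Module K V]
  [DistribMulAction (K ≃ₐ[k] K) V] [SMulDistribClass (K ≃ₐ[k] K) K V]

/-- The conjugate by `σ` of a basis `b` of a module with semilinear action, consisting of the
vectors `σ • b i`. -/
noncomputable def conjBasis (σ : K ≃ₐ[k] K) (b : Module.Basis ι K V) : Module.Basis ι K V where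
  repr :=
    { toFun v := (b.repr (σ⁻¹ • v)).mapRange σ (map_zero σ)
      map_add' v w := by ext; simp
      map_smul' c v := by ext; simp [smul_distrib_smul]
      invFun f := σ • b.repr.symm (f.mapRange σ.symm (map_zero σ.symm))
      left_inv v := by
        rw [smul_eq_iff_eq_inv_smul, LinearEquiv.symm_apply_eq]
        ext
        simp
      right_inv f := by ext; simp }

theorem conjBasis_repr_smul (σ : K ≃ₐ[k] K) (b : Module.Basis ι K V) (v : V) (i : ι) :
    (conjBasis σ b).repr (σ • v) i = σ (b.repr v i) := by
  simp [conjBasis]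

theorem conjBasis_apply (σ : K ≃ₐ[k] K) (b : Module.Basis ι K V) (i : ι) :
    conjBasis σ b i = σ • b i := by
  classical
  refine (conjBasis σ b).ext_elem fun j ↦ ?_
  simp [conjBasis_repr_smul, Finsupp.single_apply]

theorem intermediateField_fg_map {L : IntermediateField k K} (hL : L.FG) (f : K →ₐ[k] K) :
    (L.map f).FG := by
  obtain ⟨s, rfl⟩ := hL
  rw [IntermediateField.adjoin_map]
  exact IntermediateField.fg_adjoin_of_finite (s.finite_toSet.image f)

variable [CharZero k] [IsAlgClosed K]

theorem HasInfiniteTrdeg.basis_repr_mem (htr : HasInfiniteTrdeg k K) {N : IntermediateField k K}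
    (hN : N.FG) {b : Module.Basis ι K V}
    (hb : ∀ i, b i ∈ MulAction.fixedPoints N.fixingSubgroup V) {v : V}
    (hv : v ∈ MulAction.fixedPoints N.fixingSubgroup V) (i : ι) : b.repr v i ∈ N := by
  rw [← htr.fixedField_fixingSubgroup hN]
  intro g
  have conjBasis_eq : conjBasis (g : K ≃ₐ[k] K) b = b :=
    Module.Basis.eq_of_apply_eq fun j ↦ (conjBasis_apply _ b j).trans (hb j g)
  have gv : (g : K ≃ₐ[k] K) • v = v := hv g
  rw [Subgroup.smul_def, AlgEquiv.smul_def, ← conjBasis_repr_smul, conjBasis_eq, gv]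

variable {L : IntermediateField k K} {b : Module.Basis ι K V}

theorem HasInfiniteTrdeg.conjBasis_repr_mem_sup (htr : HasInfiniteTrdeg k K) (hL : L.FG)
    (hb : ∀ i, b i ∈ MulAction.fixedPoints L.fixingSubgroup V) (σ τ : K ≃ₐ[k] K) (i j : ι) :
    (conjBasis σ b).repr (τ • b i) j ∈ L.map τ.toAlgHom ⊔ L.map σ.toAlgHom := by
  refine htr.basis_repr_mem (IntermediateField.fg_sup (intermediateField_fg_map hL _)
    (intermediateField_fg_map hL _)) (fun l ↦ ?_)
    (fixedPoints_fixingSubgroup_mono le_sup_left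
      (smul_mem_fixedPoints_fixingSubgroup_map (hb i) τ)) j
  rw [conjBasis_apply]
  exact fixedPoints_fixingSubgroup_mono le_sup_right
    (smul_mem_fixedPoints_fixingSubgroup_map (hb l) σ)

theorem HasInfiniteTrdeg.conjBasis_repr_mem_toSubalgebra_sup [IsAlgClosed k]
    (htr : HasInfiniteTrdeg k K) (hL : L.FG)
    (hb : ∀ i, b i ∈ MulAction.fixedPoints L.fixingSubgroup V) (σ τ : K ≃ₐ[k] K) (i j : ι) :
    (conjBasis σ b).repr (τ • b i) j ∈
      (L.map τ.toAlgHom).toSubalgebra ⊔ (L.map σ.toAlgHom).toSubalgebra := by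
  obtain ⟨ρ, hρ⟩ := htr.exists_linearDisjoint_map (IntermediateField.fg_sup
    (intermediateField_fg_map hL τ.toAlgHom) (intermediateField_fg_map hL σ.toAlgHom)) hL
  have mem_sup := htr.conjBasis_repr_mem_sup hL hb σ τ i j
  rw [basis_repr_eq_sum (conjBasis ρ b)] at mem_sup ⊢
  refine sum_mul_mem_toSubalgebra_sup hρ (fun l _ ↦ htr.conjBasis_repr_mem_sup hL hb ρ τ i l)
    (fun l _ ↦ ?_) mem_sup
  rw [conjBasis_apply, sup_comm]
  exact htr.conjBasis_repr_mem_sup hL hb σ ρ l j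

theorem HasInfiniteTrdeg.smul_mem_span_smul_fixedPoints [IsAlgClosed k]
    (htr : HasInfiniteTrdeg k K) (hL : L.FG)
    (hspan : Submodule.span K (MulAction.fixedPoints L.fixingSubgroup V) = ⊤) (σ τ : K ≃ₐ[k] K)
    {v : V} (hv : v ∈ MulAction.fixedPoints L.fixingSubgroup V) :
    τ • v ∈ Submodule.span
      ((L.map τ.toAlgHom).toSubalgebra ⊔ (L.map σ.toAlgHom).toSubalgebra : Subalgebra k K)
      ((σ • ·) '' MulAction.fixedPoints L.fixingSubgroup V) := by
  set S := (L.map τ.toAlgHom).toSubalgebra ⊔ (L.map σ.toAlgHom).toSubalgebra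
  have τL_le : (L.map τ.toAlgHom).toSubalgebra ≤ S := le_sup_left
  let b := Module.Basis.ofSpan hspan.ge
  have hb (i) : b i ∈ MulAction.fixedPoints L.fixingSubgroup V :=
    Module.Basis.ofSpan_subset hspan.ge ⟨i, rfl⟩
  have smul_basis_mem (i) : τ • b i ∈ Submodule.span S
      ((σ • ·) '' MulAction.fixedPoints L.fixingSubgroup V) := by
    rw [← (conjBasis σ b).linearCombination_repr (τ • b i), Finsupp.linearCombination_apply]
    refine Submodule.sum_mem _ fun j _ ↦ Submodule.smul_mem _
      (⟨_, htr.conjBasis_repr_mem_toSubalgebra_sup hL hb σ τ i j⟩ : S) ?_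
    exact Submodule.subset_span ⟨b j, hb j, (conjBasis_apply σ b j).symm⟩
  rw [← b.linearCombination_repr v, Finsupp.linearCombination_apply, Finsupp.sum,
    Finset.smul_sum]
  refine Submodule.sum_mem _ fun i _ ↦ ?_
  rw [smul_distrib_smul]
  exact Submodule.smul_mem _
    (⟨_, τL_le ⟨_, htr.basis_repr_mem hL hb hv i, rfl⟩⟩ : S) (smul_basis_mem i)

end SemilinearAction

section SemilinearRing

variable {k K R : Type*} [Field k] [Field K] [Algebra k K] [Ring R] [Algebra K R]
  [Algebra k R] [IsScalarTower k K R]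

theorem HasInfiniteTrdeg.adjoin_smul_fixedPoints_le [CharZero k] [IsAlgClosed k] [IsAlgClosed K]
    [MulSemiringAction (K ≃ₐ[k] K) R] [SMulDistribClass (K ≃ₐ[k] K) K R]
    (htr : HasInfiniteTrdeg k K) {L : IntermediateField k K} (hL : L.FG)
    (hspan : Submodule.span K (MulAction.fixedPoints L.fixingSubgroup R) = ⊤)
    (σ τ : K ≃ₐ[k] K) :
    Algebra.adjoin k ((τ • ·) '' MulAction.fixedPoints L.fixingSubgroup R ∪
        algebraMap K R '' (σ '' (L : Set K))) ≤
      Algebra.adjoin k ((σ • ·) '' MulAction.fixedPoints L.fixingSubgroup R ∪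
        algebraMap K R '' (τ '' (L : Set K))) := by
  set A := Algebra.adjoin k ((σ • ·) '' MulAction.fixedPoints L.fixingSubgroup R ∪
    algebraMap K R '' (τ '' (L : Set K)))
  have algebraMap_mem_fixedPoints {c : K} (hc : c ∈ L) :
      algebraMap K R c ∈ MulAction.fixedPoints L.fixingSubgroup R := fun g ↦
    (algebraMap.smul' g.1 c R).symm.trans (congrArg (algebraMap K R) (g.2 ⟨c, hc⟩))
  have algebraMap_σ_mem {c : K} (hc : c ∈ L) : algebraMap K R (σ c) ∈ A :=
    Algebra.subset_adjoin <| .inl ⟨_, algebraMap_mem_fixedPoints hc,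
      (algebraMap.smul' σ c R).symm⟩
  have sup_le_comap : (L.map τ.toAlgHom).toSubalgebra ⊔ (L.map σ.toAlgHom).toSubalgebra ≤
      A.comap (IsScalarTower.toAlgHom k K R) := by
    refine sup_le ?_ ?_
    · rintro _ ⟨c, hc, rfl⟩
      exact Algebra.subset_adjoin (.inr ⟨_, ⟨c, hc, rfl⟩, rfl⟩)
    · rintro _ ⟨c, hc, rfl⟩
      exact algebraMap_σ_mem hc
  rw [Algebra.adjoin_le_iff]
  rintro _ (⟨r, hr, rfl⟩ | ⟨_, ⟨c, hc, rfl⟩, rfl⟩)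
  · refine Submodule.span_induction (p := fun x _ ↦ x ∈ A) ?_ (zero_mem A)
      (fun _ _ _ _ ↦ add_mem) ?_ (htr.smul_mem_span_smul_fixedPoints hL hspan σ τ hr)
    · exact fun x hx ↦ Algebra.subset_adjoin (.inl hx)
    · intro c x _ hx
      rw [Subalgebra.smul_def, Algebra.smul_def]
      exact mul_mem (sup_le_comap c.2) hx
  · exact algebraMap_σ_mem hc

end SemilinearRing

theorem composite_rings_of_conjugate_invariants_eq_general
    {k K R : Type*} [Field k] [CharZero k] [IsAlgClosed k] [Field K] [IsAlgClosed K] [Algebra k K]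
    (htr : HasInfiniteTrdeg k K)
    [Ring R] [Algebra K R] [Algebra k R] [IsScalarTower k K R]
    (φ : (K ≃ₐ[k] K) →* (R ≃+* R))
    (hsemi : ∀ (σ : K ≃ₐ[k] K) (c : K) (r : R),
      φ σ (algebraMap K R c * r) = algebraMap K R (σ c) * φ σ r)
    {L : IntermediateField k K} (hL : L.FG) {R₁ : Set R}
    (hR₁ : R₁ = {r : R | ∀ σ : K ≃ₐ[k] K, (∀ x ∈ L, σ x = x) → φ σ r = r})
    (hspan : Submodule.span K R₁ = ⊤) (σ τ : K ≃ₐ[k] K) :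
    Algebra.adjoin k ((φ τ) '' R₁ ∪ algebraMap K R '' (σ '' (L : Set K))) =
      Algebra.adjoin k ((φ σ) '' R₁ ∪ algebraMap K R '' (τ '' (L : Set K))) := by
  let : MulSemiringAction (K ≃ₐ[k] K) R := .compHom R φ
  have : SMulDistribClass (K ≃ₐ[k] K) K R := ⟨fun σ c r ↦ by
    rw [Algebra.smul_def, Algebra.smul_def]
    exact hsemi σ c r⟩
  obtain rfl : R₁ = MulAction.fixedPoints L.fixingSubgroup R :=
    hR₁.trans <| Set.ext fun r ↦ ⟨fun h g ↦ h g fun x hx ↦ g.2 ⟨x, hx⟩,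
      fun h g hg ↦ h ⟨g, fun x ↦ hg x x.2⟩⟩
  exact le_antisymm (htr.adjoin_smul_fixedPoints_le hL hspan σ τ)
    (htr.adjoin_smul_fixedPoints_le hL hspan τ σ)

/-- Equality of composite rings of conjugate invariants. -/
theorem composite_rings_of_conjugate_invariants_eq
    (k K : Type) [Field k] [CharZero k] [IsAlgClosed k] [Field K] [IsAlgClosed K] [Algebra k K]
    -- `K` has infinite transcendence degree over `k`
    (htr : ∀ L' : IntermediateField k K, L'.FG → ∃ x : K, Transcendental L' x)
    (R : Type) [CommRing R] [Algebra K R] [Algebra k R] [IsScalarTower k K R]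
    -- `R` is a finitely generated `K`-algebra
    (hfg : Algebra.FiniteType K R)
    -- a semilinear action of `Aut(K/k)` on `R`
    (φ : (K ≃ₐ[k] K) →* (R ≃+* R))
    (hsemi : ∀ (σ : K ≃ₐ[k] K) (c : K) (r : R),
      φ σ (algebraMap K R c * r) = algebraMap K R (σ c) * φ σ r)
    -- continuity of the action
    (hcont : ∀ r : R, ∃ L' : IntermediateField k K, L'.FG ∧
      ∀ σ : K ≃ₐ[k] K, (∀ x ∈ L', σ x = x) → φ σ r = r)
    -- a finitely generated intermediate field `L` whose pointwise stabilizer has its fixed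
    -- ring `R₁` spanning `R` over `K`
    (L : IntermediateField k K) (hL : L.FG)
    (R₁ : Set R)
    (hR₁ : R₁ = {r : R | ∀ σ : K ≃ₐ[k] K, (∀ x ∈ L, σ x = x) → φ σ r = r})
    (hspan : Submodule.span K R₁ = ⊤)
    (σ τ : K ≃ₐ[k] K)
    -- `σ(L)` and `τ(L)` are linearly disjoint over `k`: the multiplication map
    -- `σ(L) ⊗[k] τ(L) → K` is injective
    (hdisj : Function.Injective
      (Subalgebra.mulMap (L.map σ.toAlgHom).toSubalgebra (L.map τ.toAlgHom).toSubalgebra)) :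
    -- the composite rings `τ(R₁)·σ(L)` and `σ(R₁)·τ(L)` coincide
    Algebra.adjoin k ((φ τ) '' R₁ ∪ algebraMap K R '' (σ '' (L : Set K))) =
      Algebra.adjoin k ((φ σ) '' R₁ ∪ algebraMap K R '' (τ '' (L : Set K))) :=
  composite_rings_of_conjugate_invariants_eq_general htr φ hsemi hL hR₁ hspan σ τ
end
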